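/- arXiv:2402.15503 — 2 statements merged into one kernel-verified Lean document; each statement's English description precedes it below -/
import Mathlib

section
/- Let Ω ⊆ ℂ be a nonempty open connected set, z₀ a frontier point of Ω, and u : ℂ → ℂ holomorphic on Ω and nonconstant on Ω. Let W be an open neighborhood of z₀ and ũ : ℂ → ℂ a function that is C^∞ on W, agrees with u on W ∩ Ω, and satisfies ũ(z₀) = 0. If ũ vanishes to infinite order at z₀ in the L² sense, then for every open ball B = B(z₀,r) with B ⊆ W, the lower Lebesgue integral ∫_B |∂̄ũ(z)|²/|ũ(z)|² dv is infinite. -/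
/-!
The statement is a strong unique continuation property: if `f` is smooth, vanishes to infinite order
at `z₀` and `V = |∂̄f| / |f|` is square integrable near `z₀`, then `f = 0` near `z₀`
(`eq_zero_near`). Applied to `ut`, it shows that a finite integral forces `u = 0` on the part of `Ω`
close to the boundary point `z₀`, hence on `Ω` by the identity theorem, against nonconstancy.

For the unique continuation, put `N = |f|² + ε` and `φ = log N / 2 - M`, with `M` so large that
`φ ≤ 0`. One has `Δφ = 2ε (|∂f|² - |∂̄f|²) / N² + div A`, where the field `A` is bounded by `2 V`,
and `ε |∂̄f|² / N² ≤ V²` almost everywhere, because `∂̄f = 0` at almost every zero of `f`. Testing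
with `0 ≤ ψ ≤ 1` of class `C²` with compact support, and completing the square against `|∇ψ|²`, gives
`∫ (φ - ψ) Δψ ≥ -3 ∫ V²` (`key_ineq`), a bound independent of `ε`.

Suppose `f z₁ ≠ 0` with `z₁` close to `z₀`. The test function is `ψ = (g⁺)³`, where
`g = exp (-α |z - z₁|²) - c + a (log (|z - z₀|² + δ²) / 2 - |z - z₀|²)` and `a = κ / log (1/δ)`.
Its Laplacian is bounded below, nonnegative outside a disc about `z₁` on which `f` has no zero,
and at least a constant times `a / δ²` on the disc of radius `δ` about `z₀`. Since `φ - ψ ≤ 0`, the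
integral of `(φ - ψ) Δψ` is at most a constant plus a multiple of `a δ⁻² ∫ φ` over that small disc.
Vanishing to infinite order makes the mean of `φ` there at most `m log δ + O(1)` for each `m`, once
`δ` is small and `ε = δ ^ (2 * m)`, so the last term is at most `-C m + O(1)` with `C > 0` independent of
`m` and `δ` (`main_estimate`). For large `m` this contradicts the lower bound.
-/

open MeasureTheory

/-- The Wirtinger derivative `∂̄u(z) = (D(1) + i·D(i))/2`, where `D = fderiv ℝ u z`. -/
noncomputable def wirtingerDBar (f : ℂ → ℂ) (z : ℂ) : ℂ :=
  (fderiv ℝ f z 1 + Complex.I * fderiv ℝ f z Complex.I) / 2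

/-- `f` vanishes to infinite order at `z₀` in the `L²` sense. -/
def VanishesInfiniteOrder (f : ℂ → ℂ) (z₀ : ℂ) : Prop :=
  ∀ m : ℝ, 0 ≤ m →
    Filter.Tendsto (fun r : ℝ => r ^ (-m) * ∫ z in Metric.ball z₀ r, ‖f z‖ ^ 2)
      (nhdsWithin 0 (Set.Ioi 0)) (nhds 0)


/-! ### Directional derivatives and the divergence identity -/

/-- The directional derivative `z ↦ Dg(z)(v)` of a real function on the plane. -/
noncomputable def dd (v : ℂ) (g : ℂ → ℝ) (z : ℂ) : ℝ := fderiv ℝ g z v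

lemma dd_hasDerivAt {g : ℂ → ℝ} {z : ℂ} (v : ℂ) (hg : DifferentiableAt ℝ g z) :
    HasDerivAt (fun t : ℝ => g (z + t • v)) (dd v g z) 0 :=
  hg.hasFDerivAt.hasLineDerivAt v

lemma dd_eq {g : ℂ → ℝ} {z v : ℂ} {c : ℝ} (hg : DifferentiableAt ℝ g z)
    (h : HasDerivAt (fun t : ℝ => g (z + t • v)) c 0) : dd v g z = c :=
  (dd_hasDerivAt v hg).unique h

lemma contDiff_dd {g : ℂ → ℝ} (hg : ContDiff ℝ 2 g) (v : ℂ) : ContDiff ℝ 1 (dd v g) :=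
  (hg.fderiv_right (m := 1) (by norm_num)).clm_apply contDiff_const

lemma dd_symm {g : ℂ → ℝ} (hg : ContDiff ℝ 2 g) (v w z : ℂ) :
    dd v (dd w g) z = dd w (dd v g) z := by
  have h : ∀ a b : ℂ, dd a (dd b g) z = fderiv ℝ (fderiv ℝ g) z a b := by
    intro a b
    have hd : DifferentiableAt ℝ (fderiv ℝ g) z :=
      ((hg.fderiv_right (m := 1) (by norm_num)).differentiable (by norm_num)) z
    have : HasFDerivAt (dd b g) ((fderiv ℝ (fderiv ℝ g) z).flip b) z := by
      refine (hd.hasFDerivAt.clm_apply (hasFDerivAt_const b z)).congr_fderiv ?_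
      ext; simp
    unfold dd at *
    rw [this.fderiv]; rfl
  rw [h, h]
  exact (hg.contDiffAt.isSymmSndFDerivAt (by simp)) v w

lemma integrable_dd {g : ℂ → ℝ} (hg : ContDiff ℝ 1 g) (hc : HasCompactSupport g) (v : ℂ) :
    Integrable (dd v g) := by
  apply Continuous.integrable_of_hasCompactSupport
  · exact (hg.continuous_fderiv (by norm_num)).clm_apply continuous_const
  · exact hc.fderiv_apply ℝ v

lemma integral_dd {g : ℂ → ℝ} (hg : ContDiff ℝ 1 g) (hc : HasCompactSupport g) (v : ℂ) :
    ∫ z, dd v g z = 0 := by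
  have := integral_mul_fderiv_eq_neg_fderiv_mul_of_integrable (μ := (volume : Measure ℂ))
    (f := fun _ : ℂ => (1 : ℝ)) (g := g) (v := v) (by simp)
    (by simp only [one_mul]; exact integrable_dd hg hc v)
    (by simpa using hg.continuous.integrable_of_hasCompactSupport hc)
    (fun x _ => by fun_prop) (fun x _ => (hg.differentiable (by norm_num)) x)
  simpa [dd] using this

/-- The first component of the field whose divergence is computed in `div_field`. -/
noncomputable def field1 (p q ψ : ℂ → ℝ) (ε M : ℝ) (z : ℂ) : ℝ :=
  (Real.log (p z ^ 2 + q z ^ 2 + ε) / 2 - M - ψ z) * dd 1 ψ z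
    - ψ z * ((p z * dd Complex.I q z - q z * dd Complex.I p z) / (p z ^ 2 + q z ^ 2 + ε))

/-- The second component of the field whose divergence is computed in `div_field`. -/
noncomputable def field2 (p q ψ : ℂ → ℝ) (ε M : ℝ) (z : ℂ) : ℝ :=
  (Real.log (p z ^ 2 + q z ^ 2 + ε) / 2 - M - ψ z) * dd Complex.I ψ z
    + ψ z * ((p z * dd 1 q z - q z * dd 1 p z) / (p z ^ 2 + q z ^ 2 + ε))

section
variable {p q ψ : ℂ → ℝ} {ε : ℝ}

lemma contDiff_field1 (hp : ContDiff ℝ 2 p) (hq : ContDiff ℝ 2 q) (hψ : ContDiff ℝ 2 ψ)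
    (hε : 0 < ε) (M : ℝ) : ContDiff ℝ 1 (field1 p q ψ ε M) := by
  have h1 := contDiff_dd hψ 1
  have h2 := contDiff_dd hq Complex.I
  have h3 := contDiff_dd hp Complex.I
  have hp' : ContDiff ℝ 1 p := hp.of_le (by norm_num)
  have hq' : ContDiff ℝ 1 q := hq.of_le (by norm_num)
  have hψ' : ContDiff ℝ 1 ψ := hψ.of_le (by norm_num)
  have hN : ∀ z, p z ^ 2 + q z ^ 2 + ε ≠ 0 := fun z => by positivity
  have hNc : ContDiff ℝ 1 (fun z => p z ^ 2 + q z ^ 2 + ε) := by fun_prop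
  exact ((((hNc.log hN).div_const 2).sub contDiff_const).sub hψ').mul h1 |>.sub
    (hψ'.mul (((hp'.mul h2).sub (hq'.mul h3)).div hNc hN))

lemma contDiff_field2 (hp : ContDiff ℝ 2 p) (hq : ContDiff ℝ 2 q) (hψ : ContDiff ℝ 2 ψ)
    (hε : 0 < ε) (M : ℝ) : ContDiff ℝ 1 (field2 p q ψ ε M) := by
  have h1 := contDiff_dd hψ Complex.I
  have h2 := contDiff_dd hq 1
  have h3 := contDiff_dd hp 1
  have hp' : ContDiff ℝ 1 p := hp.of_le (by norm_num)
  have hq' : ContDiff ℝ 1 q := hq.of_le (by norm_num)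
  have hψ' : ContDiff ℝ 1 ψ := hψ.of_le (by norm_num)
  have hN : ∀ z, p z ^ 2 + q z ^ 2 + ε ≠ 0 := fun z => by positivity
  have hNc : ContDiff ℝ 1 (fun z => p z ^ 2 + q z ^ 2 + ε) := by fun_prop
  exact ((((hNc.log hN).div_const 2).sub contDiff_const).sub hψ').mul h1 |>.add
    (hψ'.mul (((hp'.mul h2).sub (hq'.mul h3)).div hNc hN))

lemma hasCompactSupport_dd (hc : HasCompactSupport ψ) (v : ℂ) : HasCompactSupport (dd v ψ) :=
  hc.fderiv_apply ℝ v

lemma compact_field1 (hc : HasCompactSupport ψ) (M : ℝ) :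
    HasCompactSupport (field1 p q ψ ε M) := by
  have h1 : HasCompactSupport (fun z => (Real.log (p z ^ 2 + q z ^ 2 + ε) / 2 - M - ψ z) * dd 1 ψ z) :=
    (hasCompactSupport_dd hc 1).mul_left
  have h2 : HasCompactSupport (fun z => ψ z *
      ((p z * dd Complex.I q z - q z * dd Complex.I p z) / (p z ^ 2 + q z ^ 2 + ε))) :=
    hc.mul_right
  exact h1.sub h2

lemma compact_field2 (hc : HasCompactSupport ψ) (M : ℝ) :
    HasCompactSupport (field2 p q ψ ε M) := by
  have h1 : HasCompactSupport (fun z => (Real.log (p z ^ 2 + q z ^ 2 + ε) / 2 - M - ψ z)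
      * dd Complex.I ψ z) :=
    (hasCompactSupport_dd hc _).mul_left
  have h2 : HasCompactSupport (fun z => ψ z *
      ((p z * dd 1 q z - q z * dd 1 p z) / (p z ^ 2 + q z ^ 2 + ε))) :=
    hc.mul_right
  exact h1.add h2

/-- For `f = p + iq`, `N = |f|² + ε` and `φ = log N / 2 - M`, this expresses `(φ - ψ) Δψ` as a
divergence plus first-order terms. By the Cauchy-Riemann operator, `∇φ` is the rotated current
`(p∇q - q∇p) / N` plus `2 f̄ ∂̄f / N`, and the curl of that current is `2ε Jac f / N²`. -/
lemma div_field (hp : ContDiff ℝ 2 p) (hq : ContDiff ℝ 2 q) (hψ : ContDiff ℝ 2 ψ)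
    (hε : 0 < ε) (M : ℝ) (z : ℂ) :
    dd 1 (field1 p q ψ ε M) z + dd Complex.I (field2 p q ψ ε M) z =
      (Real.log (p z ^ 2 + q z ^ 2 + ε) / 2 - M - ψ z)
          * (dd 1 (dd 1 ψ) z + dd Complex.I (dd Complex.I ψ) z)
        + (p z * (dd 1 p z - dd Complex.I q z) + q z * (dd 1 q z + dd Complex.I p z))
            / (p z ^ 2 + q z ^ 2 + ε) * dd 1 ψ z
        + (p z * (dd 1 q z + dd Complex.I p z) - q z * (dd 1 p z - dd Complex.I q z))
            / (p z ^ 2 + q z ^ 2 + ε) * dd Complex.I ψ z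
        - (dd 1 ψ z ^ 2 + dd Complex.I ψ z ^ 2)
        - ψ z * (2 * ε * (dd 1 p z * dd Complex.I q z - dd Complex.I p z * dd 1 q z)
            / (p z ^ 2 + q z ^ 2 + ε) ^ 2) := by
  have hN : p z ^ 2 + q z ^ 2 + ε ≠ 0 := by positivity
  have d2 : ∀ {g : ℂ → ℝ}, ContDiff ℝ 2 g → DifferentiableAt ℝ g z := fun hg =>
    (hg.differentiable (by norm_num)) z
  have d1 : ∀ {g : ℂ → ℝ}, ContDiff ℝ 1 g → DifferentiableAt ℝ g z := fun hg =>
    (hg.differentiable (by norm_num)) z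
  have key : ∀ v w : ℂ, ∀ s : ℝ,
      HasDerivAt (fun t : ℝ => (fun z => (Real.log (p z ^ 2 + q z ^ 2 + ε) / 2 - M - ψ z) * dd v ψ z
        + s * (ψ z * ((p z * dd w q z - q z * dd w p z) / (p z ^ 2 + q z ^ 2 + ε)))) (z + t • v))
      (((p z * dd v p z + q z * dd v q z) / (p z ^ 2 + q z ^ 2 + ε) - dd v ψ z) * dd v ψ z
        + (Real.log (p z ^ 2 + q z ^ 2 + ε) / 2 - M - ψ z) * dd v (dd v ψ) z
        + s * (dd v ψ z * ((p z * dd w q z - q z * dd w p z) / (p z ^ 2 + q z ^ 2 + ε))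
          + ψ z * ((dd v p z * dd w q z + p z * dd v (dd w q) z - dd v q z * dd w p z
              - q z * dd v (dd w p) z) / (p z ^ 2 + q z ^ 2 + ε)
            - (p z * dd w q z - q z * dd w p z) * (2 * p z * dd v p z + 2 * q z * dd v q z)
              / (p z ^ 2 + q z ^ 2 + ε) ^ 2))) 0 := by
    intro v w s
    have e0 : z + (0 : ℝ) • v = z := by simp
    have Hp := dd_hasDerivAt v (d2 hp)
    have Hq := dd_hasDerivAt v (d2 hq)
    have Hψ := dd_hasDerivAt v (d2 hψ)
    have Hψv := dd_hasDerivAt v (d1 (contDiff_dd hψ v))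
    have Hqw := dd_hasDerivAt v (d1 (contDiff_dd hq w))
    have Hpw := dd_hasDerivAt v (d1 (contDiff_dd hp w))
    have HN := ((Hp.pow 2).add (Hq.pow 2)).add_const ε
    have HN0 : ((fun t : ℝ => p (z + t • v)) ^ 2 + (fun t : ℝ => q (z + t • v)) ^ 2) 0 + ε ≠ 0 := by
      simpa using hN
    have HL := ((((HN.log HN0).div_const 2).sub_const M).sub Hψ).mul Hψv
    have HJ := (Hψ.mul (((Hp.mul Hqw).sub (Hq.mul Hpw)).div HN HN0)).const_mul s
    refine ((HL.add HJ).congr_deriv ?_).congr_of_eventuallyEq ?_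
    · simp only [Pi.add_apply, Pi.pow_apply, Pi.mul_apply, Pi.sub_apply, Pi.div_apply, e0]
      field_simp
      ring
    · exact Filter.Eventually.of_forall fun t => by simp
  have E1 : dd 1 (field1 p q ψ ε M) z = _ := dd_eq (d1 (contDiff_field1 hp hq hψ hε M))
    ((key 1 Complex.I (-1)).congr_of_eventuallyEq (Filter.Eventually.of_forall fun t => by
      simp only [field1]; ring))
  have E2 : dd Complex.I (field2 p q ψ ε M) z = _ := dd_eq (d1 (contDiff_field2 hp hq hψ hε M))
    ((key Complex.I 1 1).congr_of_eventuallyEq (Filter.Eventually.of_forall fun t => by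
      simp only [field2]; ring))
  rw [E1, E2, dd_symm hp Complex.I 1, dd_symm hq Complex.I 1]
  field_simp
  ring
end

/-! ### The test inequality -/

/-- At almost every zero of `f` (a density point of the zero set) the whole derivative vanishes, so
the convention `a / 0 = 0` in `|∂̄f|² / |f|²` loses nothing. -/
lemma ae_dbar_eq_zero {f : ℂ → ℂ} (hf : ContDiff ℝ 2 f) :
    ∀ᵐ z : ℂ, f z = 0 → wirtingerDBar f z = 0 := by
  have hs : MeasurableSet {z | f z = 0} :=
    (isClosed_singleton.preimage hf.continuous).measurableSet
  have happ : ApproximatesLinearOn f (0 : ℂ →L[ℝ] ℂ) {z | f z = 0} 0 := by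
    intro x hx y hy
    have hx' : f x = 0 := hx
    have hy' : f y = 0 := hy
    simp [hx', hy']
  have := happ.norm_fderiv_sub_le volume hs (fderiv ℝ f)
    (fun x _ => ((hf.differentiable (by norm_num)) x).hasFDerivAt.hasFDerivWithinAt)
  rw [ae_restrict_iff' hs] at this
  filter_upwards [this] with z hz h0
  have h := hz h0
  simp only [sub_zero, nonpos_iff_eq_zero, nnnorm_eq_zero] at h
  simp [wirtingerDBar, h]

lemma continuous_dbar {f : ℂ → ℂ} (hf : ContDiff ℝ 2 f) : Continuous (wirtingerDBar f) := by
  have h := hf.continuous_fderiv (by norm_num)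
  unfold wirtingerDBar
  fun_prop

lemma normSq_dbar {f : ℂ → ℂ} (hf : ContDiff ℝ 2 f) (z : ℂ) :
    ‖wirtingerDBar f z‖ ^ 2 =
      ((dd 1 (fun z => (f z).re) z - dd Complex.I (fun z => (f z).im) z) ^ 2
        + (dd 1 (fun z => (f z).im) z + dd Complex.I (fun z => (f z).re) z) ^ 2) / 4 := by
  have hd := ((hf.differentiable (by norm_num)) z).hasFDerivAt
  have hre : ∀ v, dd v (fun z => (f z).re) z = (fderiv ℝ f z v).re := by
    intro v
    have := (Complex.reCLM.hasFDerivAt (x := f z)).comp z hd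
    have h2 : fderiv ℝ (fun z => (f z).re) z = Complex.reCLM.comp (fderiv ℝ f z) := this.fderiv
    simp [dd, h2]
  have him : ∀ v, dd v (fun z => (f z).im) z = (fderiv ℝ f z v).im := by
    intro v
    have := (Complex.imCLM.hasFDerivAt (x := f z)).comp z hd
    have h2 : fderiv ℝ (fun z => (f z).im) z = Complex.imCLM.comp (fderiv ℝ f z) := this.fderiv
    simp [dd, h2]
  rw [hre, hre, him, him, ← Complex.normSq_eq_norm_sq, Complex.normSq_apply]
  simp [wirtingerDBar]
  ring

/-- With `f = p + iq`, `∇p = (a, b)`, `∇q = (c, d)`, `∇ψ = (s, t)` and `ψ = w` at a point, the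
first-order terms of `div_field` are bounded through `|∂̄f|² / |f|²` alone: the cross term is
completed to a square with `|∇ψ|²`, and the Jacobian is at least `-|∂̄f|²`. -/
lemma pointwise_bound {p q a b c d s t w ε : ℝ} (hε : 0 < ε) (hw0 : 0 ≤ w) (hw1 : w ≤ 1)
    (hz : p ^ 2 + q ^ 2 = 0 → ((a - d) ^ 2 + (c + b) ^ 2) / 4 = 0) :
    -3 * (((a - d) ^ 2 + (c + b) ^ 2) / 4 / (p ^ 2 + q ^ 2)) ≤
      -((p * (a - d) + q * (c + b)) / (p ^ 2 + q ^ 2 + ε) * s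
        + (p * (c + b) - q * (a - d)) / (p ^ 2 + q ^ 2 + ε) * t
        - (s ^ 2 + t ^ 2) - w * (2 * ε * (a * d - b * c) / (p ^ 2 + q ^ 2 + ε) ^ 2)) := by
  set F := ((a - d) ^ 2 + (c + b) ^ 2) / 4 with hF
  set n := p ^ 2 + q ^ 2 with hn
  have hF0 : 0 ≤ F := by positivity
  have hn0 : 0 ≤ n := by positivity
  have hN : 0 < n + ε := by positivity
  -- the Jacobian equals `|∂f|² - |∂̄f|²`
  have hJ : -F ≤ a * d - b * c := by
    rw [hF]; nlinarith [sq_nonneg (a + d), sq_nonneg (c - b)]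
  have hV : ∀ k : ℝ, 0 ≤ k → k * n ≤ (n + ε) ^ 2 → F * k / (n + ε) ^ 2 ≤ F / n := by
    intro k hk hkn
    rcases hn0.eq_or_lt with h | h
    · rw [hz h.symm]; simp
    · rw [div_le_div_iff₀ (by positivity) h]; nlinarith
  have h1 : w * (2 * ε * (a * d - b * c) / (n + ε) ^ 2) ≥ -2 * (F / n) := by
    have h := hV ε hε.le (by nlinarith)
    have hG : 0 ≤ F * ε / (n + ε) ^ 2 := by positivity
    have : 2 * ε * (a * d - b * c) / (n + ε) ^ 2 ≥ -2 * (F * ε / (n + ε) ^ 2) := by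
      have : -2 * (F * ε / (n + ε) ^ 2) = (2 * ε * (-F)) / (n + ε) ^ 2 := by ring
      rw [this]
      gcongr
    nlinarith
  have h2 := hV n hn0 (by nlinarith)
  set X := (p * (a - d) + q * (c + b)) / (n + ε) with hX
  set Y := (p * (c + b) - q * (a - d)) / (n + ε) with hY
  have h3 : X ^ 2 + Y ^ 2 = 4 * (F * n / (n + ε) ^ 2) := by
    rw [hX, hY, hF]
    field_simp
    rw [hn]; ring
  nlinarith [sq_nonneg (2 * s - X), sq_nonneg (2 * t - Y)]

lemma log_continuous {f : ℂ → ℂ} (hf : Continuous f) {ε : ℝ} (hε : 0 < ε) :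
    Continuous (fun z => Real.log (‖f z‖ ^ 2 + ε)) :=
  Continuous.log (by fun_prop) (fun z => by positivity)

lemma continuous_lap {ψ : ℂ → ℝ} (hψ : ContDiff ℝ 2 ψ) :
    Continuous (fun z => dd 1 (dd 1 ψ) z + dd Complex.I (dd Complex.I ψ) z) := by
  have h : ∀ v, Continuous (dd v (dd v ψ)) := fun v =>
    ((contDiff_dd hψ v).continuous_fderiv (by norm_num)).clm_apply continuous_const
  exact (h _).add (h _)

lemma compact_lap {ψ : ℂ → ℝ} (hc : HasCompactSupport ψ) :
    HasCompactSupport (fun z => dd 1 (dd 1 ψ) z + dd Complex.I (dd Complex.I ψ) z) :=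
  (hasCompactSupport_dd (hasCompactSupport_dd hc _) _).add
    (hasCompactSupport_dd (hasCompactSupport_dd hc _) _)

lemma integrable_main {f : ℂ → ℂ} (hf : ContDiff ℝ 2 f) {ψ : ℂ → ℝ} (hψ : ContDiff ℝ 2 ψ)
    (hc : HasCompactSupport ψ) {ε : ℝ} (hε : 0 < ε) (M : ℝ) :
    Integrable (fun z => (Real.log (‖f z‖ ^ 2 + ε) / 2 - M - ψ z)
      * (dd 1 (dd 1 ψ) z + dd Complex.I (dd Complex.I ψ) z)) := by
  apply Continuous.integrable_of_hasCompactSupport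
  · exact ((((log_continuous hf.continuous hε).div_const 2).sub continuous_const).sub
      hψ.continuous).mul (continuous_lap hψ)
  · exact (compact_lap hc).mul_left

/-- The weak form of the statement that `log |f|` is subharmonic up to the divergence of an `L²`
field, with a bound that does not depend on `ε`. -/
lemma key_ineq {f : ℂ → ℂ} (hf : ContDiff ℝ 2 f) {ψ : ℂ → ℝ} (hψ : ContDiff ℝ 2 ψ)
    (hc : HasCompactSupport ψ) (h0 : ∀ z, 0 ≤ ψ z) (h1 : ∀ z, ψ z ≤ 1) {z₀ : ℂ} {ρ : ℝ}
    (hout : ∀ z, z ∉ Metric.ball z₀ ρ → ψ z = 0)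
    (hV : IntegrableOn (fun z => ‖wirtingerDBar f z‖ ^ 2 / ‖f z‖ ^ 2) (Metric.ball z₀ ρ))
    {ε : ℝ} (hε : 0 < ε) (M : ℝ) :
    -3 * ∫ z in Metric.ball z₀ ρ, ‖wirtingerDBar f z‖ ^ 2 / ‖f z‖ ^ 2 ≤
      ∫ z, (Real.log (‖f z‖ ^ 2 + ε) / 2 - M - ψ z)
        * (dd 1 (dd 1 ψ) z + dd Complex.I (dd Complex.I ψ) z) := by
  set p : ℂ → ℝ := fun z => (f z).re with hpdef
  set q : ℂ → ℝ := fun z => (f z).im with hqdef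
  have hp : ContDiff ℝ 2 p := Complex.reCLM.contDiff.comp hf
  have hq : ContDiff ℝ 2 q := Complex.imCLM.contDiff.comp hf
  have hnorm : ∀ z, ‖f z‖ ^ 2 = p z ^ 2 + q z ^ 2 := fun z => by
    rw [← Complex.normSq_eq_norm_sq, Complex.normSq_apply]; ring
  have i1 := integrable_dd (contDiff_field1 hp hq hψ hε M) (compact_field1 hc M) 1
  have i2 := integrable_dd (contDiff_field2 hp hq hψ hε M) (compact_field2 hc M) Complex.I
  have hdiv : ∫ z, (dd 1 (field1 p q ψ ε M) z + dd Complex.I (field2 p q ψ ε M) z) = 0 := by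
    rw [integral_add i1 i2, integral_dd (contDiff_field1 hp hq hψ hε M) (compact_field1 hc M),
      integral_dd (contDiff_field2 hp hq hψ hε M) (compact_field2 hc M), add_zero]
  rw [← integral_indicator Metric.isOpen_ball.measurableSet, ← integral_const_mul,
    ← add_zero (∫ z, -3 * _), ← hdiv, ← integral_add]
  rotate_left
  · exact (hV.integrable_indicator Metric.isOpen_ball.measurableSet).const_mul _
  · exact i1.add i2
  apply integral_mono_ae
  · exact ((hV.integrable_indicator Metric.isOpen_ball.measurableSet).const_mul _).add (i1.add i2)
  · exact integrable_main hf hψ hc hε M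
  filter_upwards [ae_dbar_eq_zero hf] with z hz
  rw [div_field hp hq hψ hε M z, hnorm]
  by_cases hzb : z ∈ Metric.ball z₀ ρ
  · rw [Set.indicator_of_mem hzb, normSq_dbar hf, hnorm]
    have hz' : p z ^ 2 + q z ^ 2 = 0 → ((dd 1 p z - dd Complex.I q z) ^ 2
        + (dd 1 q z + dd Complex.I p z) ^ 2) / 4 = 0 := by
      intro h
      rw [← normSq_dbar hf, hz (by rw [← hnorm] at h; simpa using h)]
      simp
    have := pointwise_bound (s := dd 1 ψ z) (t := dd Complex.I ψ z) hε (h0 z) (h1 z) hz'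
    linarith
  · rw [Set.indicator_of_notMem hzb]
    have hψz := hout z hzb
    have hmin : IsLocalMin ψ z := Filter.Eventually.of_forall fun y => by rw [hψz]; exact h0 y
    have hd : ∀ v, dd v ψ z = 0 := fun v => by simp [dd, hmin.fderiv_eq_zero]
    simp [hψz, hd]

/-! ### Laplacians of the barrier and of its truncation -/

/-- The Laplacian of a real function on the plane. -/
noncomputable def lap (g : ℂ → ℝ) (z : ℂ) : ℝ :=
  dd 1 (dd 1 g) z + dd Complex.I (dd Complex.I g) z

lemma lap_add {g h : ℂ → ℝ} (hg : ContDiff ℝ 2 g) (hh : ContDiff ℝ 2 h) (z : ℂ) :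
    lap (fun z => g z + h z) z = lap g z + lap h z := by
  have e1 : ∀ v, dd v (fun z => g z + h z) = fun z => dd v g z + dd v h z := by
    intro v; ext z
    exact dd_eq ((hg.add hh).differentiable (by norm_num) z)
      ((dd_hasDerivAt v (hg.differentiable (by norm_num) z)).add
        (dd_hasDerivAt v (hh.differentiable (by norm_num) z)))
  have e2 : ∀ v, dd v (dd v (fun z => g z + h z)) z = dd v (dd v g) z + dd v (dd v h) z := by
    intro v
    rw [e1]
    exact dd_eq (((contDiff_dd hg v).add (contDiff_dd hh v)).differentiable (by norm_num) z)
      ((dd_hasDerivAt v ((contDiff_dd hg v).differentiable (by norm_num) z)).add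
        (dd_hasDerivAt v ((contDiff_dd hh v).differentiable (by norm_num) z)))
  simp only [lap, e2]; ring

lemma lap_radial {h h' h'' : ℝ → ℝ} (w : ℂ) (hh : ∀ t, 0 ≤ t → HasDerivAt h (h' t) t)
    (hh' : ∀ t, 0 ≤ t → HasDerivAt h' (h'' t) t)
    (hC : ContDiff ℝ 2 (fun z => h (Complex.normSq (z - w)))) (z : ℂ) :
    lap (fun z => h (Complex.normSq (z - w))) z =
      4 * Complex.normSq (z - w) * h'' (Complex.normSq (z - w))
        + 4 * h' (Complex.normSq (z - w)) := by
  have hr : ∀ z v : ℂ, HasDerivAt (fun t : ℝ => Complex.normSq (z + t • v - w))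
      (2 * ((z - w).re * v.re + (z - w).im * v.im)) 0 := by
    intro z v
    have a1 : HasDerivAt (fun t : ℝ => (z - w).re + t * v.re) v.re 0 := by
      simpa using ((hasDerivAt_id (0 : ℝ)).mul_const v.re).const_add (z - w).re
    have a2 : HasDerivAt (fun t : ℝ => (z - w).im + t * v.im) v.im 0 := by
      simpa using ((hasDerivAt_id (0 : ℝ)).mul_const v.im).const_add (z - w).im
    refine (((a1.mul a1).add (a2.mul a2)).congr_deriv ?_).congr_of_eventuallyEq
      (Filter.Eventually.of_forall fun t => ?_)
    · simp; ring
    · simp [Complex.normSq_apply]; ring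
  have e1 : ∀ v, dd v (fun z => h (Complex.normSq (z - w))) = fun z =>
      h' (Complex.normSq (z - w)) * (2 * ((z - w).re * v.re + (z - w).im * v.im)) := by
    intro v; ext z
    refine dd_eq (hC.differentiable (by norm_num) z) ?_
    exact HasDerivAt.comp (h₂ := h) (0 : ℝ)
      (by simpa using hh _ (Complex.normSq_nonneg (z - w))) (hr z v)
  have e2 : ∀ v, dd v (dd v (fun z => h (Complex.normSq (z - w)))) z =
      h'' (Complex.normSq (z - w)) * (2 * ((z - w).re * v.re + (z - w).im * v.im)) ^ 2
        + h' (Complex.normSq (z - w)) * (2 * (v.re ^ 2 + v.im ^ 2)) := by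
    intro v
    refine dd_eq ((contDiff_dd hC v).differentiable (by norm_num) z) ?_
    rw [e1]
    have a0 := HasDerivAt.comp (h₂ := h') (0 : ℝ)
      (by simpa using hh' _ (Complex.normSq_nonneg (z - w))) (hr z v)
    have a1 : HasDerivAt (fun t : ℝ => 2 * ((z + t • v - w).re * v.re + (z + t • v - w).im * v.im))
        (2 * (v.re ^ 2 + v.im ^ 2)) 0 := by
      have b : HasDerivAt (fun t : ℝ => 2 * ((z - w).re * v.re + (z - w).im * v.im)
          + t * (2 * (v.re ^ 2 + v.im ^ 2))) (2 * (v.re ^ 2 + v.im ^ 2)) 0 := by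
        simpa using ((hasDerivAt_id (0 : ℝ)).mul_const (2 * (v.re ^ 2 + v.im ^ 2))).const_add
          (2 * ((z - w).re * v.re + (z - w).im * v.im))
      refine b.congr_of_eventuallyEq (Filter.Eventually.of_forall fun t => ?_)
      simp; ring
    refine (a0.mul a1).congr_deriv ?_
    simp; ring
  rw [lap, e2, e2, Complex.normSq_apply]
  simp; ring

/-- The convex `C²` function `t ↦ (t⁺)³`, used to truncate the barrier. -/
noncomputable def cut (t : ℝ) : ℝ := max t 0 ^ 3

lemma hasDerivAt_maxpow (n : ℕ) (t : ℝ) :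
    HasDerivAt (fun t : ℝ => max t 0 ^ (n + 2)) ((n + 2) * max t 0 ^ (n + 1)) t := by
  rcases lt_trichotomy t 0 with ht | ht | ht
  · refine ((hasDerivAt_const t (0 : ℝ)).congr_deriv ?_).congr_of_eventuallyEq ?_
    · simp [max_eq_right ht.le]
    · filter_upwards [Iio_mem_nhds ht] with s hs
      simp [max_eq_right (le_of_lt (Set.mem_Iio.mp hs))]
  · subst ht
    rw [hasDerivAt_iff_isLittleO_nhds_zero]
    simp only [zero_add, max_self, ne_eq, Nat.add_eq_zero_iff, one_ne_zero, and_false,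
      not_false_eq_true, zero_pow, sub_zero, mul_zero, smul_zero, OfNat.ofNat_ne_zero]
    refine Asymptotics.IsBigO.trans_isLittleO (g := fun h : ℝ => h ^ (n + 2)) ?_ ?_
    · refine Asymptotics.IsBigO.of_bound 1 (Filter.Eventually.of_forall fun h => ?_)
      rw [one_mul, norm_pow, norm_pow]
      gcongr
      rw [Real.norm_eq_abs, Real.norm_eq_abs, abs_of_nonneg (le_max_right h 0)]
      exact max_le (le_abs_self h) (abs_nonneg h)
    · have := Asymptotics.isLittleO_pow_id (𝕜 := ℝ) (n := n + 2) (by omega)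
      simpa using this
  · have h := (hasDerivAt_pow (n + 2) t)
    refine (h.congr_deriv ?_).congr_of_eventuallyEq ?_
    · simp [max_eq_left ht.le]
    · filter_upwards [Ioi_mem_nhds ht] with s hs
      simp [max_eq_left (le_of_lt (Set.mem_Ioi.mp hs))]

lemma hasDerivAt_cut (t : ℝ) : HasDerivAt cut (3 * max t 0 ^ 2) t := by
  refine (hasDerivAt_maxpow 1 t).congr_deriv ?_
  norm_num

lemma hasDerivAt_cut' (t : ℝ) :
    HasDerivAt (fun t : ℝ => 3 * max t 0 ^ 2) (6 * max t 0) t := by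
  refine ((hasDerivAt_maxpow 0 t).const_mul 3).congr_deriv ?_
  norm_num; ring

lemma contDiff_cut : ContDiff ℝ 2 cut := by
  have e : deriv cut = fun t => 3 * max t 0 ^ 2 := by
    ext t; exact (hasDerivAt_cut t).deriv
  have e' : deriv (fun t : ℝ => 3 * max t 0 ^ 2) = fun t => 6 * max t 0 := by
    ext t; exact (hasDerivAt_cut' t).deriv
  have h : ContDiff ℝ (1 + 1) cut := by
    rw [contDiff_succ_iff_deriv]
    refine ⟨fun t => (hasDerivAt_cut t).differentiableAt, by simp, ?_⟩
    rw [e, contDiff_one_iff_deriv, e']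
    exact ⟨fun t => (hasDerivAt_cut' t).differentiableAt, by fun_prop⟩
  have h2 : (2 : WithTop ℕ∞) = 1 + 1 := by norm_num
  rw [h2]; exact h

lemma lap_cut {g : ℂ → ℝ} (hg : ContDiff ℝ 2 g) (z : ℂ) :
    lap (fun z => cut (g z)) z = 3 * max (g z) 0 ^ 2 * lap g z
      + 6 * max (g z) 0 * (dd 1 g z ^ 2 + dd Complex.I g z ^ 2) := by
  have hC : ContDiff ℝ 2 (fun z => cut (g z)) := contDiff_cut.comp hg
  have e1 : ∀ v, dd v (fun z => cut (g z)) = fun z => 3 * max (g z) 0 ^ 2 * dd v g z := by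
    intro v; ext z
    refine dd_eq (hC.differentiable (by norm_num) z) ?_
    exact HasDerivAt.comp (h₂ := cut) (0 : ℝ)
      (by simpa using hasDerivAt_cut (g z)) (dd_hasDerivAt v (hg.differentiable (by norm_num) z))
  have e2 : ∀ v, dd v (dd v (fun z => cut (g z))) z =
      6 * max (g z) 0 * dd v g z ^ 2 + 3 * max (g z) 0 ^ 2 * dd v (dd v g) z := by
    intro v
    refine dd_eq ((contDiff_dd hC v).differentiable (by norm_num) z) ?_
    rw [e1]
    have a0 := HasDerivAt.comp (h₂ := fun t : ℝ => 3 * max t 0 ^ 2) (0 : ℝ)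
      (by simpa using hasDerivAt_cut' (g z)) (dd_hasDerivAt v (hg.differentiable (by norm_num) z))
    refine (a0.mul (dd_hasDerivAt v ((contDiff_dd hg v).differentiable (by norm_num) z))).congr_deriv ?_
    simp; ring
  rw [lap, e2, e2, lap]; ring

/-- The barrier: a Gaussian centred at `z₁`, plus `a` times a regularised logarithm with pole at
`z₀`. The term `-|z - z₀|²` keeps the second summand negative on the whole plane. -/
noncomputable def barrier (z₀ z₁ : ℂ) (α c a δ : ℝ) (z : ℂ) : ℝ :=
  (Real.exp (-α * Complex.normSq (z - z₁)) - c)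
    + a * (Real.log (Complex.normSq (z - z₀) + δ ^ 2) / 2 - Complex.normSq (z - z₀))

lemma contDiff_normSq_sub (w : ℂ) : ContDiff ℝ 2 (fun z => Complex.normSq (z - w)) := by
  have : (fun z => Complex.normSq (z - w)) = fun z => ‖z - w‖ ^ 2 := by
    ext z; rw [Complex.normSq_eq_norm_sq]
  rw [this]
  exact (contDiff_id.sub contDiff_const).norm_sq ℝ

section
variable {z₀ z₁ : ℂ} {α c a δ : ℝ}

lemma contDiff_gauss : ContDiff ℝ 2 (fun z => Real.exp (-α * Complex.normSq (z - z₁)) - c) :=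
  ((contDiff_const.mul (contDiff_normSq_sub z₁)).exp).sub contDiff_const

lemma contDiff_pole (hδ : 0 < δ) : ContDiff ℝ 2 (fun z =>
    a * (Real.log (Complex.normSq (z - z₀) + δ ^ 2) / 2 - Complex.normSq (z - z₀))) :=
  contDiff_const.mul (((((contDiff_normSq_sub z₀).add contDiff_const).log fun z => by
    have := Complex.normSq_nonneg (z - z₀); positivity).div_const 2).sub (contDiff_normSq_sub z₀))

lemma contDiff_barrier (hδ : 0 < δ) : ContDiff ℝ 2 (barrier z₀ z₁ α c a δ) :=
  contDiff_gauss.add (contDiff_pole hδ)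

lemma lap_barrier (hδ : 0 < δ) (z : ℂ) : lap (barrier z₀ z₁ α c a δ) z =
    (4 * α ^ 2 * Complex.normSq (z - z₁) - 4 * α) * Real.exp (-α * Complex.normSq (z - z₁))
      + a * (2 * δ ^ 2 / (Complex.normSq (z - z₀) + δ ^ 2) ^ 2 - 4) := by
  unfold barrier
  rw [lap_add contDiff_gauss (contDiff_pole hδ)]
  have d1 : ∀ t : ℝ, HasDerivAt (fun t => Real.exp (-α * t)) (-α * Real.exp (-α * t)) t := by
    intro t
    have := (((hasDerivAt_id t).const_mul (-α)).exp)
    refine this.congr_deriv ?_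
    simp; ring
  have l1 := lap_radial (h := fun t => Real.exp (-α * t) - c) (h' := fun t => -α * Real.exp (-α * t))
    (h'' := fun t => -α * (-α * Real.exp (-α * t))) z₁ (fun t _ => (d1 t).sub_const c)
    (fun t _ => (d1 t).const_mul (-α)) contDiff_gauss z
  have l2 := lap_radial (h := fun t => a * (Real.log (t + δ ^ 2) / 2 - t))
    (h' := fun t => a * ((t + δ ^ 2)⁻¹ / 2 - 1))
    (h'' := fun t => a * (-((t + δ ^ 2) ^ 2)⁻¹ / 2)) z₀
    (fun t ht => by
      have hne : t + δ ^ 2 ≠ 0 := by positivity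
      have := (((((hasDerivAt_id t).add_const (δ ^ 2)).log hne).div_const 2).sub
        (hasDerivAt_id t)).const_mul a
      refine this.congr_deriv ?_
      simp)
    (fun t ht => by
      have hne : t + δ ^ 2 ≠ 0 := by positivity
      have := (((((hasDerivAt_id t).add_const (δ ^ 2)).inv hne).div_const 2).sub_const
        1).const_mul a
      refine this.congr_deriv ?_
      simp; left; field_simp) (contDiff_pole hδ) z
  rw [l1, l2]
  have hne : Complex.normSq (z - z₀) + δ ^ 2 ≠ 0 := by
    have := Complex.normSq_nonneg (z - z₀); positivity
  field_simp
  ring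
end

/-! ### The truncated barrier as a test function -/

section
variable {z₀ z₁ z : ℂ} {α c a δ : ℝ}

lemma pole_nonpos (hδ1 : δ < 1) (hδ : 0 < δ) {t : ℝ} (ht : 0 ≤ t) :
    Real.log (t + δ ^ 2) / 2 - t ≤ 0 := by
  have := Real.log_le_sub_one_of_pos (show 0 < t + δ ^ 2 by positivity)
  nlinarith

lemma barrier_le_gauss (hδ : 0 < δ) (hδ1 : δ < 1) (ha : 0 ≤ a) :
    barrier z₀ z₁ α c a δ z ≤ Real.exp (-α * Complex.normSq (z - z₁)) - c := by
  have := mul_nonpos_of_nonneg_of_nonpos ha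
    (pole_nonpos hδ1 hδ (Complex.normSq_nonneg (z - z₀)))
  unfold barrier; linarith

lemma gauss_le_one (hα : 0 ≤ α) : Real.exp (-α * Complex.normSq (z - z₁)) ≤ 1 := by
  rw [Real.exp_le_one_iff]
  nlinarith [mul_nonneg hα (Complex.normSq_nonneg (z - z₁))]

lemma cut_nonneg (t : ℝ) : 0 ≤ cut t := pow_nonneg (le_max_right _ _) 3

lemma cut_le_one {t : ℝ} (ht : t ≤ 1) : cut t ≤ 1 :=
  pow_le_one₀ (le_max_right _ _) (max_le ht zero_le_one)

lemma cut_eq_zero {t : ℝ} (ht : t ≤ 0) : cut t = 0 := by simp [cut, max_eq_right ht]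

lemma lap_test_ge (hδ : 0 < δ) (hδ1 : δ < 1) (ha : 0 ≤ a) (ha1 : a ≤ 1) (hα : 0 ≤ α)
    (hc : 0 ≤ c) : -(12 * α + 12) ≤ lap (fun z => cut (barrier z₀ z₁ α c a δ z)) z := by
  rw [lap_cut (contDiff_barrier hδ), lap_barrier hδ]
  have hg : barrier z₀ z₁ α c a δ z ≤ 1 := by
    have := barrier_le_gauss (z₀ := z₀) (z₁ := z₁) (z := z) (α := α) (c := c) hδ hδ1 ha
    have := gauss_le_one (z₁ := z₁) (z := z) hα
    linarith
  have hg0 : 0 ≤ max (barrier z₀ z₁ α c a δ z) 0 := le_max_right _ _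
  have hg1 : max (barrier z₀ z₁ α c a δ z) 0 ≤ 1 := max_le hg zero_le_one
  set m := max (barrier z₀ z₁ α c a δ z) 0
  have he := gauss_le_one (z₁ := z₁) (z := z) hα
  have he0 := Real.exp_pos (-α * Complex.normSq (z - z₁))
  set e := Real.exp (-α * Complex.normSq (z - z₁))
  have hn := Complex.normSq_nonneg (z - z₁)
  have h1 : (4 * α ^ 2 * Complex.normSq (z - z₁) - 4 * α) * e ≥ -(4 * α) := by
    have : 0 ≤ 4 * α ^ 2 * Complex.normSq (z - z₁) * e := by positivity
    nlinarith
  have h2 : a * (2 * δ ^ 2 / (Complex.normSq (z - z₀) + δ ^ 2) ^ 2 - 4) ≥ -4 := by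
    have : 0 ≤ a * (2 * δ ^ 2 / (Complex.normSq (z - z₀) + δ ^ 2) ^ 2) := by positivity
    nlinarith
  have h3 : m ^ 2 ≤ 1 := pow_le_one₀ hg0 hg1
  have h4 : 0 ≤ 6 * m * (dd 1 (barrier z₀ z₁ α c a δ) z ^ 2
      + dd Complex.I (barrier z₀ z₁ α c a δ) z ^ 2) := by positivity
  nlinarith [sq_nonneg m]

/-- Away from `z₁` the truncated barrier is subharmonic, quantitatively so at the scale `δ`
around `z₀`. -/
lemma lap_test_ge_pole {R s : ℝ} (hδ : 0 < δ) (hδ1 : δ < 1) (ha : 0 ≤ a) (hα : 0 ≤ α)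
    (hs : 2 ≤ α * s ^ 2) (hs0 : 0 ≤ s)
    (hc : c = Real.exp (-α * R ^ 2)) (hac : a ≤ α * c) (hz : z ∉ Metric.closedBall z₁ s) :
    3 * max (barrier z₀ z₁ α c a δ z) 0 ^ 2
        * (a * (2 * δ ^ 2 / (Complex.normSq (z - z₀) + δ ^ 2) ^ 2))
      ≤ lap (fun z => cut (barrier z₀ z₁ α c a δ z)) z := by
  rw [lap_cut (contDiff_barrier hδ), lap_barrier hδ]
  have hb := barrier_le_gauss (z₀ := z₀) (z₁ := z₁) (z := z) (α := α) (c := c) hδ hδ1 ha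
  rcases le_or_gt (barrier z₀ z₁ α c a δ z) 0 with hneg | hpos
  · simp [max_eq_right hneg]
  have hce : c ≤ Real.exp (-α * Complex.normSq (z - z₁)) := by linarith
  have hsz : s ^ 2 ≤ Complex.normSq (z - z₁) := by
    rw [Metric.mem_closedBall, not_le, dist_eq_norm] at hz
    rw [Complex.normSq_eq_norm_sq]
    gcongr
  set m := max (barrier z₀ z₁ α c a δ z) 0
  set e := Real.exp (-α * Complex.normSq (z - z₁))
  have hm0 : 0 ≤ m := le_max_right _ _
  have h4 : 0 ≤ 6 * m * (dd 1 (barrier z₀ z₁ α c a δ) z ^ 2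
      + dd Complex.I (barrier z₀ z₁ α c a δ) z ^ 2) := by positivity
  have h5 : 4 * a ≤ (4 * α ^ 2 * Complex.normSq (z - z₁) - 4 * α) * e := by
    have h6 : 2 ≤ α * Complex.normSq (z - z₁) := hs.trans (by gcongr)
    have h7 : 4 * α ≤ 4 * α ^ 2 * Complex.normSq (z - z₁) - 4 * α := by nlinarith
    have h8 : 0 ≤ c := by rw [hc]; positivity
    calc 4 * a ≤ (4 * α) * c := by linarith
      _ ≤ _ := mul_le_mul h7 hce h8 (by linarith)
  nlinarith [sq_nonneg m]

lemma barrier_ge {κ : ℝ} (hδ : 0 < δ) (hδ1 : δ < 1) (ha : a * -Real.log δ = κ) (haκ : a ≤ κ)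
    (ha0 : 0 ≤ a) (hz : z ∈ Metric.ball z₀ δ)
    (hg : 3 * κ ≤ Real.exp (-α * Complex.normSq (z - z₁)) - c) :
    κ ≤ barrier z₀ z₁ α c a δ z := by
  have hn : Complex.normSq (z - z₀) ≤ 1 := by
    rw [Metric.mem_ball, dist_eq_norm] at hz
    rw [Complex.normSq_eq_norm_sq]
    exact pow_le_one₀ (norm_nonneg _) (hz.le.trans hδ1.le)
  have hl : Real.log δ ≤ Real.log (Complex.normSq (z - z₀) + δ ^ 2) / 2 := by
    have : Real.log (δ ^ 2) ≤ Real.log (Complex.normSq (z - z₀) + δ ^ 2) :=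
      Real.log_le_log (by positivity) (by linarith [Complex.normSq_nonneg (z - z₀)])
    rw [Real.log_pow] at this
    push_cast at this
    linarith
  unfold barrier
  have : a * (Real.log δ - 1) ≤
      a * (Real.log (Complex.normSq (z - z₀) + δ ^ 2) / 2 - Complex.normSq (z - z₀)) := by
    gcongr
  linarith

lemma pole_ge (hδ : 0 < δ) (hz : z ∈ Metric.ball z₀ δ) :
    1 / (2 * δ ^ 2) ≤ 2 * δ ^ 2 / (Complex.normSq (z - z₀) + δ ^ 2) ^ 2 := by
  have hn : Complex.normSq (z - z₀) ≤ δ ^ 2 := by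
    rw [Metric.mem_ball, dist_eq_norm] at hz
    rw [Complex.normSq_eq_norm_sq]
    gcongr
  have hn0 := Complex.normSq_nonneg (z - z₀)
  rw [div_le_div_iff₀ (by positivity) (by positivity)]
  nlinarith
end

lemma real_volume_ball (z : ℂ) {δ : ℝ} (hδ : 0 ≤ δ) :
    volume.real (Metric.ball z δ) = Real.pi * δ ^ 2 := by
  simp [Measure.real, Complex.volume_ball, hδ]
  ring

/-- The test inequality for `ψ = cut ∘ barrier` and `ε = δ ^ (2 * m)`, with every integral bounded.
The factor `log |f|` is bounded below near `z₁`, the only place where `Δψ` can be negative, and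
averages to at most about `m log δ` on the ball of radius `δ` about `z₀`, which carries a mass of
`Δψ` of order `1 / log (1/δ)`. Hence `m` is bounded in terms of quantities independent of `δ`. -/
lemma main_estimate {f : ℂ → ℂ} (hf : ContDiff ℝ 2 f) {z₀ z₁ : ℂ}
    {ρ M s b α c κ δ : ℝ} {m : ℕ}
    (hM0 : 0 ≤ M) (hM : ∀ z, ‖f z‖ ^ 2 + 1 ≤ Real.exp (2 * M))
    (hV : IntegrableOn (fun z => ‖wirtingerDBar f z‖ ^ 2 / ‖f z‖ ^ 2) (Metric.ball z₀ ρ))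
    (hρ : 0 < ρ) (hz₁ : z₁ ∈ Metric.ball z₀ (ρ / 4))
    (hs : 0 < s) (hb : 0 < b) (hfb : ∀ z ∈ Metric.closedBall z₁ s, b ≤ ‖f z‖)
    (hα : 0 < α) (hαs : 2 ≤ α * s ^ 2) (hc : c = Real.exp (-α * (ρ / 2) ^ 2)) (hκ : 0 < κ)
    (hδ : 0 < δ) (hδ1 : δ < 1) (hL : 1 ≤ -Real.log δ) (ha1 : κ / -Real.log δ ≤ 1)
    (hac : κ / -Real.log δ ≤ α * c)
    (hg : ∀ z ∈ Metric.ball z₀ δ, 3 * κ ≤ Real.exp (-α * Complex.normSq (z - z₁)) - c)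
    (hfs : ∀ z ∈ Metric.ball z₀ δ, ‖f z‖ < b)
    (hfl : ∫ z in Metric.ball z₀ δ, ‖f z‖ ^ 2 ≤ δ ^ (2 * m + 2)) :
    3 / 2 * κ ^ 3 * Real.pi * m ≤
      3 * (∫ z in Metric.ball z₀ ρ, ‖wirtingerDBar f z‖ ^ 2 / ‖f z‖ ^ 2)
        + (12 * α + 12) * (|Real.log b| + M + 1) * volume.real (Metric.closedBall z₁ s)
        + 3 / 4 * κ ^ 3 * (1 + Real.pi) := by
  set L := -Real.log δ with hLdef
  set a := κ / L with hadef
  have hL0 : 0 < L := by linarith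
  have ha0 : 0 ≤ a := by positivity
  have haL : a * L = κ := by rw [hadef]; field_simp
  have haκ : a ≤ κ := div_le_self hκ.le hL
  have hc0 : 0 ≤ c := by rw [hc]; positivity
  set ε := δ ^ (2 * m) with hεdef
  have hε : 0 < ε := by positivity
  have hε1 : ε ≤ 1 := pow_le_one₀ hδ.le hδ1.le
  set ψ : ℂ → ℝ := fun z => cut (barrier z₀ z₁ α c a δ z) with hψdef
  have hψ : ContDiff ℝ 2 ψ := contDiff_cut.comp (contDiff_barrier hδ)
  have hψ0 : ∀ z, 0 ≤ ψ z := fun z => cut_nonneg _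
  have hψ1 : ∀ z, ψ z ≤ 1 := fun z => cut_le_one (by
    have := barrier_le_gauss (z₀ := z₀) (z₁ := z₁) (z := z) (α := α) (c := c) hδ hδ1 ha0
    have := gauss_le_one (z₁ := z₁) (z := z) hα.le
    linarith)
  have hout : ∀ z, z ∉ Metric.ball z₀ ρ → ψ z = 0 := by
    intro z hz
    refine cut_eq_zero ((barrier_le_gauss hδ hδ1 ha0).trans ?_)
    rw [sub_nonpos, hc, Real.exp_le_exp]
    have hd : ρ / 2 ≤ ‖z - z₁‖ := by
      rw [Metric.mem_ball, not_lt] at hz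
      rw [Metric.mem_ball] at hz₁
      rw [← dist_eq_norm]
      linarith [dist_triangle z z₁ z₀]
    have : (ρ / 2) ^ 2 ≤ Complex.normSq (z - z₁) := by
      rw [Complex.normSq_eq_norm_sq]; gcongr
    nlinarith
  have hcs : HasCompactSupport ψ := HasCompactSupport.intro (isCompact_closedBall z₀ ρ)
    fun z hz => hout z fun h => hz (Metric.ball_subset_closedBall h)
  have hkey := key_ineq hf hψ hcs hψ0 hψ1 hout hV hε M
  have hmain := integrable_main hf hψ hcs hε M
  set C : ℝ := (12 * α + 12) * (|Real.log b| + M + 1) with hC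
  set Q : ℝ := 3 / 2 * κ ^ 2 * a / δ ^ 2 with hQ
  have hQ0 : 0 ≤ Q := by positivity
  set U : ℂ → ℝ := fun z => Q * (-(m * L) + 1 / 2 * ((‖f z‖ ^ 2 + ε) / ε)) with hU
  have hUc : Continuous U := by
    have := hf.continuous
    fun_prop
  have iU : IntegrableOn U (Metric.ball z₀ δ) :=
    (hUc.continuousOn.integrableOn_compact (isCompact_closedBall z₀ δ)).mono_set
      Metric.ball_subset_closedBall
  have iC : IntegrableOn (fun _ : ℂ => C) (Metric.closedBall z₁ s) :=
    (continuous_const (y := C)).continuousOn.integrableOn_compact (isCompact_closedBall z₁ s)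
  have hφneg : ∀ z, Real.log (‖f z‖ ^ 2 + ε) / 2 - M ≤ 0 := by
    intro z
    have : Real.log (‖f z‖ ^ 2 + ε) ≤ 2 * M := by
      rw [Real.log_le_iff_le_exp (by positivity)]
      linarith [hM z]
    linarith
  have hpt : ∀ z, (Real.log (‖f z‖ ^ 2 + ε) / 2 - M - ψ z)
        * (dd 1 (dd 1 ψ) z + dd Complex.I (dd Complex.I ψ) z) ≤
      (Metric.closedBall z₁ s).indicator (fun _ => C) z + (Metric.ball z₀ δ).indicator U z := by
    intro z
    change _ * lap ψ z ≤ _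
    have hneg := hφneg z
    have hnegψ : Real.log (‖f z‖ ^ 2 + ε) / 2 - M - ψ z ≤ 0 := by linarith [hψ0 z]
    by_cases hz1 : z ∈ Metric.closedBall z₁ s
    -- the two balls are disjoint, since `‖f‖` is at least `b` on one and below `b` on the other
    · have hz0 : z ∉ Metric.ball z₀ δ := fun h => (hfs z h).not_ge (hfb z hz1)
      rw [Set.indicator_of_mem hz1, Set.indicator_of_notMem hz0, add_zero]
      have hlap : -(12 * α + 12) ≤ lap ψ z := lap_test_ge hδ hδ1 ha0 ha1 hα.le hc0
      have hlog : Real.log b ≤ Real.log (‖f z‖ ^ 2 + ε) / 2 := by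
        have : Real.log (b ^ 2) ≤ Real.log (‖f z‖ ^ 2 + ε) := by
          apply Real.log_le_log (by positivity)
          have : b ^ 2 ≤ ‖f z‖ ^ 2 := by
            have := hfb z hz1
            gcongr
          linarith
        rw [Real.log_pow] at this
        push_cast at this
        linarith
      have habs := neg_abs_le (Real.log b)
      have h1 : -(|Real.log b| + M + 1) ≤ Real.log (‖f z‖ ^ 2 + ε) / 2 - M - ψ z := by
        linarith [hψ1 z]
      have h2 : 0 ≤ |Real.log b| + M + 1 := by positivity
      rw [hC]
      nlinarith
    · rw [Set.indicator_of_notMem hz1, zero_add]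
      have hlap := lap_test_ge_pole (z₀ := z₀) hδ hδ1 ha0 hα.le hαs hs.le hc hac hz1
      change _ ≤ lap ψ z at hlap
      by_cases hz0 : z ∈ Metric.ball z₀ δ
      · rw [Set.indicator_of_mem hz0]
        have hbar := barrier_ge hδ hδ1 haL haκ ha0 hz0 (hg z hz0)
        have hQlap : Q ≤ lap ψ z := by
          refine le_trans ?_ hlap
          have h1 : κ ≤ max (barrier z₀ z₁ α c a δ z) 0 := hbar.trans (le_max_left _ _)
          have h2 := pole_ge hδ hz0
          calc Q = 3 * κ ^ 2 * (a * (1 / (2 * δ ^ 2))) := by rw [hQ]; field_simp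
            _ ≤ _ := by gcongr
        have hφU : Real.log (‖f z‖ ^ 2 + ε) / 2 - M - ψ z ≤
            -(m * L) + 1 / 2 * ((‖f z‖ ^ 2 + ε) / ε) := by
          -- the tangent to `log` at `ε` replaces Jensen's inequality
          have h1 := Real.log_le_sub_one_of_pos (show 0 < (‖f z‖ ^ 2 + ε) / ε by positivity)
          rw [Real.log_div (by positivity) hε.ne'] at h1
          have h2 : Real.log ε = -(2 * (m * L)) := by
            rw [hεdef, Real.log_pow, hLdef]; push_cast; ring
          rw [h2] at h1
          linarith [hψ0 z]
        calc _ ≤ (Real.log (‖f z‖ ^ 2 + ε) / 2 - M - ψ z) * Q :=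
              mul_le_mul_of_nonpos_left hQlap hnegψ
          _ ≤ (-(m * L) + 1 / 2 * ((‖f z‖ ^ 2 + ε) / ε)) * Q := by gcongr
          _ = U z := by rw [hU]; ring
      · rw [Set.indicator_of_notMem hz0]
        refine mul_nonpos_of_nonpos_of_nonneg hnegψ (le_trans ?_ hlap)
        positivity
  have hmono := integral_mono hmain
    ((iC.integrable_indicator Metric.isClosed_closedBall.measurableSet).add
      (iU.integrable_indicator Metric.isOpen_ball.measurableSet)) hpt
  simp only [Pi.add_apply] at hmono
  rw [integral_add (iC.integrable_indicator Metric.isClosed_closedBall.measurableSet)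
      (iU.integrable_indicator Metric.isOpen_ball.measurableSet),
    integral_indicator Metric.isClosed_closedBall.measurableSet,
    integral_indicator Metric.isOpen_ball.measurableSet, setIntegral_const, smul_eq_mul] at hmono
  have if2 : IntegrableOn (fun z => ‖f z‖ ^ 2) (Metric.ball z₀ δ) :=
    ((hf.continuous.norm.pow 2).continuousOn.integrableOn_compact
      (isCompact_closedBall z₀ δ)).mono_set Metric.ball_subset_closedBall
  have ic : ∀ k : ℝ, IntegrableOn (fun _ : ℂ => k) (Metric.ball z₀ δ) := fun k =>
    ((continuous_const (y := k)).continuousOn.integrableOn_compact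
      (isCompact_closedBall z₀ δ)).mono_set Metric.ball_subset_closedBall
  have hUint : ∫ z in Metric.ball z₀ δ, U z ≤
      Q * δ ^ 2 * (-(m * L) * Real.pi + 1 / 2 * (1 + Real.pi)) := by
    have e : U = fun z => Q * (-(m * L) + 1 / 2) + Q / (2 * ε) * ‖f z‖ ^ 2 := by
      ext z; rw [hU]; field_simp; ring
    rw [e, integral_add (ic _) (if2.const_mul _), setIntegral_const, integral_const_mul,
      real_volume_ball z₀ hδ.le, smul_eq_mul]
    have h1 : Q / (2 * ε) * ∫ z in Metric.ball z₀ δ, ‖f z‖ ^ 2 ≤ Q / (2 * ε) * δ ^ (2 * m + 2) := by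
      gcongr
    have h2 : Q / (2 * ε) * δ ^ (2 * m + 2) = Q * δ ^ 2 / 2 := by
      rw [pow_add, ← hεdef]; field_simp
    linarith
  have hQδ : Q * δ ^ 2 = 3 / 2 * κ ^ 2 * a := by rw [hQ]; field_simp
  rw [hQδ] at hUint
  have h3 : 3 / 2 * κ ^ 2 * a * (-(m * L) * Real.pi + 1 / 2 * (1 + Real.pi)) ≤
      -(3 / 2 * κ ^ 3 * Real.pi * m) + 3 / 4 * κ ^ 3 * (1 + Real.pi) := by
    have h4 : 3 / 2 * κ ^ 2 * a * (-(m * L) * Real.pi + 1 / 2 * (1 + Real.pi)) =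
      -(3 / 2 * κ ^ 2 * (a * L) * Real.pi * m) + 3 / 4 * κ ^ 2 * a * (1 + Real.pi) := by ring
    rw [h4, haL]
    have h5 : 3 / 4 * κ ^ 2 * a * (1 + Real.pi) ≤ 3 / 4 * κ ^ 2 * κ * (1 + Real.pi) := by
      have := Real.pi_pos
      gcongr
    linarith
  linarith

/-! ### Unique continuation -/

/-- Strong unique continuation for `|∂̄f| ≤ V |f|` with `V ∈ L²`. -/
lemma eq_zero_near {f : ℂ → ℂ} (hf : ContDiff ℝ 2 f) (hcf : HasCompactSupport f) {z₀ : ℂ} {ρ : ℝ}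
    (hρ : 0 < ρ) (hf0 : f z₀ = 0) (hinf : VanishesInfiniteOrder f z₀)
    (hV : IntegrableOn (fun z => ‖wirtingerDBar f z‖ ^ 2 / ‖f z‖ ^ 2) (Metric.ball z₀ ρ)) :
    ∀ z ∈ Metric.ball z₀ (ρ / 4), f z = 0 := by
  intro z₁ hz₁
  by_contra hne
  obtain ⟨B, hB⟩ := hf.continuous.bounded_above_of_compact_support hcf
  set M := Real.log (B ^ 2 + 1) / 2 with hMdef
  have hM0 : 0 ≤ M := by
    have := Real.log_nonneg (show 1 ≤ B ^ 2 + 1 by nlinarith)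
    positivity
  have hM : ∀ z, ‖f z‖ ^ 2 + 1 ≤ Real.exp (2 * M) := by
    intro z
    rw [hMdef, mul_div_cancel₀ _ (two_ne_zero), Real.exp_log (by positivity)]
    have := hB z
    gcongr
  set b := ‖f z₁‖ / 2 with hbdef
  have hb : 0 < b := by have := norm_pos_iff.mpr hne; positivity
  obtain ⟨s, hs, hfb⟩ : ∃ s > 0, ∀ z ∈ Metric.closedBall z₁ s, b ≤ ‖f z‖ := by
    have : ∀ᶠ z in nhds z₁, b < ‖f z‖ :=
      hf.continuous.norm.continuousAt.eventually_const_lt (by linarith)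
    obtain ⟨s, hs, h⟩ := Metric.eventually_nhds_iff_ball.mp this
    exact ⟨s / 2, by positivity, fun z hz =>
      (h z (Metric.closedBall_subset_ball (by linarith) hz)).le⟩
  set α := 2 / s ^ 2 with hαdef
  have hα : 0 < α := by positivity
  have hαs : 2 ≤ α * s ^ 2 := by rw [hαdef]; field_simp; rfl
  set c := Real.exp (-α * (ρ / 2) ^ 2) with hc
  have hc0 : 0 < c := by positivity
  have hcz : c < Real.exp (-α * Complex.normSq (z₀ - z₁)) := by
    rw [hc, Real.exp_lt_exp, Complex.normSq_eq_norm_sq, ← dist_eq_norm, dist_comm]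
    rw [Metric.mem_ball] at hz₁
    have : dist z₁ z₀ ^ 2 < (ρ / 2) ^ 2 := by
      have := dist_nonneg (x := z₁) (y := z₀)
      gcongr
      linarith
    nlinarith
  obtain ⟨κ, hκ, hκ3⟩ : ∃ κ > 0, 3 * κ < Real.exp (-α * Complex.normSq (z₀ - z₁)) - c :=
    ⟨(Real.exp (-α * Complex.normSq (z₀ - z₁)) - c) / 4, by linarith, by linarith⟩
  set T := 3 * (∫ z in Metric.ball z₀ ρ, ‖wirtingerDBar f z‖ ^ 2 / ‖f z‖ ^ 2)
        + (12 * α + 12) * (|Real.log b| + M + 1) * volume.real (Metric.closedBall z₁ s)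
        + 3 / 4 * κ ^ 3 * (1 + Real.pi) with hT
  have hk3 : 0 < 3 / 2 * κ ^ 3 * Real.pi := by have := Real.pi_pos; positivity
  obtain ⟨m, hm⟩ := exists_nat_gt (T / (3 / 2 * κ ^ 3 * Real.pi))
  rw [div_lt_iff₀ hk3] at hm
  have E1 : ∀ᶠ δ : ℝ in nhdsWithin 0 (Set.Ioi 0), 0 < δ := self_mem_nhdsWithin
  have E2 : ∀ η : ℝ, 0 < η → ∀ᶠ δ : ℝ in nhdsWithin 0 (Set.Ioi 0), δ < η := fun η hη =>
    mem_nhdsWithin_of_mem_nhds (Iio_mem_nhds hη)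
  have E3 : ∀ᶠ δ : ℝ in nhdsWithin 0 (Set.Ioi 0), Real.log δ ≤ -(1 + κ + κ / (α * c)) :=
    Real.tendsto_log_nhdsGT_zero.eventually_le_atBot _
  have E4 : ∀ᶠ δ : ℝ in nhdsWithin 0 (Set.Ioi 0),
      δ ^ (-((2 * m + 2 : ℕ) : ℝ)) * ∫ z in Metric.ball z₀ δ, ‖f z‖ ^ 2 < 1 :=
    (hinf _ (Nat.cast_nonneg _)).eventually_lt_const one_pos
  have hev : ∀ᶠ z in nhds z₀, 3 * κ < Real.exp (-α * Complex.normSq (z - z₁)) - c ∧ ‖f z‖ < b := by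
    have h1 : Continuous fun z : ℂ => Real.exp (-α * Complex.normSq (z - z₁)) - c :=
      (contDiff_gauss (z₁ := z₁) (α := α) (c := c)).continuous
    exact (h1.continuousAt.eventually_const_lt hκ3).and
      (hf.continuous.norm.continuousAt.eventually_lt_const (by simpa [hf0] using hb))
  obtain ⟨η, hη, hηb⟩ := Metric.eventually_nhds_iff_ball.mp hev
  obtain ⟨δ, hδ, hδ1, hδη, hlog, hfl⟩ :=
    (E1.and ((E2 1 one_pos).and ((E2 η hη).and (E3.and E4)))).exists
  have hq : 0 < κ / (α * c) := by positivity
  have hL : 1 + κ + κ / (α * c) ≤ -Real.log δ := by linarith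
  have hL0 : 0 < -Real.log δ := by linarith
  have hfl' : ∫ z in Metric.ball z₀ δ, ‖f z‖ ^ 2 ≤ δ ^ (2 * m + 2) := by
    rw [Real.rpow_neg hδ.le, Real.rpow_natCast, inv_mul_lt_iff₀ (by positivity)] at hfl
    linarith
  have := main_estimate hf hM0 hM hV hρ hz₁ hs hb hfb hα hαs hc hκ hδ hδ1 (by linarith)
    (by rw [div_le_one hL0]; linarith)
    (by rw [div_le_iff₀ hL0]
        have : κ / (α * c) ≤ -Real.log δ := by linarith
        rwa [div_le_iff₀ (by positivity), mul_comm] at this)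
    (fun z hz => (hηb z (Metric.ball_subset_ball hδη.le hz)).1.le)
    (fun z hz => (hηb z (Metric.ball_subset_ball hδη.le hz)).2) hfl'
  linarith

/-- Proposition 5.2(2): a smooth extension `ũ` across a boundary point `z₀` of a
nonconstant holomorphic function, with `ũ(z₀) = 0` vanishing to infinite order,
satisfies `∫_B |∂̄ũ|²/|ũ|² = ∞` on every ball `B = B(z₀,r) ⊆ W`. -/
theorem infinite_order_dbar_divergence
    (Ω : Set ℂ) (hΩopen : IsOpen Ω) (hΩconn : IsConnected Ω)
    (z₀ : ℂ) (hz₀ : z₀ ∈ frontier Ω)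
    (u : ℂ → ℂ) (hu : DifferentiableOn ℂ u Ω)
    (hnonconst : ¬ ∃ c : ℂ, Set.EqOn u (fun _ => c) Ω)
    (W : Set ℂ) (hWopen : IsOpen W) (hz₀W : z₀ ∈ W)
    (ut : ℂ → ℂ) (hsmooth : ContDiffOn ℝ (⊤ : ℕ∞) ut W)
    (hagree : Set.EqOn ut u (W ∩ Ω)) (hut0 : ut z₀ = 0)
    (hinf : VanishesInfiniteOrder ut z₀) :
    ∀ r : ℝ, 0 < r → Metric.ball z₀ r ⊆ W →
      ∫⁻ z in Metric.ball z₀ r,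
        ENNReal.ofReal (‖wirtingerDBar ut z‖ ^ 2 / ‖ut z‖ ^ 2) = ⊤ := by
  intro r hr hball
  by_contra hfin
  -- a globally smooth, compactly supported function that agrees with `ut` near `z₀`
  let χ : ContDiffBump z₀ := ⟨r / 3, r / 2, by positivity, by linarith⟩
  set f : ℂ → ℂ := fun z => χ z • ut z with hfdef
  have hcf : HasCompactSupport f := χ.hasCompactSupport.smul_right
  have hf : ContDiff ℝ 2 f := by
    rw [contDiff_iff_contDiffAt]
    intro z
    by_cases hz : z ∈ Metric.ball z₀ r
    · have h1 : ContDiffAt ℝ 2 ut z :=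
        (hsmooth.contDiffAt (hWopen.mem_nhds (hball hz))).of_le
          (WithTop.coe_le_coe.mpr (le_top : (2 : ℕ∞) ≤ ⊤))
      exact χ.contDiff.contDiffAt.smul h1
    · have hz' : z ∉ tsupport f := by
        intro h
        have h2 : z ∈ tsupport (χ : ℂ → ℝ) := tsupport_smul_subset_left _ _ h
        rw [χ.tsupport_eq] at h2
        exact hz (Metric.closedBall_subset_ball (by change r / 2 < r; linarith) h2)
      exact (contDiffAt_const (c := (0 : ℂ))).congr_of_eventuallyEq
        (notMem_tsupport_iff_eventuallyEq.mp hz')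
  have hagr : ∀ z ∈ Metric.ball z₀ (r / 3), f z = ut z := by
    intro z hz
    have : χ z = 1 := χ.one_of_mem_closedBall (Metric.ball_subset_closedBall hz)
    simp [hfdef, this]
  have hdb : ∀ z ∈ Metric.ball z₀ (r / 3), wirtingerDBar f z = wirtingerDBar ut z := by
    intro z hz
    have : f =ᶠ[nhds z] ut :=
      Filter.eventually_of_mem (Metric.isOpen_ball.mem_nhds hz) hagr
    simp [wirtingerDBar, this.fderiv_eq]
  have hinff : VanishesInfiniteOrder f z₀ := by
    intro m hm
    refine (hinf m hm).congr' ?_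
    have : ∀ᶠ t : ℝ in nhdsWithin 0 (Set.Ioi 0), t < r / 3 :=
      mem_nhdsWithin_of_mem_nhds (Iio_mem_nhds (by positivity))
    filter_upwards [this] with t ht
    congr 1
    refine setIntegral_congr_fun Metric.isOpen_ball.measurableSet fun z hz => ?_
    simp only [hagr z (Metric.ball_subset_ball ht.le hz)]
  have hV : IntegrableOn (fun z => ‖wirtingerDBar f z‖ ^ 2 / ‖f z‖ ^ 2)
      (Metric.ball z₀ (r / 3)) := by
    have hmeas : Measurable (fun z => ‖wirtingerDBar f z‖ ^ 2 / ‖f z‖ ^ 2) :=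
      ((continuous_dbar hf).norm.pow 2).measurable.div (hf.continuous.norm.pow 2).measurable
    refine (lintegral_ofReal_ne_top_iff_integrable hmeas.aestronglyMeasurable
      (Filter.Eventually.of_forall fun z => by positivity)).mp ?_
    refine ne_top_of_le_ne_top hfin ?_
    rw [setLIntegral_congr_fun (g := fun z =>
      ENNReal.ofReal (‖wirtingerDBar ut z‖ ^ 2 / ‖ut z‖ ^ 2)) Metric.isOpen_ball.measurableSet
      fun z hz => by simp only [hagr z hz, hdb z hz]]
    exact lintegral_mono_set (Metric.ball_subset_ball (by linarith))
  have hf0 : f z₀ = 0 := by simp [hfdef, hut0]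
  have hzero := eq_zero_near hf hcf (by positivity) hf0 hinff hV
  -- `u` vanishes on the part of `Ω` close to `z₀`, hence on `Ω`
  obtain ⟨w, hwB, hwΩ⟩ : (Metric.ball z₀ (r / 3 / 4) ∩ Ω).Nonempty :=
    mem_closure_iff.mp (frontier_subset_closure hz₀) _ Metric.isOpen_ball
      (Metric.mem_ball_self (by positivity))
  have hu0 : u =ᶠ[nhds w] 0 := by
    filter_upwards [Metric.isOpen_ball.mem_nhds hwB, hΩopen.mem_nhds hwΩ] with z hzB hzΩ
    have h3 : z ∈ Metric.ball z₀ (r / 3) := Metric.ball_subset_ball (by linarith) hzB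
    rw [← hagree ⟨hball (Metric.ball_subset_ball (by linarith) h3), hzΩ⟩, ← hagr z h3,
      hzero z hzB]
    rfl
  exact hnonconst ⟨0, (hu.analyticOnNhd hΩopen).eqOn_zero_of_preconnected_of_eventuallyEq_zero
    hΩconn.isPreconnected hwΩ hu0⟩
end

section
/- Let Ω ⊆ ℂ be a nonempty open connected set, z₀ a frontier point of Ω, and u : ℂ → ℂ holomorphic on Ω and nonconstant on Ω. Let W be an open neighborhood of z₀ and ũ : ℂ → ℂ a function that is C^∞ on W, agrees with u on W ∩ Ω, and satisfies ũ(z₀) = 0. Then the following are equivalent: (1) ũ vanishes to finite order at z₀ in the L² sense; (2) there exist an open neighborhood U ⊆ W of z₀ and a constant C such that |∂̄ũ(z)| ≤ C·|ũ(z)| for all z ∈ U; (3) there exists an open neighborhood U ⊆ W of z₀ such that ∫_U |∂̄ũ(z)|²/|ũ(z)|² dv < ∞. -/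
/-!
Write `f` for the smooth extension. The three conditions are proved equivalent in a circle.

*Finite order implies `|∂̄f| ≤ C |f|`.* The smooth function `∂̄f` vanishes on the open set `W ∩ Ω`,
whose closure contains `z₀`, so all its derivatives vanish at `z₀` and it is flat there
(`wirtingerDBar_flat`). Hence every Taylor polynomial of `f` at `z₀` is a polynomial in `z - z₀`
alone (`exists_taylor_polynomial`). If `f` has finite order, some Taylor coefficient is nonzero, so
`|f| ≥ c |z - z₀|ᵏ` near `z₀`, which dominates the flat function `∂̄f`
(`wirtingerDBar_isBigO_of_finite_order`).

*`|∂̄f| ≤ C |f|` implies square integrability of the quotient*: it is bounded on a bounded set.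

*Square integrability implies finite order.* This is strong unique continuation for
`|∂̄f| ≤ V |f|` with `V ∈ L²`. For a smooth weight `e ^ φ`, integration by parts gives
`∫ Δφ |h|² e ^ φ ≤ ∫ |2 ∂̄h|² e ^ φ` for test functions `h` (`carleman_smooth`). Taking for `φ` the
logarithmic potential of `F = 8 V² + 1 ∈ L¹`, regularised and passed to the limit with Fatou's lemma
and Lebesgue differentiation, produces a weight `0 < E ≤ 1` with `π ∫ F |h|² E ≤ ∫ |2 ∂̄h|² E`
(`exists_carleman_weight`). Applied to `h = ρ f (a / (z - z₀)) ^ k`, with `ρ` a cut-off vanishing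
near `z₀` and near the boundary of a disc, the term with `∂̄f` is absorbed on the left
(`carleman_absorb`). The inner cut-off contributes nothing in the limit when `f` vanishes to
infinite order, and letting `k → ∞` removes the contribution of the outer one, so `f` vanishes near
`z₀` (`eqOn_zero_of_vanishesInfiniteOrder`). The identity theorem then forces `u` to be identically
zero on `Ω`, contradicting nonconstancy.
-/

open MeasureTheory

/-! ### Taylor expansion at a boundary point -/

open Topology Filter Asymptotics in
lemma norm_fderiv_le_partials (g : ℂ → ℂ) (z : ℂ) :
    ‖fderiv ℝ g z‖ ≤ ‖fderiv ℝ g z 1‖ + ‖fderiv ℝ g z Complex.I‖ := by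
  refine ContinuousLinearMap.opNorm_le_bound _ (by positivity) fun v => ?_
  have hv : v = v.re • (1 : ℂ) + v.im • Complex.I := by
    apply Complex.ext <;> simp
  have h1 : fderiv ℝ g z v = v.re • fderiv ℝ g z 1 + v.im • fderiv ℝ g z Complex.I := by
    conv_lhs => rw [hv]
    rw [map_add, map_smul, map_smul]
  rw [h1]
  refine (norm_add_le _ _).trans ?_
  rw [norm_smul, norm_smul, add_mul, mul_comm ‖v.re‖, mul_comm ‖v.im‖]
  gcongr
  · exact Complex.abs_re_le_norm v
  · exact Complex.abs_im_le_norm v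

open Topology Filter Asymptotics in
lemma isBigO_pow_succ_of_partials {z₀ : ℂ} {g : ℂ → ℂ} {N : ℕ}
    (hd : ∀ᶠ z in 𝓝 z₀, DifferentiableAt ℝ g z) (h0 : g z₀ = 0)
    (h1 : (fun z => fderiv ℝ g z 1) =O[𝓝 z₀] fun z => ‖z - z₀‖ ^ N)
    (hI : (fun z => fderiv ℝ g z Complex.I) =O[𝓝 z₀] fun z => ‖z - z₀‖ ^ N) :
    g =O[𝓝 z₀] fun z => ‖z - z₀‖ ^ (N + 1) := by
  obtain ⟨C1, h1⟩ := h1.bound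
  obtain ⟨C2, hI⟩ := hI.bound
  obtain ⟨ε, hε, hball⟩ := Metric.eventually_nhds_iff_ball.1 ((hd.and h1).and hI)
  refine IsBigO.of_bound (|C1| + |C2|) ?_
  filter_upwards [Metric.ball_mem_nhds z₀ hε] with z hz
  have hsub : Metric.closedBall z₀ ‖z - z₀‖ ⊆ Metric.ball z₀ ε :=
    Metric.closedBall_subset_ball (by simpa [dist_eq_norm] using hz)
  have := (convex_closedBall z₀ ‖z - z₀‖).norm_image_sub_le_of_norm_fderiv_le (𝕜 := ℝ)
    (f := g) (C := (|C1| + |C2|) * ‖z - z₀‖ ^ N) (x := z₀) (y := z)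
    (fun w hw => (hball w (hsub hw)).1.1) (fun w hw => ?_) (by simp)
    (by simp [dist_eq_norm])
  swap
  · refine (norm_fderiv_le_partials g w).trans ?_
    have hw' : ‖w - z₀‖ ≤ ‖z - z₀‖ := by simpa [dist_eq_norm] using hw
    have hp : ‖w - z₀‖ ^ N ≤ ‖z - z₀‖ ^ N := by gcongr
    have a1 := (hball w (hsub hw)).1.2
    have a2 := (hball w (hsub hw)).2
    simp only [norm_pow, norm_norm] at a1 a2
    have : 0 ≤ ‖w - z₀‖ ^ N := by positivity
    calc _ ≤ |C1| * ‖w - z₀‖ ^ N + |C2| * ‖w - z₀‖ ^ N := by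
          refine add_le_add (a1.trans ?_) (a2.trans ?_) <;> gcongr <;> exact le_abs_self _
      _ = (|C1| + |C2|) * ‖w - z₀‖ ^ N := by ring
      _ ≤ _ := by gcongr
  rw [h0, sub_zero] at this
  refine this.trans (le_of_eq ?_)
  rw [norm_pow, norm_norm]
  ring

open Topology Filter Asymptotics in
lemma contDiffOn_fderiv_apply {W : Set ℂ} (hW : IsOpen W) {g : ℂ → ℂ}
    (hg : ContDiffOn ℝ (⊤ : ℕ∞) g W) (v : ℂ) :
    ContDiffOn ℝ (⊤ : ℕ∞) (fun z => fderiv ℝ g z v) W :=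
  (hg.fderiv_of_isOpen hW (m := (⊤ : ℕ∞)) (by simp)).clm_apply contDiffOn_const

open Topology Filter Asymptotics in
/-- A smooth function vanishing on an open set is flat at every point of the closure. -/
lemma isBigO_pow_of_vanishing {W Ω : Set ℂ} (hW : IsOpen W) (hΩ : IsOpen Ω) {z₀ : ℂ}
    (hz₀W : z₀ ∈ W) (hz₀ : z₀ ∈ closure Ω) (N : ℕ) :
    ∀ g : ℂ → ℂ, ContDiffOn ℝ (⊤ : ℕ∞) g W → (∀ z ∈ W ∩ Ω, g z = 0) →
      g =O[𝓝 z₀] fun z => ‖z - z₀‖ ^ N := by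
  induction N with
  | zero =>
    intro g hg _
    simpa using (hg.continuousOn.continuousAt (hW.mem_nhds hz₀W)).isBigO_one ℝ
  | succ N ih =>
    intro g hg h0
    have hpart : ∀ v, ∀ z ∈ W ∩ Ω, fderiv ℝ g z v = 0 := by
      intro v z hz
      have : g =ᶠ[𝓝 z] fun _ => 0 := by
        filter_upwards [(hW.inter hΩ).mem_nhds hz] with w hw using h0 w hw
      rw [this.fderiv_eq]; simp
    have hcl : z₀ ∈ closure (W ∩ Ω) := hW.inter_closure ⟨hz₀W, hz₀⟩
    have hg0 : g z₀ = 0 := by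
      have hc := hg.continuousOn.continuousAt (hW.mem_nhds hz₀W)
      have hmem := hc.continuousWithinAt.mem_closure (s := W ∩ Ω) (t := {0}) hcl (fun z hz => h0 z hz)
      simpa using hmem
    refine isBigO_pow_succ_of_partials ?_ hg0
      (ih _ (contDiffOn_fderiv_apply hW hg 1) (hpart 1))
      (ih _ (contDiffOn_fderiv_apply hW hg Complex.I) (hpart Complex.I))
    filter_upwards [hW.mem_nhds hz₀W] with z hz
    exact (hg.contDiffAt (hW.mem_nhds hz)).differentiableAt (by simp)

lemma wirtingerDBar_eq_zero {f : ℂ → ℂ} {z : ℂ} (hf : DifferentiableAt ℂ f z) :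
    wirtingerDBar f z = 0 := by
  have h : fderiv ℝ f z = (fderiv ℂ f z).restrictScalars ℝ :=
    (hf.hasFDerivAt.restrictScalars ℝ).fderiv
  have h2 : fderiv ℂ f z Complex.I = Complex.I * fderiv ℂ f z 1 := by
    simp
  unfold wirtingerDBar
  rw [h]
  simp only [ContinuousLinearMap.coe_restrictScalars']
  rw [h2, ← mul_assoc, Complex.I_mul_I]
  ring

lemma contDiffOn_wirtingerDBar {W : Set ℂ} (hW : IsOpen W) {g : ℂ → ℂ}
    (hg : ContDiffOn ℝ (⊤ : ℕ∞) g W) : ContDiffOn ℝ (⊤ : ℕ∞) (wirtingerDBar g) W :=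
  ((contDiffOn_fderiv_apply hW hg 1).add
    (contDiffOn_const.mul (contDiffOn_fderiv_apply hW hg Complex.I))).div_const 2

open Topology Filter Asymptotics in
lemma wirtingerDBar_flat {W Ω : Set ℂ} (hW : IsOpen W) (hΩ : IsOpen Ω) {z₀ : ℂ}
    (hz₀W : z₀ ∈ W) (hz₀ : z₀ ∈ closure Ω) (N : ℕ) {f : ℂ → ℂ}
    (hf : ContDiffOn ℝ (⊤ : ℕ∞) f W) (hfΩ : DifferentiableOn ℂ f (W ∩ Ω)) :
    wirtingerDBar f =O[𝓝 z₀] fun z => ‖z - z₀‖ ^ N :=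
  isBigO_pow_of_vanishing hW hΩ hz₀W hz₀ N _ (contDiffOn_wirtingerDBar hW hf)
    fun _ hz => wirtingerDBar_eq_zero (hfΩ.differentiableAt ((hW.inter hΩ).mem_nhds hz))

lemma exists_polynomial_antideriv (q : Polynomial ℂ) (c : ℂ) :
    ∃ p : Polynomial ℂ, p.derivative = q ∧ p.eval 0 = c := by
  induction q using Polynomial.induction_on' generalizing c with
  | add p q hp hq =>
    obtain ⟨a, ha, ha'⟩ := hp c
    obtain ⟨b, hb, hb'⟩ := hq 0
    exact ⟨a + b, by simp [ha, hb], by simp [ha', hb']⟩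
  | monomial n a =>
    refine ⟨Polynomial.monomial (n + 1) (a / (n + 1)) + Polynomial.C c, ?_, by simp⟩
    have : (n : ℂ) + 1 ≠ 0 := by exact_mod_cast n.succ_ne_zero
    simp [this]

open Topology Filter Asymptotics in
/-- A smooth function that is holomorphic on an open set accumulating at `z₀` has a holomorphic
Taylor polynomial at `z₀`, to every order. -/
lemma exists_taylor_polynomial {W Ω : Set ℂ} (hW : IsOpen W) (hΩ : IsOpen Ω) {z₀ : ℂ}
    (hz₀W : z₀ ∈ W) (hz₀ : z₀ ∈ closure Ω) (N : ℕ) :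
    ∀ f : ℂ → ℂ, ContDiffOn ℝ (⊤ : ℕ∞) f W → DifferentiableOn ℂ f (W ∩ Ω) →
      ∃ p : Polynomial ℂ, (fun z => f z - p.eval (z - z₀)) =O[𝓝 z₀] fun z => ‖z - z₀‖ ^ N := by
  induction N with
  | zero =>
    intro f hf _
    refine ⟨0, ?_⟩
    simpa using (hf.continuousOn.continuousAt (hW.mem_nhds hz₀W)).isBigO_one ℝ
  | succ N ih =>
    intro f hf hfΩ
    have hopen := hW.inter hΩ
    obtain ⟨q, hq⟩ := ih (fun z => fderiv ℝ f z 1) (contDiffOn_fderiv_apply hW hf 1) (by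
      refine (hfΩ.deriv hopen).congr fun z hz => ?_
      have hd := hfΩ.differentiableAt (hopen.mem_nhds hz)
      rw [(hd.hasFDerivAt.restrictScalars ℝ).fderiv]
      simp)
    obtain ⟨p, hp, hp0⟩ := exists_polynomial_antideriv q (f z₀)
    refine ⟨p, ?_⟩
    have hfd : ∀ᶠ z in 𝓝 z₀, DifferentiableAt ℝ f z := by
      filter_upwards [hW.mem_nhds hz₀W] with z hz
      exact (hf.contDiffAt (hW.mem_nhds hz)).differentiableAt (by simp)
    have hpd : ∀ z, HasFDerivAt (𝕜 := ℝ) (fun z => p.eval (z - z₀))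
        (((ContinuousLinearMap.toSpanSingleton ℂ (q.eval (z - z₀))).restrictScalars ℝ)) z := by
      intro z
      have h1 : HasDerivAt (fun z => p.eval (z - z₀)) (q.eval (z - z₀)) z := by
        have := (p.hasDerivAt (z - z₀)).comp z ((hasDerivAt_id z).sub_const z₀)
        simpa [hp, Function.comp_def] using this
      exact h1.hasFDerivAt.restrictScalars ℝ
    have key : ∀ v, (fun z => fderiv ℝ (fun z => f z - p.eval (z - z₀)) z v) =ᶠ[𝓝 z₀]
        fun z => fderiv ℝ f z v - v * q.eval (z - z₀) := by
      intro v
      filter_upwards [hfd] with z hz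
      rw [(hz.hasFDerivAt.fun_sub (hpd z)).fderiv]
      simp
    refine isBigO_pow_succ_of_partials ?_ (by simp [hp0]) ?_ ?_
    · filter_upwards [hfd] with z hz using hz.sub (hpd z).differentiableAt
    · refine (key 1).trans_isBigO ?_
      simpa using hq
    · refine (key Complex.I).trans_isBigO ?_
      have h2 := ((wirtingerDBar_flat hW hΩ hz₀W hz₀ N hf hfΩ).const_mul_left
        (-2 * Complex.I)).add (hq.const_mul_left Complex.I)
      refine h2.congr_left fun z => ?_
      unfold wirtingerDBar
      linear_combination (-fderiv ℝ f z Complex.I) * Complex.I_mul_I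

open Topology Filter Asymptotics in
lemma vanishesInfiniteOrder_of_flat {f : ℂ → ℂ} {z₀ : ℂ}
    (h : ∀ N : ℕ, f =O[𝓝 z₀] fun z => ‖z - z₀‖ ^ N) : VanishesInfiniteOrder f z₀ := by
  intro m hm
  obtain ⟨N, hN⟩ := exists_nat_ge m
  obtain ⟨C, hC⟩ := (h N).bound
  obtain ⟨ε, hε, hball⟩ := Metric.eventually_nhds_iff_ball.1 hC
  -- for `r < min ε 1` the quantity is at most `C² π r ^ (2 * N + 2 - m) ≤ C² π r²`
  have hlim : Tendsto (fun r : ℝ => C ^ 2 * Real.pi * r ^ 2) (𝓝[>] 0) (𝓝 0) := by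
    have : Continuous fun r : ℝ => C ^ 2 * Real.pi * r ^ 2 := by fun_prop
    simpa using (this.tendsto 0).mono_left nhdsWithin_le_nhds
  refine squeeze_zero' ?_ ?_ hlim
  · filter_upwards [self_mem_nhdsWithin] with r (hr : 0 < r)
    exact mul_nonneg (by positivity) (integral_nonneg fun _ => by positivity)
  · filter_upwards [self_mem_nhdsWithin, Ioo_mem_nhdsGT (lt_min hε one_pos)] with r (hr : 0 < r) hr2
    have hr1 : r < 1 := hr2.2.trans_le (min_le_right _ _)
    have hrε : r < ε := hr2.2.trans_le (min_le_left _ _)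
    have hvol : volume.real (Metric.ball z₀ r) = Real.pi * r ^ 2 := by
      simp [Measure.real, Complex.volume_ball, hr.le, mul_comm]
    have h_int : ∫ z in Metric.ball z₀ r, ‖f z‖ ^ 2 ≤ (C * r ^ N) ^ 2 * (Real.pi * r ^ 2) := by
      rw [← hvol]
      refine (le_abs_self _).trans ?_
      rw [← Real.norm_eq_abs]
      refine norm_setIntegral_le_of_norm_le_const (by simp [Complex.volume_ball, ENNReal.mul_lt_top]) fun z hz => ?_
      have hz' : ‖z - z₀‖ < r := by simpa [dist_eq_norm] using hz
      have := hball z (Metric.ball_subset_ball hrε.le hz)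
      simp only [norm_pow, norm_norm] at this ⊢
      have h2 : ‖f z‖ ≤ |C| * r ^ N := this.trans (by gcongr; exact le_abs_self _)
      calc ‖f z‖ ^ 2 ≤ (|C| * r ^ N) ^ 2 := by gcongr
        _ = _ := by rw [mul_pow, mul_pow, sq_abs]
    have hrm : r ^ (-m) * r ^ N ≤ 1 := by
      rw [← Real.rpow_natCast, ← Real.rpow_add hr]
      exact Real.rpow_le_one hr.le hr1.le (by linarith)
    have hrN : r ^ N ≤ 1 := pow_le_one₀ hr.le hr1.le
    have hp : 0 ≤ r ^ (-m) := by positivity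
    calc r ^ (-m) * ∫ z in Metric.ball z₀ r, ‖f z‖ ^ 2
        ≤ r ^ (-m) * ((C * r ^ N) ^ 2 * (Real.pi * r ^ 2)) := by gcongr
      _ = (C ^ 2 * Real.pi * r ^ 2) * ((r ^ (-m) * r ^ N) * r ^ N) := by ring
      _ ≤ (C ^ 2 * Real.pi * r ^ 2) * (1 * 1) := by gcongr
      _ = _ := by ring

open Topology Filter Asymptotics in
/-- Finite order gives the pointwise bound: `f` is comparable to its leading Taylor term
`c (z - z₀) ^ k`, while `∂̄f` is flat. -/
lemma wirtingerDBar_isBigO_of_finite_order {W Ω : Set ℂ} (hW : IsOpen W) (hΩ : IsOpen Ω) {z₀ : ℂ}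
    (hz₀W : z₀ ∈ W) (hz₀ : z₀ ∈ closure Ω) {f : ℂ → ℂ}
    (hf : ContDiffOn ℝ (⊤ : ℕ∞) f W) (hfΩ : DifferentiableOn ℂ f (W ∩ Ω))
    (hfin : ¬ VanishesInfiniteOrder f z₀) :
    wirtingerDBar f =O[𝓝 z₀] f := by
  obtain ⟨N, hN⟩ : ∃ N : ℕ, ¬ f =O[𝓝 z₀] fun z => ‖z - z₀‖ ^ N := by
    by_contra! h
    exact hfin (vanishesInfiniteOrder_of_flat h)
  obtain ⟨p, hp⟩ := exists_taylor_polynomial hW hΩ hz₀W hz₀ N f hf hfΩ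
  have hp0 : p ≠ 0 := by
    rintro rfl
    exact hN (by simpa using hp)
  obtain ⟨q, hq, hq0⟩ := Polynomial.exists_eq_pow_rootMultiplicity_mul_and_not_dvd p hp0 0
  set k := p.rootMultiplicity 0
  have hq0' : q.eval 0 ≠ 0 := by
    intro h; exact hq0 (Polynomial.dvd_iff_isRoot.2 h)
  have hpe : ∀ z, p.eval (z - z₀) = (z - z₀) ^ k * q.eval (z - z₀) := by
    intro z
    conv_lhs => rw [hq]
    simp
  have hqc : ContinuousAt (fun z => q.eval (z - z₀)) z₀ :=
    (q.continuous.comp (continuous_id.sub continuous_const)).continuousAt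
  have hqne : (fun z => q.eval (z - z₀)) z₀ ≠ 0 := by simpa using hq0'
  have hkN : k < N := by
    by_contra! hle
    apply hN
    have h1 : (fun z => p.eval (z - z₀)) =O[𝓝 z₀] fun z => ‖z - z₀‖ ^ N := by
      have h2 : (fun z => (z - z₀) ^ k) =O[𝓝 z₀] fun z => ‖z - z₀‖ ^ N := by
        refine IsBigO.of_bound 1 ?_
        filter_upwards [Metric.ball_mem_nhds z₀ one_pos] with z hz
        have : ‖z - z₀‖ ≤ 1 := (show ‖z - z₀‖ < 1 by simpa [dist_eq_norm] using hz).le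
        simp only [norm_pow, norm_norm, one_mul]
        exact pow_le_pow_of_le_one (norm_nonneg _) this hle
      have h3 := h2.mul (hqc.isBigO_one ℝ)
      simpa [hpe] using h3
    simpa using hp.add h1
  have hpow : (fun z : ℂ => ‖z - z₀‖ ^ k) =O[𝓝 z₀] fun z => p.eval (z - z₀) := by
    have h1 : (fun _ : ℂ => (1 : ℂ)) =O[𝓝 z₀] fun z => q.eval (z - z₀) := by
      refine IsBigO.of_bound (2 / ‖q.eval 0‖) ?_
      have : ∀ᶠ z in 𝓝 z₀, ‖q.eval 0‖ / 2 < ‖q.eval (z - z₀)‖ :=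
        hqc.norm.eventually (lt_mem_nhds (by
          simpa using (half_lt_self (norm_pos_iff.2 hq0'))))
      filter_upwards [this] with z hz
      have hpos := norm_pos_iff.2 hq0'
      rw [norm_one, div_mul_eq_mul_div, le_div_iff₀ hpos]
      linarith
    have h2 : (fun z : ℂ => ‖z - z₀‖ ^ k) =O[𝓝 z₀] fun z => (z - z₀) ^ k :=
      IsBigO.of_bound 1 (by simp)
    have h3 := (isBigO_refl (fun z => (z - z₀) ^ k) (𝓝 z₀)).mul h1
    simp only [mul_one] at h3
    refine h2.trans ?_
    simpa [hpe] using h3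
  have hsmall : (fun z => ‖z - z₀‖ ^ N) =o[𝓝 z₀] fun z => ‖z - z₀‖ ^ k := by
    have h1 : (fun z : ℂ => ‖z - z₀‖ ^ (N - k)) =o[𝓝 z₀] fun _ => (1 : ℝ) := by
      rw [isLittleO_one_iff]
      have : Continuous fun z : ℂ => ‖z - z₀‖ ^ (N - k) := by fun_prop
      simpa [Nat.sub_ne_zero_of_lt hkN] using this.tendsto z₀
    have h2 := (isBigO_refl (fun z : ℂ => ‖z - z₀‖ ^ k) (𝓝 z₀)).mul_isLittleO h1
    simpa [← pow_add, Nat.add_sub_cancel' hkN.le] using h2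
  have hfp : (fun z => p.eval (z - z₀)) =O[𝓝 z₀] f := by
    have h1 := (hp.trans_isLittleO hsmall).trans_isBigO hpow
    have h2 := h1.right_isBigO_add
    simpa using h2
  exact ((wirtingerDBar_flat hW hΩ hz₀W hz₀ N hf hfΩ).trans hsmall.isBigO).trans (hpow.trans hfp)

/-! ### The weighted Carleman inequality -/

lemma integral_lineDeriv_eq_zero {G G' : ℂ → ℝ} {v : ℂ} (hG : Continuous G) (hG' : Continuous G')
    (hs : HasCompactSupport G) (hs' : HasCompactSupport G')
    (hd : ∀ z, HasLineDerivAt ℝ G (G' z) z v) : ∫ z, G' z = 0 := by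
  have := integral_bilinear_hasLineDerivAt_right_eq_neg_left_of_integrable (μ := volume)
    (f := fun _ : ℂ => (1 : ℝ)) (f' := fun _ => 0) (g := G) (g' := G') (v := v)
    (B := ContinuousLinearMap.mul ℝ ℝ) (by simp)
    (by simpa using hG'.integrable_of_hasCompactSupport hs')
    (by simpa using hG.integrable_of_hasCompactSupport hs)
    (fun x _ => by simpa [HasLineDerivAt] using hasDerivAt_const (0 : ℝ) (1 : ℝ))
    (fun x _ => hd x)
  simpa using this

lemma hasLineDerivAt_fderiv {f : ℂ → ℂ} (hf : ContDiff ℝ (⊤ : ℕ∞) f) (z v : ℂ) :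
    HasDerivAt (fun t : ℝ => f (z + t • v)) (fderiv ℝ f z v) 0 :=
  ((hf.differentiable (by simp)) z).hasFDerivAt.hasLineDerivAt v

lemma contDiff_fderiv_apply {g : ℂ → ℂ} (hg : ContDiff ℝ (⊤ : ℕ∞) g) (v : ℂ) :
    ContDiff ℝ (⊤ : ℕ∞) (fun z => fderiv ℝ g z v) :=
  (hg.fderiv_right (m := (⊤ : ℕ∞)) (by simp)).clm_apply contDiff_const

lemma fderiv_mixed_comm {g : ℂ → ℂ} (hg : ContDiff ℝ (⊤ : ℕ∞) g) (z v w : ℂ) :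
    fderiv ℝ (fun z => fderiv ℝ g z v) z w = fderiv ℝ (fun z => fderiv ℝ g z w) z v := by
  have hd : DifferentiableAt ℝ (fderiv ℝ g) z :=
    (hg.fderiv_right (m := (⊤ : ℕ∞)) (by simp)).differentiable (by simp) z
  have hsymm : IsSymmSndFDerivAt ℝ g z := hg.contDiffAt.isSymmSndFDerivAt (by
    simp only [minSmoothness_of_isRCLikeNormedField]
    exact WithTop.coe_le_coe.2 le_top)
  rw [fderiv_clm_apply hd (by fun_prop), fderiv_clm_apply hd (by fun_prop)]
  simpa using hsymm.eq w v

/-- **Carleman inequality** with weight `e ^ φ`, where `a, b` are the first partial derivatives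
of `φ` and `p + q` is its Laplacian:
`∫ Δφ |h|² e ^ φ ≤ ∫ |h_x + i h_y|² e ^ φ` for test functions `h`.
The difference of the two sides is `∫ |h_x - i h_y + (φ_x - i φ_y) h|² e ^ φ`. -/
lemma carleman_smooth {φ a b p q : ℂ → ℝ} (cφ : Continuous φ) (ca : Continuous a)
    (cb : Continuous b) (cp : Continuous p) (cq : Continuous q)
    (hφ1 : ∀ z, HasLineDerivAt ℝ φ (a z) z 1) (hφI : ∀ z, HasLineDerivAt ℝ φ (b z) z Complex.I)
    (ha : ∀ z, HasLineDerivAt ℝ a (p z) z 1) (hb : ∀ z, HasLineDerivAt ℝ b (q z) z Complex.I)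
    {h : ℂ → ℂ} (hh : ContDiff ℝ (⊤ : ℕ∞) h) (hs : HasCompactSupport h) :
    ∫ z, (p z + q z) * ‖h z‖ ^ 2 * Real.exp (φ z) ≤
      ∫ z, ‖2 * wirtingerDBar h z‖ ^ 2 * Real.exp (φ z) := by
  set hx : ℂ → ℂ := fun z => fderiv ℝ h z 1 with hhx
  set hy : ℂ → ℂ := fun z => fderiv ℝ h z Complex.I with hhy
  have sx : ContDiff ℝ (⊤ : ℕ∞) hx := contDiff_fderiv_apply hh 1
  have sy : ContDiff ℝ (⊤ : ℕ∞) hy := contDiff_fderiv_apply hh Complex.I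
  set hxy : ℂ → ℂ := fun z => fderiv ℝ hx z Complex.I
  have sxy : ContDiff ℝ (⊤ : ℕ∞) hxy := contDiff_fderiv_apply sx _
  have hmix : ∀ z, fderiv ℝ hy z 1 = hxy z := fun z => fderiv_mixed_comm hh z Complex.I 1
  have ch := hh.continuous
  have cx := sx.continuous
  have cy := sy.continuous
  have cxy := sxy.continuous
  have dre : ∀ {f : ℂ → ℂ} {z v d : ℂ}, HasDerivAt (fun t : ℝ => f (z + t • v)) d 0 →
      HasDerivAt (fun t : ℝ => (f (z + t • v)).re) d.re 0 := fun hd =>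
    (Complex.reCLM.hasFDerivAt.comp_hasDerivAt (0 : ℝ) hd)
  have dim : ∀ {f : ℂ → ℂ} {z v d : ℂ}, HasDerivAt (fun t : ℝ => f (z + t • v)) d 0 →
      HasDerivAt (fun t : ℝ => (f (z + t • v)).im) d.im 0 := fun hd =>
    (Complex.imCLM.hasFDerivAt.comp_hasDerivAt (0 : ℝ) hd)
  -- The divergence of the compactly supported field `(G1, G2)` has integral zero.
  let G1 : ℂ → ℝ := fun z => Real.exp (φ z) *
    (a z * ((h z).re * (h z).re + (h z).im * (h z).im)
      + 2 * ((h z).re * (hy z).im - (h z).im * (hy z).re))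
  let G2 : ℂ → ℝ := fun z => Real.exp (φ z) *
    (b z * ((h z).re * (h z).re + (h z).im * (h z).im)
      - 2 * ((h z).re * (hx z).im - (h z).im * (hx z).re))
  let G1' : ℂ → ℝ := fun z => Real.exp (φ z) * a z *
    (a z * ((h z).re * (h z).re + (h z).im * (h z).im)
      + 2 * ((h z).re * (hy z).im - (h z).im * (hy z).re)) +
    Real.exp (φ z) * (p z * ((h z).re * (h z).re + (h z).im * (h z).im)
      + a z * (2 * (h z).re * (hx z).re + 2 * (h z).im * (hx z).im)
      + 2 * ((hx z).re * (hy z).im + (h z).re * (hxy z).im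
        - (hx z).im * (hy z).re - (h z).im * (hxy z).re))
  let G2' : ℂ → ℝ := fun z => Real.exp (φ z) * b z *
    (b z * ((h z).re * (h z).re + (h z).im * (h z).im)
      - 2 * ((h z).re * (hx z).im - (h z).im * (hx z).re)) +
    Real.exp (φ z) * (q z * ((h z).re * (h z).re + (h z).im * (h z).im)
      + b z * (2 * (h z).re * (hy z).re + 2 * (h z).im * (hy z).im)
      - 2 * ((hy z).re * (hx z).im + (h z).re * (hxy z).im
        - (hy z).im * (hx z).re - (h z).im * (hxy z).re))
  have cs : ∀ {G : ℂ → ℝ}, (∀ z ∉ tsupport h, G z = 0) → HasCompactSupport G := fun hG =>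
    HasCompactSupport.intro hs hG
  have zh : ∀ z ∉ tsupport h, h z = 0 := fun z hz => image_eq_zero_of_notMem_tsupport hz
  have zd : ∀ z ∉ tsupport h, fderiv ℝ h z = 0 := fun z hz => fderiv_of_notMem_tsupport ℝ hz
  have zhx : ∀ z ∉ tsupport h, hx z = 0 := fun z hz => by simp [hhx, zd z hz]
  have zhy : ∀ z ∉ tsupport h, hy z = 0 := fun z hz => by simp [hhy, zd z hz]
  have i1 : ∫ z, G1' z = 0 := by
    refine integral_lineDeriv_eq_zero (G := G1) (v := 1) (by fun_prop) (by fun_prop)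
      (cs fun z hz => ?_) (cs fun z hz => ?_) fun z => ?_
    · simp [G1, zh z hz]
    · simp [G1', zh z hz, zhx z hz, zhy z hz]
    · have d0 := hasLineDerivAt_fderiv hh z 1
      have dy := hasLineDerivAt_fderiv sy z 1
      rw [hmix] at dy
      have := ((hφ1 z).exp).mul (((ha z).mul (((dre d0).mul (dre d0)).add
        ((dim d0).mul (dim d0)))).add ((((dre d0).mul (dim dy)).sub
        ((dim d0).mul (dre dy))).const_mul 2))
      refine HasDerivAt.congr_deriv (f := fun t : ℝ => G1 (z + t • (1 : ℂ))) this ?_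
      simp [G1', hhx, hhy]
      ring
  have i2 : ∫ z, G2' z = 0 := by
    refine integral_lineDeriv_eq_zero (G := G2) (v := Complex.I) (by fun_prop) (by fun_prop)
      (cs fun z hz => ?_) (cs fun z hz => ?_) fun z => ?_
    · simp [G2, zh z hz]
    · simp [G2', zh z hz, zhx z hz, zhy z hz]
    · have d0 := hasLineDerivAt_fderiv hh z Complex.I
      have dx := hasLineDerivAt_fderiv sx z Complex.I
      have := ((hφI z).exp).mul (((hb z).mul (((dre d0).mul (dre d0)).add
        ((dim d0).mul (dim d0)))).sub ((((dre d0).mul (dim dx)).sub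
        ((dim d0).mul (dre dx))).const_mul 2))
      refine HasDerivAt.congr_deriv (f := fun t : ℝ => G2 (z + t • Complex.I)) this ?_
      simp [G2', hxy, hhx, hhy]
      ring
  have hT : ∀ z, 2 * wirtingerDBar h z = hx z + Complex.I * hy z := fun z => by
    simp only [wirtingerDBar, hhx, hhy]; ring
  have cT : Continuous fun z => ‖2 * wirtingerDBar h z‖ ^ 2 * Real.exp (φ z) := by
    simp only [hT]; fun_prop
  have I1 : Integrable G1' := Continuous.integrable_of_hasCompactSupport (by fun_prop)
    (cs fun z hz => by simp [G1', zh z hz, zhx z hz, zhy z hz])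
  have I2 : Integrable G2' := Continuous.integrable_of_hasCompactSupport (by fun_prop)
    (cs fun z hz => by simp [G2', zh z hz, zhx z hz, zhy z hz])
  have IT : Integrable fun z => ‖2 * wirtingerDBar h z‖ ^ 2 * Real.exp (φ z) :=
    cT.integrable_of_hasCompactSupport (cs fun z hz => by simp [hT, zhx z hz, zhy z hz])
  have IL : Integrable fun z => (p z + q z) * ‖h z‖ ^ 2 * Real.exp (φ z) :=
    Continuous.integrable_of_hasCompactSupport (by fun_prop) (cs fun z hz => by simp [zh z hz])
  have hnn : 0 ≤ ∫ z, ((‖2 * wirtingerDBar h z‖ ^ 2 * Real.exp (φ z)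
      - (p z + q z) * ‖h z‖ ^ 2 * Real.exp (φ z)) + (G1' z + G2' z)) := by
    refine integral_nonneg fun z => ?_
    have e : (‖2 * wirtingerDBar h z‖ ^ 2 * Real.exp (φ z)
      - (p z + q z) * ‖h z‖ ^ 2 * Real.exp (φ z)) + (G1' z + G2' z) =
        Real.exp (φ z) *
          (((hx z).re + (hy z).im + a z * (h z).re + b z * (h z).im) ^ 2
          + ((hx z).im - (hy z).re + a z * (h z).im - b z * (h z).re) ^ 2) := by
      rw [hT, ← Complex.normSq_eq_norm_sq, ← Complex.normSq_eq_norm_sq, Complex.normSq_apply,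
        Complex.normSq_apply]
      simp [G1', G2']
      ring
    simp only [Pi.zero_apply]
    rw [e]
    positivity
  have hsplit := integral_add (IT.sub IL) (I1.add I2)
  simp only [Pi.add_apply, Pi.sub_apply] at hsplit
  rw [hsplit, integral_add I1 I2, i1, i2, integral_sub IT IL] at hnn
  linarith

/-! ### Logarithmic potentials -/

/-- The regularised logarithmic kernel `log (|ζ|² + δ)`. -/
noncomputable def logKernel (δ : ℝ) (ζ : ℂ) : ℝ := Real.log (ζ.re ^ 2 + ζ.im ^ 2 + δ)

/-- The derivative of `logKernel δ` in the direction `v`. -/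
noncomputable def logKernel₁ (δ : ℝ) (v ζ : ℂ) : ℝ :=
  2 * (v.re * ζ.re + v.im * ζ.im) / (ζ.re ^ 2 + ζ.im ^ 2 + δ)

/-- The second derivative of `logKernel δ` in the direction `v`. -/
noncomputable def logKernel₂ (δ : ℝ) (v ζ : ℂ) : ℝ :=
  2 * (v.re ^ 2 + v.im ^ 2) / (ζ.re ^ 2 + ζ.im ^ 2 + δ)
    - 4 * (v.re * ζ.re + v.im * ζ.im) ^ 2 / (ζ.re ^ 2 + ζ.im ^ 2 + δ) ^ 2

/-- The convolution `∫ F(w) k(z - w) dw`. -/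
noncomputable def potential (F k : ℂ → ℝ) (z : ℂ) : ℝ := ∫ w, F w * k (z - w)

lemma hasLineDerivAt_logKernel {δ : ℝ} (hδ : 0 < δ) (v ζ : ℂ) :
    HasLineDerivAt ℝ (logKernel δ) (logKernel₁ δ v ζ) ζ v := by
  have hre : HasDerivAt (fun t : ℝ => ζ.re + t * v.re) v.re 0 := by
    simpa using ((hasDerivAt_id (0 : ℝ)).mul_const v.re).const_add ζ.re
  have him : HasDerivAt (fun t : ℝ => ζ.im + t * v.im) v.im 0 := by
    simpa using ((hasDerivAt_id (0 : ℝ)).mul_const v.im).const_add ζ.im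
  have hs := ((hre.fun_pow 2).add (him.fun_pow 2)).add_const δ
  have := hs.log (by simp; positivity)
  have h2 : (fun t : ℝ => logKernel δ (ζ + t • v)) =
      fun t : ℝ => Real.log ((ζ.re + t * v.re) ^ 2 + (ζ.im + t * v.im) ^ 2 + δ) := by
    funext t; simp [logKernel]
  unfold HasLineDerivAt
  rw [h2]
  refine this.congr_deriv ?_
  simp [logKernel₁]
  ring

lemma hasLineDerivAt_logKernel₁ {δ : ℝ} (hδ : 0 < δ) (v ζ : ℂ) :
    HasLineDerivAt ℝ (logKernel₁ δ v) (logKernel₂ δ v ζ) ζ v := by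
  have hre : HasDerivAt (fun t : ℝ => ζ.re + t * v.re) v.re 0 := by
    simpa using ((hasDerivAt_id (0 : ℝ)).mul_const v.re).const_add ζ.re
  have him : HasDerivAt (fun t : ℝ => ζ.im + t * v.im) v.im 0 := by
    simpa using ((hasDerivAt_id (0 : ℝ)).mul_const v.im).const_add ζ.im
  have hs := ((hre.fun_pow 2).add (him.fun_pow 2)).add_const δ
  have hn := ((hre.const_mul v.re).add (him.const_mul v.im)).const_mul 2
  have hne : ζ.re ^ 2 + ζ.im ^ 2 + δ ≠ 0 := by positivity
  have := hn.fun_div hs (by simpa using hne)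
  have h2 : (fun t : ℝ => logKernel₁ δ v (ζ + t • v)) =
      fun t : ℝ => 2 * (v.re * (ζ.re + t * v.re) + v.im * (ζ.im + t * v.im)) /
        ((ζ.re + t * v.re) ^ 2 + (ζ.im + t * v.im) ^ 2 + δ) := by
    funext t; simp [logKernel₁]
  unfold HasLineDerivAt
  rw [h2]
  refine this.congr_deriv ?_
  simp [logKernel₂]
  field_simp
  ring

lemma continuous_logKernel {δ : ℝ} (hδ : 0 < δ) : Continuous (logKernel δ) := by
  unfold logKernel
  refine Continuous.log (by fun_prop) fun ζ => by positivity

lemma continuous_logKernel₁ {δ : ℝ} (hδ : 0 < δ) (v : ℂ) : Continuous (logKernel₁ δ v) := by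
  unfold logKernel₁
  refine Continuous.div (by fun_prop) (by fun_prop) fun ζ => by positivity

lemma continuous_logKernel₂ {δ : ℝ} (hδ : 0 < δ) (v : ℂ) : Continuous (logKernel₂ δ v) := by
  unfold logKernel₂
  refine Continuous.sub (Continuous.div (by fun_prop) (by fun_prop) fun ζ => by positivity)
    (Continuous.div (by fun_prop) (by fun_prop) fun ζ => by positivity)

lemma exists_bound_logKernel₁ {δ : ℝ} (hδ : 0 < δ) (v : ℂ) :
    ∃ C, ∀ ζ, |logKernel₁ δ v ζ| ≤ C := by
  refine ⟨(v.re ^ 2 + v.im ^ 2) / δ + 1, fun ζ => ?_⟩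
  unfold logKernel₁
  have hs : 0 < ζ.re ^ 2 + ζ.im ^ 2 + δ := by positivity
  rw [abs_div, abs_of_pos hs, div_le_iff₀ hs]
  have h1 : ((v.re ^ 2 + v.im ^ 2) / δ + 1) * (ζ.re ^ 2 + ζ.im ^ 2 + δ) =
      (v.re ^ 2 + v.im ^ 2) / δ * (ζ.re ^ 2 + ζ.im ^ 2) + (v.re ^ 2 + v.im ^ 2)
        + (ζ.re ^ 2 + ζ.im ^ 2) + δ := by
    field_simp; ring
  rw [h1]
  have h2 : 0 ≤ (v.re ^ 2 + v.im ^ 2) / δ * (ζ.re ^ 2 + ζ.im ^ 2) := by positivity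
  rw [abs_le]
  constructor
  · nlinarith [sq_nonneg (v.re + ζ.re), sq_nonneg (v.im + ζ.im)]
  · nlinarith [sq_nonneg (v.re - ζ.re), sq_nonneg (v.im - ζ.im)]

lemma exists_bound_logKernel₂ {δ : ℝ} (hδ : 0 < δ) (v : ℂ) :
    ∃ C, ∀ ζ, |logKernel₂ δ v ζ| ≤ C := by
  refine ⟨6 * (v.re ^ 2 + v.im ^ 2) / δ, fun ζ => ?_⟩
  unfold logKernel₂
  set s := ζ.re ^ 2 + ζ.im ^ 2 + δ with hs
  have hsδ : δ ≤ s := by nlinarith [sq_nonneg ζ.re, sq_nonneg ζ.im]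
  have hspos : 0 < s := hδ.trans_le hsδ
  have h1 : |2 * (v.re ^ 2 + v.im ^ 2) / s| ≤ 2 * (v.re ^ 2 + v.im ^ 2) / δ := by
    rw [abs_of_nonneg (by positivity)]
    gcongr
  have h2 : |4 * (v.re * ζ.re + v.im * ζ.im) ^ 2 / s ^ 2| ≤ 4 * (v.re ^ 2 + v.im ^ 2) / δ := by
    rw [abs_of_nonneg (by positivity)]
    calc 4 * (v.re * ζ.re + v.im * ζ.im) ^ 2 / s ^ 2
        ≤ 4 * ((v.re ^ 2 + v.im ^ 2) * s) / s ^ 2 := by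
          gcongr
          nlinarith [sq_nonneg (v.re * ζ.im - v.im * ζ.re),
            mul_nonneg (add_nonneg (sq_nonneg v.re) (sq_nonneg v.im)) hδ.le]
      _ = 4 * (v.re ^ 2 + v.im ^ 2) / s := by field_simp
      _ ≤ _ := by gcongr
  calc _ ≤ _ := abs_sub _ _
    _ ≤ _ := add_le_add h1 h2
    _ = _ := by ring

lemma integrable_potential_of_bounded {F k : ℂ → ℝ} (hF : Integrable F) (hk : Continuous k)
    {C : ℝ} (hC : ∀ ζ, |k ζ| ≤ C) (z : ℂ) : Integrable fun w => F w * k (z - w) :=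
  hF.mul_bdd (c := C) (by fun_prop) (Filter.Eventually.of_forall fun w => hC _)

lemma continuous_potential_of_bounded {F k : ℂ → ℝ} (hF : Integrable F) (hk : Continuous k)
    {C : ℝ} (hC : ∀ ζ, |k ζ| ≤ C) : Continuous (potential F k) := by
  unfold potential
  refine continuous_of_dominated (bound := fun w => |F w| * C)
    (fun z => (integrable_potential_of_bounded hF hk hC z).aestronglyMeasurable)
    (fun z => Filter.Eventually.of_forall fun w => ?_) (hF.abs.mul_const C)
    (Filter.Eventually.of_forall fun w => by fun_prop)
  rw [norm_mul, Real.norm_eq_abs, Real.norm_eq_abs]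
  exact mul_le_mul_of_nonneg_left (hC _) (abs_nonneg _)

lemma hasLineDerivAt_potential {F k k' : ℂ → ℝ} {v : ℂ} (hF : Integrable F)
    (hk' : Continuous k') {C : ℝ} (hC : ∀ ζ, |k' ζ| ≤ C)
    (hd : ∀ ζ, HasLineDerivAt ℝ k (k' ζ) ζ v)
    (hi : ∀ z, Integrable fun w => F w * k (z - w)) (z : ℂ) :
    HasLineDerivAt ℝ (potential F k) (potential F k' z) z v := by
  unfold HasLineDerivAt potential
  have := (hasDerivAt_integral_of_dominated_loc_of_deriv_le (μ := volume) (x₀ := (0 : ℝ))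
    (s := Set.univ) (F := fun (t : ℝ) w => F w * k (z + t • v - w))
    (F' := fun t w => F w * k' (z + t • v - w)) (bound := fun w => |F w| * C) Filter.univ_mem
    (Filter.Eventually.of_forall fun t => (hi _).aestronglyMeasurable) (hi _)
    (integrable_potential_of_bounded hF hk' hC _).aestronglyMeasurable
    (Filter.Eventually.of_forall fun w t _ => ?_) (hF.abs.mul_const C)
    (Filter.Eventually.of_forall fun w t _ => ?_)).2
  · simpa using this
  · rw [norm_mul, Real.norm_eq_abs, Real.norm_eq_abs]
    exact mul_le_mul_of_nonneg_left (hC _) (abs_nonneg _)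
  · have h1 := hd (z + t • v - w)
    unfold HasLineDerivAt at h1
    have h2 : HasDerivAt (fun x : ℝ => x - t) 1 t := (hasDerivAt_id t).sub_const t
    have h3 := HasDerivAt.scomp_of_eq (x := t) (h := fun x : ℝ => x - t)
      (g₁ := fun s : ℝ => k (z + t • v - w + s • v)) (h' := 1) (g₁' := k' (z + t • v - w))
      (by simpa using h1) h2 (by simp)
    have h4 := h3.const_mul (F w)
    simp only [one_smul] at h4
    refine h4.congr_of_eventuallyEq (Filter.Eventually.of_forall fun x => ?_)
    simp only [Function.comp_def]
    congr 2
    simp only [Complex.real_smul]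
    push_cast
    ring

lemma abs_logKernel_le {δ : ℝ} (hδ : 0 < δ) (ζ : ℂ) :
    |logKernel δ ζ| ≤ |Real.log δ| + ‖ζ‖ ^ 2 / δ := by
  have hn : ‖ζ‖ ^ 2 = ζ.re ^ 2 + ζ.im ^ 2 := by
    rw [← Complex.normSq_eq_norm_sq, Complex.normSq_apply]; ring
  rw [hn]
  unfold logKernel
  have h0 : 0 ≤ ζ.re ^ 2 + ζ.im ^ 2 := by positivity
  set m := ζ.re ^ 2 + ζ.im ^ 2
  have h1 : Real.log δ ≤ Real.log (m + δ) := Real.log_le_log hδ (by linarith)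
  have h2 : Real.log (m + δ) ≤ Real.log δ + m / δ := by
    have : m + δ = δ * (m / δ + 1) := by field_simp
    rw [this, Real.log_mul hδ.ne' (by positivity)]
    have := Real.log_le_sub_one_of_pos (show 0 < m / δ + 1 by positivity)
    linarith
  have h3 : 0 ≤ m / δ := by positivity
  rw [abs_le]
  constructor
  · linarith [neg_abs_le (Real.log δ)]
  · linarith [le_abs_self (Real.log δ)]

lemma logKernel_potential_bound {F : ℂ → ℝ} {z₀ : ℂ} {R : ℝ}
    (hFs : ∀ w ∉ Metric.ball z₀ R, F w = 0) {δ : ℝ} (hδ : 0 < δ) (z' : ℂ) {z : ℂ}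
    (hz : z ∈ Metric.ball z' 1) (w : ℂ) :
    ‖F w * logKernel δ (z - w)‖ ≤
      |F w| * (|Real.log δ| + (1 + ‖z' - z₀‖ + R) ^ 2 / δ) := by
  by_cases hw : w ∈ Metric.ball z₀ R
  · rw [norm_mul, Real.norm_eq_abs, Real.norm_eq_abs]
    have hzw : ‖z - w‖ ≤ 1 + ‖z' - z₀‖ + R := by
      have e : z - w = (z - z') + (z' - z₀) - (w - z₀) := by ring
      rw [e]
      have h1 : ‖z - z'‖ < 1 := by simpa [dist_eq_norm] using hz
      have h2 : ‖w - z₀‖ < R := by simpa [dist_eq_norm] using hw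
      have h3 := norm_sub_le ((z - z') + (z' - z₀)) (w - z₀)
      have h4 := norm_add_le (z - z') (z' - z₀)
      linarith
    refine mul_le_mul_of_nonneg_left ((abs_logKernel_le hδ _).trans ?_) (abs_nonneg _)
    gcongr
  · simp [hFs w hw]

lemma integrable_logKernel_potential {F : ℂ → ℝ} (hF : Integrable F) {z₀ : ℂ} {R : ℝ}
    (hFs : ∀ w ∉ Metric.ball z₀ R, F w = 0) {δ : ℝ} (hδ : 0 < δ) (z : ℂ) :
    Integrable fun w => F w * logKernel δ (z - w) := by
  have hc := continuous_logKernel hδ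
  exact (hF.abs.mul_const _).mono' (hF.aestronglyMeasurable.mul (by fun_prop))
    (Filter.Eventually.of_forall fun w =>
      logKernel_potential_bound hFs hδ z (Metric.mem_ball_self one_pos) w)

lemma continuous_logKernel_potential {F : ℂ → ℝ} (hF : Integrable F) {z₀ : ℂ} {R : ℝ}
    (hFs : ∀ w ∉ Metric.ball z₀ R, F w = 0) {δ : ℝ} (hδ : 0 < δ) :
    Continuous (potential F (logKernel δ)) := by
  have hc := continuous_logKernel hδ
  refine continuous_iff_continuousAt.2 fun z₁ => ?_
  unfold potential
  refine continuousAt_of_dominated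
    (Filter.Eventually.of_forall fun z =>
      (integrable_logKernel_potential hF hFs hδ z).aestronglyMeasurable)
    ?_ (hF.abs.mul_const (|Real.log δ| + (1 + ‖z₁ - z₀‖ + R) ^ 2 / δ))
    (Filter.Eventually.of_forall fun w => by fun_prop)
  filter_upwards [Metric.ball_mem_nhds z₁ one_pos] with z hz
  exact Filter.Eventually.of_forall fun w => logKernel_potential_bound hFs hδ z₁ hz w

/-- The Carleman inequality for the weight generated by a regularised logarithmic potential. -/
lemma carleman_logKernel {F : ℂ → ℝ} (hF : Integrable F) {z₀ : ℂ} {R : ℝ}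
    (hFs : ∀ w ∉ Metric.ball z₀ R, F w = 0) {δ : ℝ} (hδ : 0 < δ)
    {h : ℂ → ℂ} (hh : ContDiff ℝ (⊤ : ℕ∞) h) (hs : HasCompactSupport h) :
    ∫ z, (potential F (logKernel₂ δ 1) z + potential F (logKernel₂ δ Complex.I) z) * ‖h z‖ ^ 2
        * Real.exp (potential F (logKernel δ) z) ≤
      ∫ z, ‖2 * wirtingerDBar h z‖ ^ 2 * Real.exp (potential F (logKernel δ) z) := by
  have c1 := fun v => continuous_logKernel₁ hδ v
  have c2 := fun v => continuous_logKernel₂ hδ v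
  choose C1 hC1 using fun v => exists_bound_logKernel₁ hδ v
  choose C2 hC2 using fun v => exists_bound_logKernel₂ hδ v
  have d1 := fun v z => hasLineDerivAt_potential hF (c1 v) (hC1 v)
    (hasLineDerivAt_logKernel hδ v) (integrable_logKernel_potential hF hFs hδ) z
  have d2 := fun v z => hasLineDerivAt_potential hF (c2 v) (hC2 v)
    (hasLineDerivAt_logKernel₁ hδ v) (integrable_potential_of_bounded hF (c1 v) (hC1 v)) z
  exact carleman_smooth (continuous_logKernel_potential hF hFs hδ)
    (continuous_potential_of_bounded hF (c1 1) (hC1 1))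
    (continuous_potential_of_bounded hF (c1 Complex.I) (hC1 Complex.I))
    (continuous_potential_of_bounded hF (c2 1) (hC2 1))
    (continuous_potential_of_bounded hF (c2 Complex.I) (hC2 Complex.I))
    (d1 1) (d1 Complex.I) (d2 1) (d2 Complex.I) hh hs

/-- The Laplacian of the regularised potential dominates the mean of `F` over a small disc. -/
lemma average_le_laplacian_potential {F : ℂ → ℝ} (hF0 : ∀ w, 0 ≤ F w) (hF : Integrable F)
    {r : ℝ} (hr : 0 < r) (z : ℂ) :
    Real.pi * (⨍ w in Metric.closedBall z r, F w) ≤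
      potential F (logKernel₂ (r ^ 2) 1) z + potential F (logKernel₂ (r ^ 2) Complex.I) z := by
  have hδ : 0 < r ^ 2 := by positivity
  obtain ⟨C1, hC1⟩ := exists_bound_logKernel₂ hδ 1
  obtain ⟨CI, hCI⟩ := exists_bound_logKernel₂ hδ Complex.I
  have j1 := integrable_potential_of_bounded hF (continuous_logKernel₂ hδ 1) hC1 z
  have jI := integrable_potential_of_bounded hF (continuous_logKernel₂ hδ Complex.I) hCI z
  unfold potential
  rw [← integral_add j1 jI]
  have hvol : volume.real (Metric.closedBall z r) = Real.pi * r ^ 2 := by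
    simp [Measure.real, Complex.volume_closedBall, hr.le, mul_comm]
  rw [setAverage_eq, hvol, smul_eq_mul, ← mul_assoc]
  have e : Real.pi * (Real.pi * r ^ 2)⁻¹ = (r ^ 2)⁻¹ := by
    have := Real.pi_ne_zero
    field_simp
  rw [e, ← integral_const_mul, ← integral_indicator measurableSet_closedBall]
  refine integral_mono ((hF.const_mul _).indicator measurableSet_closedBall) (j1.add jI) fun w => ?_
  have hsum : F w * logKernel₂ (r ^ 2) 1 (z - w) + F w * logKernel₂ (r ^ 2) Complex.I (z - w) =
      F w * (4 * r ^ 2 / ((z - w).re ^ 2 + (z - w).im ^ 2 + r ^ 2) ^ 2) := by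
    unfold logKernel₂
    have : (z - w).re ^ 2 + (z - w).im ^ 2 + r ^ 2 ≠ 0 := by positivity
    simp only [Complex.one_re, Complex.one_im, Complex.I_re, Complex.I_im]
    field_simp
    ring
  simp only
  rw [hsum]
  by_cases hw : w ∈ Metric.closedBall z r
  · rw [Set.indicator_of_mem hw, mul_comm]
    refine mul_le_mul_of_nonneg_left ?_ (hF0 w)
    have hn : (z - w).re ^ 2 + (z - w).im ^ 2 ≤ r ^ 2 := by
      have h1 : ‖z - w‖ ≤ r := by simpa [dist_eq_norm, norm_sub_rev] using hw
      have h2 : ‖z - w‖ ^ 2 = (z - w).re ^ 2 + (z - w).im ^ 2 := by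
        rw [← Complex.normSq_eq_norm_sq, Complex.normSq_apply]; ring
      rw [← h2]; gcongr
    have hpos : 0 < (z - w).re ^ 2 + (z - w).im ^ 2 + r ^ 2 := by positivity
    rw [inv_eq_one_div, div_le_div_iff₀ hδ (by positivity)]
    calc 1 * ((z - w).re ^ 2 + (z - w).im ^ 2 + r ^ 2) ^ 2 ≤ 1 * (r ^ 2 + r ^ 2) ^ 2 := by gcongr
      _ = 4 * r ^ 2 * r ^ 2 := by ring
  · rw [Set.indicator_of_notMem hw]
    exact mul_nonneg (hF0 w) (by positivity)

/-! ### Carleman inequality with an integrable potential -/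

lemma integrable_indicator_logKernel_zero :
    Integrable ((Metric.ball (0 : ℂ) 1).indicator (logKernel 0)) := by
  have h : (Metric.ball (0 : ℂ) 1).indicator (logKernel 0) =
      fun ζ : ℂ => (Set.Iio (1 : ℝ)).indicator (fun y => 2 * Real.log y) ‖ζ‖ := by
    funext ζ
    have hn : ζ.re ^ 2 + ζ.im ^ 2 + 0 = ‖ζ‖ ^ 2 := by
      rw [← Complex.normSq_eq_norm_sq, Complex.normSq_apply]; ring
    by_cases hζ : ‖ζ‖ < 1
    · rw [Set.indicator_of_mem (by simpa using hζ), Set.indicator_of_mem (by simpa using hζ),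
        logKernel, hn, Real.log_pow]
      norm_num
    · rw [Set.indicator_of_notMem (by simpa using hζ),
        Set.indicator_of_notMem (by simpa using hζ)]
  rw [h, integrable_fun_norm_addHaar volume (f := (Set.Iio (1 : ℝ)).indicator fun y => 2 * Real.log y)]
  have h2 : (fun y : ℝ => y ^ (Module.finrank ℝ ℂ - 1) •
      (Set.Iio (1 : ℝ)).indicator (fun y => 2 * Real.log y) y) =
      (Set.Iio (1 : ℝ)).indicator fun y => 2 * (y * Real.log y) := by
    funext y
    by_cases hy : y ∈ Set.Iio (1 : ℝ)
    · rw [Set.indicator_of_mem hy, Set.indicator_of_mem hy, Complex.finrank_real_complex]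
      simp; ring
    · rw [Set.indicator_of_notMem hy, Set.indicator_of_notMem hy]; simp
  rw [h2, integrableOn_indicator_iff measurableSet_Iio]
  have h3 : IntegrableOn (fun y : ℝ => 2 * (y * Real.log y)) (Set.Icc 0 1) :=
    (Continuous.const_mul Real.continuous_mul_log 2).integrableOn_Icc
  exact h3.mono_set fun y hy => ⟨le_of_lt hy.2, le_of_lt hy.1⟩

lemma sq_norm_sub_lt {z₀ z w : ℂ} {R : ℝ} (hR : R ≤ 1 / 4) (hz : z ∈ Metric.ball z₀ R)
    (hw : w ∈ Metric.ball z₀ R) : (z - w).re ^ 2 + (z - w).im ^ 2 < 1 / 4 := by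
  have h1 : dist z z₀ < R := hz
  have h2 : dist w z₀ < R := hw
  have h3 : ‖z - w‖ < 1 / 2 := by
    rw [← dist_eq_norm]
    have := dist_triangle_right z w z₀
    linarith
  have h4 : ‖z - w‖ ^ 2 = (z - w).re ^ 2 + (z - w).im ^ 2 := by
    rw [← Complex.normSq_eq_norm_sq, Complex.normSq_apply]; ring
  rw [← h4]
  nlinarith [norm_nonneg (z - w)]

/-- The kernel is nonpositive at the relevant scales, so the potential is too. -/
lemma potential_logKernel_nonpos {F : ℂ → ℝ} (hF0 : ∀ w, 0 ≤ F w) {z₀ : ℂ} {R : ℝ}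
    (hR : R ≤ 1 / 4) (hFs : ∀ w ∉ Metric.ball z₀ R, F w = 0) {δ : ℝ} (hδ0 : 0 ≤ δ)
    (hδ : δ ≤ 1 / 4) {z : ℂ} (hz : z ∈ Metric.ball z₀ R) :
    potential F (logKernel δ) z ≤ 0 := by
  refine integral_nonpos fun w => ?_
  by_cases hw : w ∈ Metric.ball z₀ R
  · have := sq_norm_sub_lt hR hz hw
    exact mul_nonpos_of_nonneg_of_nonpos (hF0 w)
      (Real.log_nonpos (by positivity) (by linarith))
  · simp [hFs w hw]

open Filter Topology in
/-- The regularised potentials converge almost everywhere to the logarithmic potential. -/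
lemma ae_tendsto_potential {F : ℂ → ℝ} (hF : Integrable F) {z₀ : ℂ} {R : ℝ}
    (hR : R ≤ 1 / 4) (hFs : ∀ w ∉ Metric.ball z₀ R, F w = 0) {r : ℕ → ℝ}
    (hr0 : ∀ n, 0 < r n) (hr1 : ∀ n, r n ≤ 1 / 2) (hr : Tendsto r atTop (𝓝 0)) :
    ∀ᵐ z, z ∈ Metric.ball z₀ R →
      Tendsto (fun n => potential F (logKernel (r n ^ 2)) z) atTop
        (𝓝 (potential F (logKernel 0) z)) := by
  have hae := hF.ae_convolution_exists (ContinuousLinearMap.mul ℝ ℝ)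
    integrable_indicator_logKernel_zero
  filter_upwards [hae] with z hz hzb
  have h_int : Integrable fun w => F w * logKernel 0 (z - w) := by
    have hz' : Integrable (fun w => F w *
        (Metric.ball (0 : ℂ) 1).indicator (logKernel 0) (z - w)) volume := by
      simpa only [ConvolutionExistsAt, ContinuousLinearMap.mul_apply'] using hz
    refine hz'.congr (Eventually.of_forall fun w => ?_)
    by_cases hw : w ∈ Metric.ball z₀ R
    · simp only
      rw [Set.indicator_of_mem]
      have h1 : dist z z₀ < R := hzb
      have h2 : dist w z₀ < R := hw
      have := dist_triangle_right z w z₀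
      rw [mem_ball_zero_iff, ← dist_eq_norm]
      linarith
    · simp [hFs w hw]
  have hne : ∀ᵐ w : ℂ, w ≠ z := by
    rw [ae_iff]; simp
  refine tendsto_integral_of_dominated_convergence (fun w => ‖F w * logKernel 0 (z - w)‖)
    (fun n => (integrable_logKernel_potential hF hFs (pow_pos (hr0 n) 2) z).aestronglyMeasurable)
    h_int.norm (fun n => ?_) ?_
  · filter_upwards [hne] with w hw
    by_cases hwb : w ∈ Metric.ball z₀ R
    · rw [norm_mul, norm_mul]
      refine mul_le_mul_of_nonneg_left ?_ (norm_nonneg _)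
      have hlt := sq_norm_sub_lt hR hzb hwb
      have hpos : 0 < (z - w).re ^ 2 + (z - w).im ^ 2 := by
        have h4 : ‖z - w‖ ^ 2 = (z - w).re ^ 2 + (z - w).im ^ 2 := by
          rw [← Complex.normSq_eq_norm_sq, Complex.normSq_apply]; ring
        rw [← h4]
        have : 0 < ‖z - w‖ := norm_pos_iff.2 (sub_ne_zero.2 hw.symm)
        positivity
      have hrn : r n ^ 2 ≤ 1 / 4 := by nlinarith [hr0 n, hr1 n]
      have hrn0 : 0 ≤ r n ^ 2 := sq_nonneg _
      unfold logKernel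
      rw [add_zero, Real.norm_eq_abs, Real.norm_eq_abs,
        abs_of_nonpos (Real.log_nonpos (by positivity) (by linarith)),
        abs_of_nonpos (Real.log_nonpos (by positivity) (by linarith))]
      exact neg_le_neg (Real.log_le_log hpos (by linarith))
    · simp [hFs w hwb]
  · filter_upwards [hne] with w hw
    refine Tendsto.const_mul _ ?_
    unfold logKernel
    have hne' : (z - w).re ^ 2 + (z - w).im ^ 2 + 0 ≠ 0 := by
      have h4 : ‖z - w‖ ^ 2 = (z - w).re ^ 2 + (z - w).im ^ 2 + 0 := by
        rw [← Complex.normSq_eq_norm_sq, Complex.normSq_apply]; ring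
      rw [← h4]
      have : 0 < ‖z - w‖ := norm_pos_iff.2 (sub_ne_zero.2 hw.symm)
      positivity
    refine Tendsto.log ?_ hne'
    have := hr.pow 2
    simp only [ne_eq, OfNat.ofNat_ne_zero, not_false_eq_true, zero_pow] at this
    exact tendsto_const_nhds.add this

open Filter Topology in
/-- **Carleman inequality for an integrable potential.** The weight `E = e ^ ψ`, with `ψ` the
logarithmic potential of `F`, satisfies `π ∫ F |h|² E ≤ ∫ |2 ∂̄h|² E` for all test functions `h`. -/
lemma exists_carleman_weight {F : ℂ → ℝ} (hF0 : ∀ w, 0 ≤ F w) (hF : Integrable F) {z₀ : ℂ} {R : ℝ}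
    (hR : R ≤ 1 / 4) (hFs : ∀ w ∉ Metric.ball z₀ R, F w = 0) :
    ∃ E : ℂ → ℝ, (∀ z, 0 < E z) ∧ (∀ z ∈ Metric.ball z₀ R, E z ≤ 1) ∧
      AEMeasurable E (volume.restrict (Metric.ball z₀ R)) ∧
      ∀ h : ℂ → ℂ, ContDiff ℝ (⊤ : ℕ∞) h → tsupport h ⊆ Metric.ball z₀ R →
        ∫⁻ z in Metric.ball z₀ R, ENNReal.ofReal (Real.pi * F z * ‖h z‖ ^ 2 * E z) ≤
          ∫⁻ z in Metric.ball z₀ R, ENNReal.ofReal (‖2 * wirtingerDBar h z‖ ^ 2 * E z) := by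
  set r : ℕ → ℝ := fun n => 1 / ((n : ℝ) + 2) with hrdef
  have hr0 : ∀ n, 0 < r n := fun n => by simp only [hrdef]; positivity
  have hr1 : ∀ n, r n ≤ 1 / 2 := fun n => by
    simp only [hrdef]
    gcongr
    have : (0 : ℝ) ≤ n := n.cast_nonneg
    linarith
  have hr : Tendsto r atTop (𝓝 0) := by
    have := (tendsto_const_div_atTop_nhds_zero_nat (1 : ℝ)).comp (tendsto_add_atTop_nat 2)
    refine this.congr fun n => ?_
    simp [hrdef]
  have hr' : Tendsto r atTop (𝓝[>] 0) :=
    tendsto_nhdsWithin_iff.2 ⟨hr, Eventually.of_forall hr0⟩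
  have hδ : ∀ n, 0 < r n ^ 2 := fun n => pow_pos (hr0 n) 2
  have hδ4 : ∀ n, r n ^ 2 ≤ 1 / 4 := fun n => by nlinarith [hr0 n, hr1 n]
  set E : ℂ → ℝ := fun z => Real.exp (potential F (logKernel 0) z)
  set En : ℕ → ℂ → ℝ := fun n z => Real.exp (potential F (logKernel (r n ^ 2)) z)
  have cEn : ∀ n, Continuous (En n) := fun n =>
    Real.continuous_exp.comp (continuous_logKernel_potential hF hFs (hδ n))
  have hlim : ∀ᵐ z ∂volume.restrict (Metric.ball z₀ R),
      Tendsto (fun n => En n z) atTop (𝓝 (E z)) := by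
    rw [ae_restrict_iff' measurableSet_ball]
    filter_upwards [ae_tendsto_potential hF hR hFs hr0 hr1 hr] with z hz hzb
    exact (Real.continuous_exp.tendsto _).comp (hz hzb)
  refine ⟨E, fun z => Real.exp_pos _, fun z hz => ?_, ?_, ?_⟩
  · exact Real.exp_le_one_iff.2 (potential_logKernel_nonpos hF0 hR hFs le_rfl (by norm_num) hz)
  · exact aemeasurable_of_tendsto_metrizable_ae' (fun n => (cEn n).aemeasurable) hlim
  intro h hh hsupp
  have hs : HasCompactSupport h :=
    HasCompactSupport.of_support_subset_isCompact (isCompact_closedBall z₀ R)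
      ((subset_tsupport h).trans (hsupp.trans Metric.ball_subset_closedBall))
  have ch := hh.continuous
  have cT : Continuous fun z => 2 * wirtingerDBar h z := by
    have h1 := (contDiff_fderiv_apply hh 1).continuous
    have h2 := (contDiff_fderiv_apply hh Complex.I).continuous
    unfold wirtingerDBar
    fun_prop
  have zh : ∀ z ∉ Metric.ball z₀ R, h z = 0 := fun z hz =>
    image_eq_zero_of_notMem_tsupport fun hz' => hz (hsupp hz')
  have zT : ∀ z ∉ tsupport h, 2 * wirtingerDBar h z = 0 := fun z hz => by
    simp [wirtingerDBar, fderiv_of_notMem_tsupport ℝ hz]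
  set La : ℕ → ℂ → ℝ := fun n z =>
    potential F (logKernel₂ (r n ^ 2) 1) z + potential F (logKernel₂ (r n ^ 2) Complex.I) z
  have cLa : ∀ n, Continuous (La n) := fun n => by
    obtain ⟨C1, hC1⟩ := exists_bound_logKernel₂ (hδ n) 1
    obtain ⟨C2, hC2⟩ := exists_bound_logKernel₂ (hδ n) Complex.I
    exact (continuous_potential_of_bounded hF (continuous_logKernel₂ (hδ n) 1) hC1).add
      (continuous_potential_of_bounded hF (continuous_logKernel₂ (hδ n) Complex.I) hC2)
  have hLa : ∀ n z, Real.pi * (⨍ w in Metric.closedBall z (r n), F w) ≤ La n z := fun n z =>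
    average_le_laplacian_potential hF0 hF (hr0 n) z
  have hav0 : ∀ n z, 0 ≤ ⨍ w in Metric.closedBall z (r n), F w := fun n z => by
    rw [setAverage_eq]
    exact smul_nonneg (by positivity) (integral_nonneg fun w => hF0 w)
  have hLa0 : ∀ n z, 0 ≤ La n z := fun n z =>
    (mul_nonneg Real.pi_pos.le (hav0 n z)).trans (hLa n z)
  have hn : ∀ n, ∫⁻ z in Metric.ball z₀ R, ENNReal.ofReal (La n z * ‖h z‖ ^ 2 * En n z) ≤
      ∫⁻ z in Metric.ball z₀ R, ENNReal.ofReal (‖2 * wirtingerDBar h z‖ ^ 2 * En n z) := by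
    intro n
    have hreal := carleman_logKernel hF hFs (hδ n) hh hs
    have cE := cEn n
    have cL := cLa n
    have i1 : Integrable fun z => La n z * ‖h z‖ ^ 2 * En n z :=
      Continuous.integrable_of_hasCompactSupport (by fun_prop)
        (HasCompactSupport.intro hs fun z hz => by
          simp [image_eq_zero_of_notMem_tsupport hz])
    have i2 : Integrable fun z => ‖2 * wirtingerDBar h z‖ ^ 2 * En n z :=
      Continuous.integrable_of_hasCompactSupport (by fun_prop)
        (HasCompactSupport.intro hs fun z hz => by simp only [zT z hz]; simp)
    have o1 : ∀ (G : ℂ → ℝ), (∀ z ∉ Metric.ball z₀ R, G z = 0) →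
        ∫⁻ z in Metric.ball z₀ R, ENNReal.ofReal (G z) = ∫⁻ z, ENNReal.ofReal (G z) := by
      intro G hG
      refine setLIntegral_eq_of_support_subset fun z hz => ?_
      by_contra hzb
      simp [hG z hzb] at hz
    rw [o1 _ fun z hz => by simp [zh z hz], o1 _ fun z hz => by
      rw [zT z fun hz' => hz (hsupp hz')]; simp]
    rw [← ofReal_integral_eq_lintegral_ofReal i1 (Eventually.of_forall fun z =>
        mul_nonneg (mul_nonneg (hLa0 n z) (sq_nonneg _)) (Real.exp_pos _).le),
      ← ofReal_integral_eq_lintegral_ofReal i2 (Eventually.of_forall fun z =>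
        mul_nonneg (sq_nonneg _) (Real.exp_pos _).le)]
    exact ENNReal.ofReal_le_ofReal hreal
  have hright : Tendsto (fun n => ∫⁻ z in Metric.ball z₀ R,
        ENNReal.ofReal (‖2 * wirtingerDBar h z‖ ^ 2 * En n z)) atTop
      (𝓝 (∫⁻ z in Metric.ball z₀ R, ENNReal.ofReal (‖2 * wirtingerDBar h z‖ ^ 2 * E z))) := by
    refine tendsto_lintegral_of_dominated_convergence'
      (fun z => ENNReal.ofReal (‖2 * wirtingerDBar h z‖ ^ 2)) (fun n => ?_) (fun n => ?_) ?_ ?_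
    · have cE := cEn n
      exact (ENNReal.continuous_ofReal.comp (by fun_prop : Continuous fun z =>
        ‖2 * wirtingerDBar h z‖ ^ 2 * En n z)).aemeasurable
    · filter_upwards [ae_restrict_mem measurableSet_ball] with z hz
      refine ENNReal.ofReal_le_ofReal (mul_le_of_le_one_right (sq_nonneg _) ?_)
      exact Real.exp_le_one_iff.2
        (potential_logKernel_nonpos hF0 hR hFs (hδ n).le (hδ4 n) hz)
    · have i2 : Integrable fun z => ‖2 * wirtingerDBar h z‖ ^ 2 :=
        Continuous.integrable_of_hasCompactSupport (by fun_prop)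
          (HasCompactSupport.intro hs fun z hz => by simp only [zT z hz]; simp)
      exact (i2.integrableOn.lintegral_lt_top).ne
    · filter_upwards [hlim] with z hz
      exact ENNReal.tendsto_ofReal (hz.const_mul _)
  -- Fatou's lemma on the left, where the means converge by Lebesgue differentiation
  have hleft : ∫⁻ z in Metric.ball z₀ R, ENNReal.ofReal (Real.pi * F z * ‖h z‖ ^ 2 * E z) ≤
      liminf (fun n => ∫⁻ z in Metric.ball z₀ R,
        ENNReal.ofReal (La n z * ‖h z‖ ^ 2 * En n z)) atTop := by
    refine le_trans (lintegral_mono_ae ?_) (lintegral_liminf_le fun n => ?_)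
    · have hleb := ae_restrict_of_ae (s := Metric.ball z₀ R)
        (IsUnifLocDoublingMeasure.ae_tendsto_average (μ := volume) hF.locallyIntegrable 1)
      filter_upwards [hlim, hleb] with z hz hzl
      have hav := hzl (fun _ : ℕ => z) r hr' (Eventually.of_forall fun n =>
        Metric.mem_closedBall_self (by linarith [hr0 n]))
      have ht := ENNReal.tendsto_ofReal (((hav.const_mul Real.pi).mul_const (‖h z‖ ^ 2)).mul hz)
      rw [← ht.liminf_eq]
      refine liminf_le_liminf (Eventually.of_forall fun n => ?_)
      refine ENNReal.ofReal_le_ofReal ?_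
      have := hLa n z
      have hE : 0 ≤ En n z := (Real.exp_pos _).le
      gcongr
    · have cE := cEn n
      have cL := cLa n
      exact (ENNReal.continuous_ofReal.comp (by fun_prop : Continuous fun z =>
        La n z * ‖h z‖ ^ 2 * En n z)).measurable
  rw [← hright.liminf_eq]
  exact hleft.trans (liminf_le_liminf (Eventually.of_forall hn))

/-! ### Strong unique continuation -/

lemma wirtingerDBar_mul {f g : ℂ → ℂ} {z : ℂ} (hf : DifferentiableAt ℝ f z)
    (hg : DifferentiableAt ℝ g z) :
    wirtingerDBar (fun z => f z * g z) z = wirtingerDBar f z * g z + f z * wirtingerDBar g z := by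
  unfold wirtingerDBar
  rw [fderiv_fun_mul hf hg]
  simp only [_root_.add_apply, _root_.smul_apply, smul_eq_mul]
  ring

lemma continuous_wirtingerDBar {f : ℂ → ℂ} (hf : ContDiff ℝ (⊤ : ℕ∞) f) :
    Continuous (wirtingerDBar f) := by
  have h1 := (contDiff_fderiv_apply hf 1).continuous
  have h2 := (contDiff_fderiv_apply hf Complex.I).continuous
  unfold wirtingerDBar
  fun_prop

lemma wirtingerDBar_congr {f g : ℂ → ℂ} {z : ℂ} (h : f =ᶠ[nhds z] g) :
    wirtingerDBar f z = wirtingerDBar g z := by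
  unfold wirtingerDBar
  rw [h.fderiv_eq]

lemma wirtingerDBar_of_eventually_const {f : ℂ → ℂ} {z c : ℂ} (h : f =ᶠ[nhds z] fun _ => c) :
    wirtingerDBar f z = 0 := by
  rw [wirtingerDBar_congr h]
  exact wirtingerDBar_eq_zero (differentiableAt_const c)

/-- At almost every zero of a smooth function the derivative vanishes. -/
lemma ae_wirtingerDBar_eq_zero {f : ℂ → ℂ} (hf : ContDiff ℝ (⊤ : ℕ∞) f) :
    ∀ᵐ z, f z = 0 → wirtingerDBar f z = 0 := by
  have hm : MeasurableSet (f ⁻¹' {0}) := (isClosed_singleton.preimage hf.continuous).measurableSet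
  have happ : ApproximatesLinearOn f (0 : ℂ →L[ℝ] ℂ) (f ⁻¹' {0}) 0 := by
    intro x hx y hy
    have hx' : f x = 0 := hx
    have hy' : f y = 0 := hy
    simp [hx', hy']
  have := happ.norm_fderiv_sub_le volume hm (fderiv ℝ f) fun x _ =>
    (hf.differentiable (by simp) x).hasFDerivAt.hasFDerivWithinAt
  rw [ae_restrict_iff' hm] at this
  filter_upwards [this] with z hz h0
  have h1 : fderiv ℝ f z = 0 := by
    have := hz h0
    rw [sub_zero] at this
    exact nnnorm_eq_zero.1 (le_antisymm this bot_le)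
  simp [wirtingerDBar, h1]

/-- The Carleman inequality applied to `ρ f (a / (z - z₀)) ^ k`. The term containing `∂̄f` is
absorbed by the potential `F = 8 |∂̄f|² / |f|² + 1`. -/
lemma carleman_absorb {f : ℂ → ℂ} (hf : ContDiff ℝ (⊤ : ℕ∞) f) {z₀ : ℂ} {R : ℝ}
    (hV : ∫⁻ z in Metric.ball z₀ R,
      ENNReal.ofReal (‖wirtingerDBar f z‖ ^ 2 / ‖f z‖ ^ 2) < ⊤)
    {E : ℂ → ℝ} (hE0 : ∀ z, 0 < E z) (hE1 : ∀ z ∈ Metric.ball z₀ R, E z ≤ 1)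
    (hEm : AEMeasurable E (volume.restrict (Metric.ball z₀ R)))
    (hcar : ∀ h : ℂ → ℂ, ContDiff ℝ (⊤ : ℕ∞) h → tsupport h ⊆ Metric.ball z₀ R →
        ∫⁻ z in Metric.ball z₀ R, ENNReal.ofReal (Real.pi *
          (8 * (‖wirtingerDBar f z‖ ^ 2 / ‖f z‖ ^ 2) + 1) * ‖h z‖ ^ 2 * E z) ≤
          ∫⁻ z in Metric.ball z₀ R, ENNReal.ofReal (‖2 * wirtingerDBar h z‖ ^ 2 * E z))
    {ρ : ℂ → ℂ} (hρ : ContDiff ℝ (⊤ : ℕ∞) ρ) (hρs : tsupport ρ ⊆ Metric.ball z₀ R)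
    (hρ0 : ρ =ᶠ[nhds z₀] fun _ => 0) (a : ℂ) (k : ℕ) :
    ∫⁻ z in Metric.ball z₀ R, ENNReal.ofReal (‖ρ z * f z * (a / (z - z₀)) ^ k‖ ^ 2 * E z) ≤
      ∫⁻ z in Metric.ball z₀ R, ENNReal.ofReal
        (8 * ‖f z * wirtingerDBar ρ z * (a / (z - z₀)) ^ k‖ ^ 2 * E z) := by
  set Q : ℂ → ℂ := fun z => (a / (z - z₀)) ^ k with hQ
  set V : ℂ → ℝ := fun z => ‖wirtingerDBar f z‖ ^ 2 / ‖f z‖ ^ 2 with hVdef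
  set h : ℂ → ℂ := fun z => ρ z * f z * Q z with hh
  have hQd : ∀ z, z ≠ z₀ → DifferentiableAt ℂ Q z := fun z hz => by
    have : z - z₀ ≠ 0 := sub_ne_zero.2 hz
    simp only [hQ]
    fun_prop (disch := assumption)
  have hQs : ∀ z, z ≠ z₀ → ContDiffAt ℝ (⊤ : ℕ∞) Q z := fun z hz => by
    have : z - z₀ ≠ 0 := sub_ne_zero.2 hz
    simp only [hQ]
    have h1 : ContDiffAt ℂ (⊤ : ℕ∞) (fun z => (a / (z - z₀)) ^ k) z := by
      fun_prop (disch := assumption)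
    exact h1.restrict_scalars ℝ
  have hh0 : h =ᶠ[nhds z₀] fun _ => 0 := by
    filter_upwards [hρ0] with z hz
    simp [hh, hz]
  have hsm : ContDiff ℝ (⊤ : ℕ∞) h := by
    rw [contDiff_iff_contDiffAt]
    intro z
    by_cases hz : z = z₀
    · subst hz
      exact contDiffAt_const.congr_of_eventuallyEq hh0
    · exact (hρ.contDiffAt.mul hf.contDiffAt).mul (hQs z hz)
  have hsupp : tsupport h ⊆ tsupport ρ := by
    refine closure_mono fun z hz => ?_
    contrapose! hz
    simp only [Function.mem_support, not_not] at hz ⊢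
    simp [hh, hz]
  have hdh : ∀ z, wirtingerDBar h z =
      ρ z * wirtingerDBar f z * Q z + f z * wirtingerDBar ρ z * Q z := by
    intro z
    by_cases hz : z = z₀
    · subst hz
      rw [wirtingerDBar_of_eventually_const hh0, wirtingerDBar_of_eventually_const hρ0,
        hρ0.self_of_nhds]
      ring
    · have dρ := hρ.differentiable (by simp) z
      have df := hf.differentiable (by simp) z
      simp only [hh]
      rw [wirtingerDBar_mul (f := fun z => ρ z * f z) (dρ.mul df)
        ((hQs z hz).differentiableAt (by simp)), wirtingerDBar_mul dρ df,
        wirtingerDBar_eq_zero (hQd z hz)]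
      ring
  have hhs : HasCompactSupport h :=
    HasCompactSupport.of_support_subset_isCompact (isCompact_closedBall z₀ R)
      ((subset_tsupport h).trans (hsupp.trans (hρs.trans Metric.ball_subset_closedBall)))
  obtain ⟨M, hM⟩ := hsm.continuous.bounded_above_of_compact_support hhs
  have hfin : ∫⁻ z in Metric.ball z₀ R, ENNReal.ofReal (8 * V z * ‖h z‖ ^ 2 * E z) ≠ ⊤ := by
    have hle : ∫⁻ z in Metric.ball z₀ R, ENNReal.ofReal (8 * V z * ‖h z‖ ^ 2 * E z) ≤
        ENNReal.ofReal (8 * M ^ 2) * ∫⁻ z in Metric.ball z₀ R, ENNReal.ofReal (V z) := by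
      rw [← lintegral_const_mul' _ _ ENNReal.ofReal_ne_top]
      refine lintegral_mono_ae ?_
      filter_upwards [ae_restrict_mem measurableSet_ball] with z hz
      rw [← ENNReal.ofReal_mul (by positivity)]
      refine ENNReal.ofReal_le_ofReal ?_
      have hV0 : 0 ≤ V z := by simp only [hVdef]; positivity
      have hE := (hE0 z).le
      have h1 : ‖h z‖ ^ 2 ≤ M ^ 2 := by
        gcongr; exact hM z
      calc 8 * V z * ‖h z‖ ^ 2 * E z ≤ 8 * V z * M ^ 2 * 1 :=
            mul_le_mul (by gcongr) (hE1 z hz) hE (by positivity)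
        _ = _ := by ring
    exact ne_top_of_le_ne_top (ENNReal.mul_ne_top ENNReal.ofReal_ne_top hV.ne) hle
  have hmeas : AEMeasurable (fun z => ENNReal.ofReal (‖h z‖ ^ 2 * E z))
      (volume.restrict (Metric.ball z₀ R)) :=
    (AEMeasurable.mul (by
      have := hsm.continuous
      exact (by fun_prop : Continuous fun z => ‖h z‖ ^ 2).aemeasurable) hEm).ennreal_ofReal
  have hmeasV : AEMeasurable (fun z => ENNReal.ofReal (8 * V z * ‖h z‖ ^ 2 * E z))
      (volume.restrict (Metric.ball z₀ R)) := by
    refine (AEMeasurable.mul (Measurable.aemeasurable ?_) hEm).ennreal_ofReal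
    have m1 := (continuous_wirtingerDBar hf).measurable
    have m2 := hf.continuous.measurable
    have m3 := hsm.continuous.measurable
    simp only [hVdef]
    fun_prop
  have hchain : (∫⁻ z in Metric.ball z₀ R, ENNReal.ofReal (8 * V z * ‖h z‖ ^ 2 * E z)) +
      ∫⁻ z in Metric.ball z₀ R, ENNReal.ofReal (‖h z‖ ^ 2 * E z) ≤
      (∫⁻ z in Metric.ball z₀ R, ENNReal.ofReal (8 * V z * ‖h z‖ ^ 2 * E z)) +
      ∫⁻ z in Metric.ball z₀ R, ENNReal.ofReal
        (8 * ‖f z * wirtingerDBar ρ z * Q z‖ ^ 2 * E z) := by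
    rw [← lintegral_add_left' hmeasV, ← lintegral_add_left' hmeasV]
    refine le_trans ?_ ((hcar h hsm (hsupp.trans hρs)).trans ?_)
    · refine lintegral_mono fun z => ?_
      have hV0 : 0 ≤ V z := by simp only [hVdef]; positivity
      have hE := (hE0 z).le
      rw [← ENNReal.ofReal_add (by positivity) (by positivity)]
      refine ENNReal.ofReal_le_ofReal ?_
      have hp : (1 : ℝ) ≤ Real.pi := by linarith [Real.pi_gt_three]
      calc 8 * V z * ‖h z‖ ^ 2 * E z + ‖h z‖ ^ 2 * E z = 1 * (8 * V z + 1) * ‖h z‖ ^ 2 * E z := by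
            ring
        _ ≤ Real.pi * (8 * V z + 1) * ‖h z‖ ^ 2 * E z := by gcongr
    · refine lintegral_mono_ae ?_
      filter_upwards [ae_restrict_of_ae (ae_wirtingerDBar_eq_zero hf)] with z hz
      have hV0 : 0 ≤ V z := by simp only [hVdef]; positivity
      have hE := (hE0 z).le
      rw [← ENNReal.ofReal_add (by positivity) (by positivity)]
      refine ENNReal.ofReal_le_ofReal ?_
      rw [← add_mul]
      refine mul_le_mul_of_nonneg_right ?_ hE
      have hVf : ‖wirtingerDBar f z‖ ^ 2 = V z * ‖f z‖ ^ 2 := by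
        by_cases h0 : f z = 0
        · simp [hz h0, h0]
        · have : ‖f z‖ ≠ 0 := norm_ne_zero_iff.2 h0
          simp only [hVdef]
          field_simp
      rw [hdh, norm_mul, mul_pow]
      have h1 : ‖ρ z * wirtingerDBar f z * Q z‖ ^ 2 = V z * ‖h z‖ ^ 2 := by
        simp only [hh, norm_mul, mul_pow]
        rw [hVf]; ring
      have h2 := norm_add_le (ρ z * wirtingerDBar f z * Q z) (f z * wirtingerDBar ρ z * Q z)
      have h3 : ‖ρ z * wirtingerDBar f z * Q z + f z * wirtingerDBar ρ z * Q z‖ ^ 2 ≤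
          2 * (‖ρ z * wirtingerDBar f z * Q z‖ ^ 2 + ‖f z * wirtingerDBar ρ z * Q z‖ ^ 2) := by
        refine (pow_le_pow_left₀ (norm_nonneg _) h2 2).trans ?_
        exact add_sq_le
      rw [h1] at h3
      have h4 : ‖(2 : ℂ)‖ ^ 2 = 4 := by norm_num
      rw [h4]
      linarith
  exact (ENNReal.add_le_add_iff_left hfin).1 hchain

/-- The cut-off `1 - β(t (z - z₀))` near `z₀`. -/
noncomputable def innerCutoff (β : ℂ → ℂ) (z₀ : ℂ) (t : ℝ) (z : ℂ) : ℂ :=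
  1 - β (t • (z - z₀))

lemma wirtingerDBar_innerCutoff {β : ℂ → ℂ} (hβ : ContDiff ℝ (⊤ : ℕ∞) β) (z₀ : ℂ) (t : ℝ) (z : ℂ) :
    wirtingerDBar (innerCutoff β z₀ t) z = -t * wirtingerDBar β (t • (z - z₀)) := by
  have h1 : HasFDerivAt (fun z : ℂ => t • (z - z₀)) (t • ContinuousLinearMap.id ℝ ℂ) z :=
    ((hasFDerivAt_id z).sub_const z₀).const_smul t
  have h2 := (hβ.differentiable (by simp) (t • (z - z₀))).hasFDerivAt.comp z h1
  have h3 : HasFDerivAt (innerCutoff β z₀ t) _ z := h2.const_sub 1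
  unfold wirtingerDBar
  rw [h3.fderiv]
  have e : ∀ v : ℂ, (-((fderiv ℝ β (t • (z - z₀))).comp (t • ContinuousLinearMap.id ℝ ℂ))) v =
      -t * fderiv ℝ β (t • (z - z₀)) v := by
    intro v
    simp only [_root_.neg_apply, ContinuousLinearMap.comp_apply, _root_.smul_apply,
      ContinuousLinearMap.id_apply]
    rw [map_smul, Complex.real_smul]
    ring
  rw [e, e]
  ring

/-- A smooth complex-valued cut-off function. -/
lemma exists_cutoff (z₀ : ℂ) {r₁ r₂ : ℝ} (h1 : 0 < r₁) (h2 : r₁ < r₂) :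
    ∃ χ : ℂ → ℂ, ContDiff ℝ (⊤ : ℕ∞) χ ∧ (∀ z ∈ Metric.closedBall z₀ r₁, χ z = 1) ∧
      tsupport χ ⊆ Metric.closedBall z₀ r₂ ∧ (∀ z, ‖χ z‖ ≤ 1) ∧ (∀ z, ‖1 - χ z‖ ≤ 1) ∧
      ∃ D, ∀ z, ‖wirtingerDBar χ z‖ ≤ D := by
  let b : ContDiffBump z₀ := ⟨r₁, r₂, h1, h2⟩
  have hsm : ContDiff ℝ (⊤ : ℕ∞) fun z => ((b z : ℝ) : ℂ) :=
    Complex.ofRealCLM.contDiff.comp b.contDiff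
  have hts : tsupport (fun z => ((b z : ℝ) : ℂ)) ⊆ Metric.closedBall z₀ r₂ := by
    have : tsupport (fun z => ((b z : ℝ) : ℂ)) ⊆ tsupport b := by
      refine closure_mono fun z hz => ?_
      simpa using hz
    exact this.trans b.tsupport_eq.subset
  refine ⟨fun z => ((b z : ℝ) : ℂ), hsm, fun z hz => ?_, hts, fun z => ?_, fun z => ?_, ?_⟩
  · simp [b.one_of_mem_closedBall hz]
  · rw [Complex.norm_real, Real.norm_eq_abs, abs_of_nonneg b.nonneg]
    exact b.le_one
  · rw [← Complex.ofReal_one, ← Complex.ofReal_sub, Complex.norm_real, Real.norm_eq_abs,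
      abs_of_nonneg (sub_nonneg.2 b.le_one)]
    linarith [b.nonneg (x := z)]
  · refine (continuous_wirtingerDBar hsm).bounded_above_of_compact_support
      (HasCompactSupport.intro (isCompact_closedBall z₀ r₂) fun z hz => ?_)
    simp [wirtingerDBar, fderiv_of_notMem_tsupport ℝ fun h => hz (hts h)]

lemma exists_weight_of_quotient {f : ℂ → ℂ} (hf : ContDiff ℝ (⊤ : ℕ∞) f) {z₀ : ℂ} {R : ℝ}
    (hR : R ≤ 1 / 4)
    (hV : ∫⁻ z in Metric.ball z₀ R,
      ENNReal.ofReal (‖wirtingerDBar f z‖ ^ 2 / ‖f z‖ ^ 2) < ⊤) :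
    ∃ E : ℂ → ℝ, (∀ z, 0 < E z) ∧ (∀ z ∈ Metric.ball z₀ R, E z ≤ 1) ∧
      AEMeasurable E (volume.restrict (Metric.ball z₀ R)) ∧
      ∀ h : ℂ → ℂ, ContDiff ℝ (⊤ : ℕ∞) h → tsupport h ⊆ Metric.ball z₀ R →
        ∫⁻ z in Metric.ball z₀ R, ENNReal.ofReal (Real.pi *
          (8 * (‖wirtingerDBar f z‖ ^ 2 / ‖f z‖ ^ 2) + 1) * ‖h z‖ ^ 2 * E z) ≤
          ∫⁻ z in Metric.ball z₀ R, ENNReal.ofReal (‖2 * wirtingerDBar h z‖ ^ 2 * E z) := by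
  set G : ℂ → ℝ := fun z => 8 * (‖wirtingerDBar f z‖ ^ 2 / ‖f z‖ ^ 2) + 1 with hG
  have hVm : Measurable fun z => ‖wirtingerDBar f z‖ ^ 2 / ‖f z‖ ^ 2 := by
    have m1 := (continuous_wirtingerDBar hf).measurable
    have m2 := hf.continuous.measurable
    fun_prop
  have hVi : IntegrableOn (fun z => ‖wirtingerDBar f z‖ ^ 2 / ‖f z‖ ^ 2) (Metric.ball z₀ R) := by
    refine ⟨hVm.aestronglyMeasurable, ?_⟩
    rw [hasFiniteIntegral_iff_ofReal (Filter.Eventually.of_forall fun z => by positivity)]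
    exact hV
  have hGi : IntegrableOn G (Metric.ball z₀ R) :=
    (hVi.const_mul 8).add (integrableOn_const measure_ball_lt_top.ne)
  obtain ⟨E, hE0, hE1, hEm, hE⟩ := exists_carleman_weight (z₀ := z₀) (R := R)
    (F := (Metric.ball z₀ R).indicator G)
    (fun w => Set.indicator_nonneg (fun z _ => by simp only [hG]; positivity) w)
    ((integrable_indicator_iff measurableSet_ball).2 hGi) hR
    (fun w hw => Set.indicator_of_notMem hw _)
  refine ⟨E, hE0, hE1, hEm, fun h hh hs => ?_⟩
  refine le_trans (le_of_eq ?_) (hE h hh hs)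
  refine setLIntegral_congr_fun measurableSet_ball fun z hz => ?_
  simp only [Set.indicator_of_mem hz, hG]

/-- Weighted bound for `f` on an annulus around `z₀`. The outer cut-off contributes the term
that decays in `k`, the inner cut-off (at scale `1 / t`) the term which is small because `f`
vanishes to infinite order. -/
lemma annulus_bound {f : ℂ → ℂ} (hf : ContDiff ℝ (⊤ : ℕ∞) f) {z₀ : ℂ} {R : ℝ} (hR0 : 0 < R)
    (hR : R ≤ 1 / 4)
    (hV : ∫⁻ z in Metric.ball z₀ R,
      ENNReal.ofReal (‖wirtingerDBar f z‖ ^ 2 / ‖f z‖ ^ 2) < ⊤) :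
    ∃ (E : ℂ → ℝ) (C D : ℝ), (∀ z, 0 < E z) ∧
      AEMeasurable E (volume.restrict (Metric.ball z₀ R)) ∧
      ∀ (k : ℕ) (t : ℝ), 0 < t →
        ∫⁻ z in Metric.ball z₀ (R / 4) \ Metric.closedBall z₀ (2 / t),
            ENNReal.ofReal (‖f z‖ ^ 2 * E z) ≤
          ENNReal.ofReal (D * (1 / 4) ^ k) *
              (∫⁻ z in Metric.ball z₀ R, ENNReal.ofReal (‖f z‖ ^ 2)) +
            ENNReal.ofReal (C * t ^ (2 + 2 * k)) *
              ∫⁻ z in Metric.ball z₀ (3 / t), ENNReal.ofReal (‖f z‖ ^ 2) := by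
  obtain ⟨E, hE0, hE1, hEm, hcar⟩ := exists_weight_of_quotient hf hR hV
  obtain ⟨χ, hχ, hχ1, hχs, hχn, -, D, hD⟩ :=
    exists_cutoff z₀ (r₁ := R / 2) (r₂ := 3 * R / 4) (by positivity) (by linarith)
  obtain ⟨β, hβ, hβ1, hβs, -, hβn, C, hC⟩ :=
    exists_cutoff 0 (r₁ := 1) (r₂ := 2) one_pos one_lt_two
  refine ⟨E, 16 * C ^ 2, 16 * D ^ 2, hE0, hEm, fun k t ht => ?_⟩
  have hD0 : 0 ≤ D := (norm_nonneg _).trans (hD 0)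
  have hC0 : 0 ≤ C := (norm_nonneg _).trans (hC 0)
  set η := innerCutoff β z₀ t with hη
  have hηs : ContDiff ℝ (⊤ : ℕ∞) η := by
    have : ContDiff ℝ (⊤ : ℕ∞) fun z : ℂ => t • (z - z₀) := by fun_prop
    exact contDiff_const.sub (hβ.comp this)
  have hηn : ∀ z, ‖η z‖ ≤ 1 := fun z => hβn _
  have hnt : ∀ z : ℂ, ‖t • (z - z₀)‖ = t * ‖z - z₀‖ := fun z => by
    rw [norm_smul, Real.norm_eq_abs, abs_of_pos ht]
  have hη0 : η =ᶠ[nhds z₀] fun _ => 0 := by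
    filter_upwards [Metric.ball_mem_nhds z₀ (show 0 < 1 / t by positivity)] with z hz
    rw [Metric.mem_ball, dist_eq_norm, lt_div_iff₀ ht] at hz
    have : t • (z - z₀) ∈ Metric.closedBall (0 : ℂ) 1 := by
      rw [mem_closedBall_zero_iff, hnt]; linarith
    simp [hη, innerCutoff, hβ1 _ this, -Complex.real_smul]
  set ρ : ℂ → ℂ := fun z => χ z * η z with hρ
  have hρs : tsupport ρ ⊆ Metric.ball z₀ R :=
    (tsupport_mul_subset_left).trans (hχs.trans (Metric.closedBall_subset_ball (by linarith)))
  have hρ0 : ρ =ᶠ[nhds z₀] fun _ => 0 := by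
    filter_upwards [hη0] with z hz
    simp [hρ, hz]
  set a : ℂ := ((R / 4 : ℝ) : ℂ) with ha
  have hQn : ∀ z, ‖(a / (z - z₀)) ^ k‖ = (R / 4 / ‖z - z₀‖) ^ k := fun z => by
    rw [norm_pow, norm_div, ha, Complex.norm_real, Real.norm_eq_abs, abs_of_pos (by positivity)]
  have key := carleman_absorb hf hV hE0 hE1 hEm hcar (hχ.mul hηs) hρs hρ0 a k
  -- On the annulus both cut-offs equal one and `|a / (z - z₀)| ≥ 1`.
  have hlow : ∫⁻ z in Metric.ball z₀ (R / 4) \ Metric.closedBall z₀ (2 / t),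
      ENNReal.ofReal (‖f z‖ ^ 2 * E z) ≤
      ∫⁻ z in Metric.ball z₀ R,
        ENNReal.ofReal (‖ρ z * f z * (a / (z - z₀)) ^ k‖ ^ 2 * E z) := by
    have hsub : Metric.ball z₀ (R / 4) \ Metric.closedBall z₀ (2 / t) ⊆ Metric.ball z₀ R :=
      Set.sdiff_subset.trans (Metric.ball_subset_ball (by linarith))
    refine le_trans (lintegral_mono_ae ?_) (lintegral_mono_set hsub)
    filter_upwards [ae_restrict_mem (measurableSet_ball.diff measurableSet_closedBall)] with z hz
    obtain ⟨hz1, hz2⟩ := hz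
    rw [Metric.mem_ball, dist_eq_norm] at hz1
    rw [Metric.mem_closedBall, dist_eq_norm, not_le, div_lt_iff₀ ht] at hz2
    have hzpos : 0 < ‖z - z₀‖ := by
      by_contra! hcon
      nlinarith [norm_nonneg (z - z₀)]
    have h1 : χ z = 1 := hχ1 z (by rw [Metric.mem_closedBall, dist_eq_norm]; linarith)
    have h2 : β (t • (z - z₀)) = 0 := by
      refine image_eq_zero_of_notMem_tsupport fun h => ?_
      have := hβs h
      rw [mem_closedBall_zero_iff, hnt] at this
      linarith
    have h3 : ρ z = 1 := by simp [hρ, hη, innerCutoff, h1, h2, -Complex.real_smul]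
    refine ENNReal.ofReal_le_ofReal (mul_le_mul_of_nonneg_right ?_ (hE0 z).le)
    rw [h3, one_mul, norm_mul, hQn]
    have h4 : 1 ≤ (R / 4 / ‖z - z₀‖) ^ k := one_le_pow₀ ((one_le_div hzpos).2 hz1.le)
    gcongr
    exact le_mul_of_one_le_right (norm_nonneg _) h4
  have hdχ : ∀ z, ‖wirtingerDBar χ z‖ * ‖(a / (z - z₀)) ^ k‖ ≤ D * (1 / 2) ^ k := by
    intro z
    rcases lt_or_ge ‖z - z₀‖ (R / 2) with hlt | hge
    · have : wirtingerDBar χ z = 0 := by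
        refine wirtingerDBar_of_eventually_const (c := 1) ?_
        filter_upwards [Metric.isOpen_ball.mem_nhds
          (show z ∈ Metric.ball z₀ (R / 2) by rwa [Metric.mem_ball, dist_eq_norm])] with w hw
        exact hχ1 w (Metric.ball_subset_closedBall hw)
      rw [this, norm_zero, zero_mul]; positivity
    · rw [hQn]
      have : R / 4 / ‖z - z₀‖ ≤ 1 / 2 := by
        rw [div_le_iff₀ (by linarith)]; linarith
      gcongr
      exact hD z
  have hdη : ∀ z, ‖wirtingerDBar η z‖ * ‖(a / (z - z₀)) ^ k‖ ≤
      (Metric.ball z₀ (3 / t)).indicator (fun _ => C * t ^ (1 + k)) z := by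
    intro z
    have e := wirtingerDBar_innerCutoff hβ z₀ t z
    rw [← hη] at e
    have hz0 : 0 ≤ (Metric.ball z₀ (3 / t)).indicator (fun _ => C * t ^ (1 + k)) z :=
      Set.indicator_nonneg (fun _ _ => by positivity) z
    rcases lt_or_ge (t * ‖z - z₀‖) 1 with hlt | hge
    · have : wirtingerDBar β (t • (z - z₀)) = 0 := by
        refine wirtingerDBar_of_eventually_const (c := 1) ?_
        filter_upwards [Metric.isOpen_ball.mem_nhds
          (show t • (z - z₀) ∈ Metric.ball (0 : ℂ) 1 by rwa [mem_ball_zero_iff, hnt])] with w hw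
        exact hβ1 w (Metric.ball_subset_closedBall hw)
      rw [e, this, mul_zero, norm_zero, zero_mul]
      exact hz0
    rcases lt_or_ge 2 (t * ‖z - z₀‖) with hlt2 | hle2
    · have : wirtingerDBar β (t • (z - z₀)) = 0 := by
        have hn : t • (z - z₀) ∉ tsupport β := fun h => by
          have := hβs h
          rw [mem_closedBall_zero_iff, hnt] at this
          linarith
        simp [wirtingerDBar, fderiv_of_notMem_tsupport ℝ hn, -Complex.real_smul]
      rw [e, this, mul_zero, norm_zero, zero_mul]
      exact hz0
    have hzb : z ∈ Metric.ball z₀ (3 / t) := by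
      rw [Metric.mem_ball, dist_eq_norm, lt_div_iff₀ ht]; linarith
    rw [Set.indicator_of_mem hzb, e, hQn, norm_mul, norm_neg, Complex.norm_real,
      Real.norm_eq_abs, abs_of_pos ht, pow_add, pow_one]
    have hzpos : 0 < ‖z - z₀‖ := by
      by_contra! hcon
      nlinarith [norm_nonneg (z - z₀)]
    have : R / 4 / ‖z - z₀‖ ≤ t := by
      rw [div_le_iff₀ hzpos]; linarith
    calc t * ‖wirtingerDBar β (t • (z - z₀))‖ * (R / 4 / ‖z - z₀‖) ^ k ≤ t * C * t ^ k := by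
          gcongr
          exact hC _
      _ = C * (t * t ^ k) := by ring
  have hpt : ∀ z ∈ Metric.ball z₀ R,
      8 * ‖f z * wirtingerDBar ρ z * (a / (z - z₀)) ^ k‖ ^ 2 * E z ≤
        16 * D ^ 2 * (1 / 4) ^ k * ‖f z‖ ^ 2 +
          (Metric.ball z₀ (3 / t)).indicator
            (fun z => 16 * C ^ 2 * t ^ (2 + 2 * k) * ‖f z‖ ^ 2) z := by
    intro z hz
    set q := ‖(a / (z - z₀)) ^ k‖ with hq
    have hq0 : 0 ≤ q := norm_nonneg _
    have e : wirtingerDBar ρ z = wirtingerDBar χ z * η z + χ z * wirtingerDBar η z :=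
      wirtingerDBar_mul (hχ.differentiable (by simp) z) (hηs.differentiable (by simp) z)
    set x := ‖wirtingerDBar χ z‖ * q with hx
    set y := ‖wirtingerDBar η z‖ * q with hy
    have hx0 : 0 ≤ x := by positivity
    have hy0 : 0 ≤ y := by positivity
    have h1 : ‖wirtingerDBar ρ z‖ * q ≤ x + y := by
      rw [e, hx, hy, ← add_mul]
      refine mul_le_mul_of_nonneg_right ((norm_add_le _ _).trans ?_) hq0
      rw [norm_mul, norm_mul]
      exact add_le_add (mul_le_of_le_one_right (norm_nonneg _) (hηn z))
        (mul_le_of_le_one_left (norm_nonneg _) (hχn z))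
    have h2 : (‖wirtingerDBar ρ z‖ * q) ^ 2 ≤ 2 * (x ^ 2 + y ^ 2) :=
      (pow_le_pow_left₀ (by positivity) h1 2).trans add_sq_le
    have h3 : x ^ 2 ≤ D ^ 2 * (1 / 4) ^ k := by
      refine (pow_le_pow_left₀ hx0 (hdχ z) 2).trans (le_of_eq ?_)
      rw [mul_pow, ← pow_mul, mul_comm k 2, pow_mul]
      norm_num
    have h4 : 16 * ‖f z‖ ^ 2 * y ^ 2 ≤ (Metric.ball z₀ (3 / t)).indicator
        (fun z => 16 * C ^ 2 * t ^ (2 + 2 * k) * ‖f z‖ ^ 2) z := by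
      have := hdη z
      by_cases hzb : z ∈ Metric.ball z₀ (3 / t)
      · rw [Set.indicator_of_mem hzb] at this ⊢
        calc 16 * ‖f z‖ ^ 2 * y ^ 2 ≤ 16 * ‖f z‖ ^ 2 * (C * t ^ (1 + k)) ^ 2 := by gcongr
          _ = _ := by ring
      · rw [Set.indicator_of_notMem hzb] at this ⊢
        have : y = 0 := le_antisymm this hy0
        simp [this]
    calc 8 * ‖f z * wirtingerDBar ρ z * (a / (z - z₀)) ^ k‖ ^ 2 * E z
        ≤ 8 * ‖f z * wirtingerDBar ρ z * (a / (z - z₀)) ^ k‖ ^ 2 :=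
          mul_le_of_le_one_right (by positivity) (hE1 z hz)
      _ = 8 * ‖f z‖ ^ 2 * (‖wirtingerDBar ρ z‖ * q) ^ 2 := by
          rw [norm_mul, norm_mul]; ring
      _ ≤ 8 * ‖f z‖ ^ 2 * (2 * (x ^ 2 + y ^ 2)) := by gcongr
      _ = 16 * ‖f z‖ ^ 2 * x ^ 2 + 16 * ‖f z‖ ^ 2 * y ^ 2 := by ring
      _ ≤ 16 * ‖f z‖ ^ 2 * (D ^ 2 * (1 / 4) ^ k) + 16 * ‖f z‖ ^ 2 * y ^ 2 := by gcongr
      _ ≤ _ := by linarith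
  have hfm : Measurable fun z => ENNReal.ofReal (‖f z‖ ^ 2) := by
    have := hf.continuous.measurable
    fun_prop
  refine hlow.trans (key.trans ?_)
  calc ∫⁻ z in Metric.ball z₀ R,
        ENNReal.ofReal (8 * ‖f z * wirtingerDBar ρ z * (a / (z - z₀)) ^ k‖ ^ 2 * E z)
      ≤ ∫⁻ z in Metric.ball z₀ R, (ENNReal.ofReal (16 * D ^ 2 * (1 / 4) ^ k) *
          ENNReal.ofReal (‖f z‖ ^ 2) + (Metric.ball z₀ (3 / t)).indicator
            (fun z => ENNReal.ofReal (16 * C ^ 2 * t ^ (2 + 2 * k)) *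
              ENNReal.ofReal (‖f z‖ ^ 2)) z) := by
        refine lintegral_mono_ae ?_
        filter_upwards [ae_restrict_mem measurableSet_ball] with z hz
        refine (ENNReal.ofReal_le_ofReal (hpt z hz)).trans (ENNReal.ofReal_add_le.trans ?_)
        refine add_le_add (le_of_eq (ENNReal.ofReal_mul (by positivity))) (le_of_eq ?_)
        by_cases hzb : z ∈ Metric.ball z₀ (3 / t)
        · rw [Set.indicator_of_mem hzb, Set.indicator_of_mem hzb,
            ENNReal.ofReal_mul (by positivity)]
        · rw [Set.indicator_of_notMem hzb, Set.indicator_of_notMem hzb, ENNReal.ofReal_zero]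
    _ = ENNReal.ofReal (16 * D ^ 2 * (1 / 4) ^ k) *
          (∫⁻ z in Metric.ball z₀ R, ENNReal.ofReal (‖f z‖ ^ 2)) +
        ∫⁻ z in Metric.ball z₀ R, (Metric.ball z₀ (3 / t)).indicator
            (fun z => ENNReal.ofReal (16 * C ^ 2 * t ^ (2 + 2 * k)) *
              ENNReal.ofReal (‖f z‖ ^ 2)) z := by
        rw [lintegral_add_left (hfm.const_mul _), lintegral_const_mul _ hfm]
    _ ≤ _ := by
        gcongr
        refine (setLIntegral_le_lintegral _ _).trans (le_of_eq ?_)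
        rw [lintegral_indicator measurableSet_ball, lintegral_const_mul _ hfm]

/-- Strong unique continuation for `|∂̄f| ≤ V |f|` with `V` square integrable. -/
lemma eqOn_zero_of_vanishesInfiniteOrder {f : ℂ → ℂ} (hf : ContDiff ℝ (⊤ : ℕ∞) f) {z₀ : ℂ} {R : ℝ}
    (hR0 : 0 < R) (hR : R ≤ 1 / 4)
    (hV : ∫⁻ z in Metric.ball z₀ R,
      ENNReal.ofReal (‖wirtingerDBar f z‖ ^ 2 / ‖f z‖ ^ 2) < ⊤)
    (hinf : VanishesInfiniteOrder f z₀) {z : ℂ} (hz : z ∈ Metric.ball z₀ (R / 4)) (hz0 : z ≠ z₀) :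
    f z = 0 := by
  obtain ⟨E, C, D, hE0, hEm, hb⟩ := annulus_bound hf hR0 hR hV
  have hfc := hf.continuous
  have h_int : ∀ r, IntegrableOn (fun z => ‖f z‖ ^ 2) (Metric.ball z₀ r) := fun r =>
    ((by fun_prop : Continuous fun z => ‖f z‖ ^ 2).continuousOn.integrableOn_compact
      (isCompact_closedBall z₀ r)).mono_set Metric.ball_subset_closedBall
  have hof : ∀ r, ∫⁻ z in Metric.ball z₀ r, ENNReal.ofReal (‖f z‖ ^ 2) =
      ENNReal.ofReal (∫ z in Metric.ball z₀ r, ‖f z‖ ^ 2) := fun r =>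
    (ofReal_integral_eq_lintegral_ofReal (h_int r)
      (Filter.Eventually.of_forall fun z => by positivity)).symm
  set s := ‖z - z₀‖ / 2 with hs
  have hzn : 0 < ‖z - z₀‖ := norm_pos_iff.2 (sub_ne_zero.2 hz0)
  have hs0 : 0 < s := by positivity
  set S := Metric.ball z₀ (R / 4) \ Metric.closedBall z₀ s with hS
  have hSopen : IsOpen S := Metric.isOpen_ball.sdiff Metric.isClosed_closedBall
  set I := ∫⁻ z in S, ENNReal.ofReal (‖f z‖ ^ 2 * E z) with hI
  have hk : ∀ k : ℕ, I ≤ ENNReal.ofReal (D * (1 / 4) ^ k) *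
      (∫⁻ z in Metric.ball z₀ R, ENNReal.ofReal (‖f z‖ ^ 2)) := by
    intro k
    -- With `t = 3 / r` the inner term is a constant times `r ^ (-(2 + 2 k)) ∫_{B(z₀, r)} |f|²`.
    have hlim : Filter.Tendsto (fun r : ℝ => ENNReal.ofReal (D * (1 / 4) ^ k) *
        (∫⁻ z in Metric.ball z₀ R, ENNReal.ofReal (‖f z‖ ^ 2)) +
        ENNReal.ofReal (C * 3 ^ (2 + 2 * k) *
          (r ^ (-((2 + 2 * k : ℕ) : ℝ)) * ∫ z in Metric.ball z₀ r, ‖f z‖ ^ 2)))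
        (nhdsWithin 0 (Set.Ioi 0)) (nhds (ENNReal.ofReal (D * (1 / 4) ^ k) *
          (∫⁻ z in Metric.ball z₀ R, ENNReal.ofReal (‖f z‖ ^ 2)) + 0)) := by
      refine Filter.Tendsto.const_add _ ?_
      have h1 := (hinf ((2 + 2 * k : ℕ) : ℝ) (Nat.cast_nonneg _)).const_mul (C * 3 ^ (2 + 2 * k))
      rw [mul_zero] at h1
      have h2 := ENNReal.tendsto_ofReal h1
      rwa [ENNReal.ofReal_zero] at h2
    rw [add_zero] at hlim
    refine ge_of_tendsto hlim ?_
    filter_upwards [Ioo_mem_nhdsGT hs0] with r hr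
    have hr0 : 0 < r := hr.1
    have h := hb k (3 / r) (by positivity)
    rw [show 3 / (3 / r) = r by field_simp] at h
    have hsub : S ⊆ Metric.ball z₀ (R / 4) \ Metric.closedBall z₀ (2 / (3 / r)) := by
      refine Set.sdiff_subset_sdiff_right (Metric.closedBall_subset_closedBall ?_)
      rw [show 2 / (3 / r) = 2 * r / 3 by field_simp]
      linarith [hr.2]
    refine (lintegral_mono_set hsub).trans (h.trans ?_)
    gcongr
    rw [hof, ← ENNReal.ofReal_mul' (by positivity)]
    refine le_of_eq (congrArg _ ?_)
    rw [Real.rpow_neg hr0.le, Real.rpow_natCast, div_pow]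
    ring
  have hI0 : I = 0 := by
    refine le_antisymm (ge_of_tendsto' (f := fun k : ℕ => ENNReal.ofReal (D * (1 / 4) ^ k) *
      (∫⁻ z in Metric.ball z₀ R, ENNReal.ofReal (‖f z‖ ^ 2))) (x := Filter.atTop) ?_ hk) bot_le
    have h1 : Filter.Tendsto (fun k : ℕ => D * (1 / 4 : ℝ) ^ k) Filter.atTop (nhds (D * 0)) :=
      (tendsto_pow_atTop_nhds_zero_of_lt_one (by norm_num) (by norm_num)).const_mul D
    rw [mul_zero] at h1
    have h2 := ENNReal.tendsto_ofReal h1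
    rw [ENNReal.ofReal_zero] at h2
    have h3 := ENNReal.Tendsto.mul_const (b := ∫⁻ z in Metric.ball z₀ R, ENNReal.ofReal (‖f z‖ ^ 2))
      h2 (Or.inr (by rw [hof]; exact ENNReal.ofReal_ne_top))
    rwa [zero_mul] at h3
  have hSR : S ⊆ Metric.ball z₀ R :=
    Set.sdiff_subset.trans (Metric.ball_subset_ball (by linarith))
  have hae : f =ᵐ[volume.restrict S] fun _ => 0 := by
    have hm : AEMeasurable (fun z => ENNReal.ofReal (‖f z‖ ^ 2 * E z)) (volume.restrict S) :=
      (AEMeasurable.mul (by fun_prop : Continuous fun z => ‖f z‖ ^ 2).aemeasurable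
        (hEm.mono_measure (Measure.restrict_mono hSR le_rfl))).ennreal_ofReal
    filter_upwards [(lintegral_eq_zero_iff' hm).1 hI0] with w hw
    have h1 : ‖f w‖ ^ 2 * E w ≤ 0 := ENNReal.ofReal_eq_zero.1 hw
    have h2 : ‖f w‖ ^ 2 ≤ 0 := by
      by_contra! hcon
      exact absurd h1 (not_le.2 (mul_pos hcon (hE0 w)))
    simpa using le_antisymm h2 (by positivity)
  refine Measure.eqOn_open_of_ae_eq hae hSopen hfc.continuousOn continuousOn_const
    (x := z) ⟨hz, ?_⟩
  rw [Metric.mem_closedBall, dist_eq_norm, not_le]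
  simp only [hs]
  linarith

/-! ### The equivalence -/

/-- Local form of `eqOn_zero_of_vanishesInfiniteOrder`, obtained by multiplying with a cut-off. -/
lemma eventually_eq_zero_of_vanishesInfiniteOrder {f : ℂ → ℂ} {U : Set ℂ} (hU : IsOpen U)
    {z₀ : ℂ} (hz₀ : z₀ ∈ U) (hf : ContDiffOn ℝ (⊤ : ℕ∞) f U) (hf0 : f z₀ = 0)
    (hV : ∫⁻ z in U, ENNReal.ofReal (‖wirtingerDBar f z‖ ^ 2 / ‖f z‖ ^ 2) < ⊤)
    (hinf : VanishesInfiniteOrder f z₀) : ∀ᶠ z in nhds z₀, f z = 0 := by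
  obtain ⟨ε, hε, hεU⟩ := Metric.isOpen_iff.1 hU z₀ hz₀
  set R := min (ε / 4) (1 / 4) with hRdef
  have hR0 : 0 < R := lt_min (by positivity) (by norm_num)
  have hR4 : R ≤ 1 / 4 := min_le_right _ _
  have hRε : R ≤ ε / 4 := min_le_left _ _
  obtain ⟨χ, hχ, hχ1, hχs, -⟩ := exists_cutoff z₀ (r₁ := R) (r₂ := 2 * R) hR0 (by linarith)
  have hχU : tsupport χ ⊆ U :=
    hχs.trans ((Metric.closedBall_subset_ball (by linarith)).trans hεU)
  have hg : ContDiff ℝ (⊤ : ℕ∞) fun z => χ z * f z := by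
    rw [contDiff_iff_contDiffAt]
    intro z
    by_cases hz : z ∈ tsupport χ
    · exact hχ.contDiffAt.mul (hf.contDiffAt (hU.mem_nhds (hχU hz)))
    · refine (contDiffAt_const (c := (0 : ℂ))).congr_of_eventuallyEq ?_
      filter_upwards [(isClosed_tsupport χ).isOpen_compl.mem_nhds hz] with w hw
      rw [image_eq_zero_of_notMem_tsupport hw, zero_mul]
  have hgf : ∀ z ∈ Metric.ball z₀ R, χ z * f z = f z := fun z hz => by
    rw [hχ1 z (Metric.ball_subset_closedBall hz), one_mul]
  have hgd : ∀ z ∈ Metric.ball z₀ R, wirtingerDBar (fun z => χ z * f z) z = wirtingerDBar f z :=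
    fun z hz => wirtingerDBar_congr (Filter.eventuallyEq_of_mem (Metric.isOpen_ball.mem_nhds hz) hgf)
  have hgV : ∫⁻ z in Metric.ball z₀ R,
      ENNReal.ofReal (‖wirtingerDBar (fun z => χ z * f z) z‖ ^ 2 / ‖χ z * f z‖ ^ 2) < ⊤ := by
    refine lt_of_le_of_lt (le_of_eq ?_) (lt_of_le_of_lt (lintegral_mono_set
      ((Metric.ball_subset_ball (by linarith)).trans hεU : Metric.ball z₀ R ⊆ U)) hV)
    refine setLIntegral_congr_fun measurableSet_ball fun z hz => ?_
    simp only [hgd z hz, hgf z hz]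
  have hginf : VanishesInfiniteOrder (fun z => χ z * f z) z₀ := by
    intro m hm
    refine (hinf m hm).congr' ?_
    filter_upwards [Ioo_mem_nhdsGT hR0] with r hr
    congr 1
    refine setIntegral_congr_fun measurableSet_ball fun z hz => ?_
    simp only [hgf z (Metric.ball_subset_ball hr.2.le hz)]
  filter_upwards [Metric.ball_mem_nhds z₀ (show 0 < R / 4 by positivity)] with z hz
  by_cases hz0 : z = z₀
  · rw [hz0, hf0]
  · rw [← hgf z (Metric.ball_subset_ball (by linarith) hz)]
    exact eqOn_zero_of_vanishesInfiniteOrder hg hR0 hR4 hgV hginf hz hz0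

/-- A bound `|∂̄f| ≤ C |f|` near `z₀` makes the quotient square integrable near `z₀`. -/
lemma exists_lintegral_lt_top_of_bound {f : ℂ → ℂ} {U : Set ℂ} (hU : IsOpen U) {z₀ : ℂ}
    (hz₀ : z₀ ∈ U) {C : ℝ} (hC : ∀ z ∈ U, ‖wirtingerDBar f z‖ ≤ C * ‖f z‖) :
    ∃ U' ⊆ U, IsOpen U' ∧ z₀ ∈ U' ∧
      ∫⁻ z in U', ENNReal.ofReal (‖wirtingerDBar f z‖ ^ 2 / ‖f z‖ ^ 2) < ⊤ := by
  have hop : IsOpen (U ∩ Metric.ball z₀ 1) := hU.inter Metric.isOpen_ball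
  refine ⟨U ∩ Metric.ball z₀ 1, Set.inter_subset_left, hop,
    ⟨hz₀, Metric.mem_ball_self one_pos⟩, ?_⟩
  have hle : ∫⁻ z in U ∩ Metric.ball z₀ 1,
      ENNReal.ofReal (‖wirtingerDBar f z‖ ^ 2 / ‖f z‖ ^ 2) ≤
      ∫⁻ _ in U ∩ Metric.ball z₀ 1, ENNReal.ofReal (C ^ 2) := by
    refine lintegral_mono_ae ?_
    filter_upwards [ae_restrict_mem hop.measurableSet] with z hz
    refine ENNReal.ofReal_le_ofReal (div_le_of_le_mul₀ (by positivity) (by positivity) ?_)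
    rw [← mul_pow]
    exact pow_le_pow_left₀ (norm_nonneg _) (hC z hz.1) 2
  refine hle.trans_lt ?_
  rw [setLIntegral_const]
  exact ENNReal.mul_lt_top ENNReal.ofReal_lt_top
    ((measure_mono Set.inter_subset_right).trans_lt measure_ball_lt_top)

/-- Corollary 5.3: for a smooth extension `ũ` across a boundary point `z₀` of a
nonconstant holomorphic function, with `ũ(z₀) = 0`, the following are equivalent:
(1) `ũ` vanishes to finite order at `z₀`; (2) `|∂̄ũ|/|ũ| ∈ L^∞` near `z₀`;
(3) `|∂̄ũ|/|ũ| ∈ L²` near `z₀`. -/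
theorem finite_order_characterization
    (Ω : Set ℂ) (hΩopen : IsOpen Ω) (hΩconn : IsConnected Ω)
    (z₀ : ℂ) (hz₀ : z₀ ∈ frontier Ω)
    (u : ℂ → ℂ) (hu : DifferentiableOn ℂ u Ω)
    (hnonconst : ¬ ∃ c : ℂ, Set.EqOn u (fun _ => c) Ω)
    (W : Set ℂ) (hWopen : IsOpen W) (hz₀W : z₀ ∈ W)
    (ut : ℂ → ℂ) (hsmooth : ContDiffOn ℝ (⊤ : ℕ∞) ut W)
    (hagree : Set.EqOn ut u (W ∩ Ω)) (hut0 : ut z₀ = 0) :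
    ((¬ VanishesInfiniteOrder ut z₀) ↔
      ∃ U : Set ℂ, IsOpen U ∧ z₀ ∈ U ∧ U ⊆ W ∧
        ∃ C : ℝ, ∀ z ∈ U, ‖wirtingerDBar ut z‖ ≤ C * ‖ut z‖) ∧
    ((¬ VanishesInfiniteOrder ut z₀) ↔
      ∃ U : Set ℂ, IsOpen U ∧ z₀ ∈ U ∧ U ⊆ W ∧
        ∫⁻ z in U, ENNReal.ofReal (‖wirtingerDBar ut z‖ ^ 2 / ‖ut z‖ ^ 2) < ⊤) := by
  have hcl : z₀ ∈ closure Ω := frontier_subset_closure hz₀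
  have h12 : ¬ VanishesInfiniteOrder ut z₀ → ∃ U : Set ℂ, IsOpen U ∧ z₀ ∈ U ∧ U ⊆ W ∧
      ∃ C : ℝ, ∀ z ∈ U, ‖wirtingerDBar ut z‖ ≤ C * ‖ut z‖ := by
    intro hfin
    have hdiff : DifferentiableOn ℂ ut (W ∩ Ω) :=
      (hu.mono Set.inter_subset_right).congr hagree
    obtain ⟨C, hC⟩ := (wirtingerDBar_isBigO_of_finite_order hWopen hΩopen hz₀W hcl hsmooth hdiff
      hfin).bound
    obtain ⟨U, hUsub, hUopen, hzU⟩ := eventually_nhds_iff.1 hC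
    exact ⟨U ∩ W, hUopen.inter hWopen, ⟨hzU, hz₀W⟩, Set.inter_subset_right, C,
      fun z hz => hUsub z hz.1⟩
  have h23 : (∃ U : Set ℂ, IsOpen U ∧ z₀ ∈ U ∧ U ⊆ W ∧
      ∃ C : ℝ, ∀ z ∈ U, ‖wirtingerDBar ut z‖ ≤ C * ‖ut z‖) →
      ∃ U : Set ℂ, IsOpen U ∧ z₀ ∈ U ∧ U ⊆ W ∧
        ∫⁻ z in U, ENNReal.ofReal (‖wirtingerDBar ut z‖ ^ 2 / ‖ut z‖ ^ 2) < ⊤ := by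
    rintro ⟨U, hU, hzU, hUW, C, hC⟩
    obtain ⟨U', hU'U, hU', hzU', h_int⟩ := exists_lintegral_lt_top_of_bound hU hzU hC
    exact ⟨U', hU', hzU', hU'U.trans hUW, h_int⟩
  have h31 : (∃ U : Set ℂ, IsOpen U ∧ z₀ ∈ U ∧ U ⊆ W ∧
      ∫⁻ z in U, ENNReal.ofReal (‖wirtingerDBar ut z‖ ^ 2 / ‖ut z‖ ^ 2) < ⊤) →
      ¬ VanishesInfiniteOrder ut z₀ := by
    rintro ⟨U, hU, hzU, hUW, h_int⟩ hinf
    have hev := eventually_eq_zero_of_vanishesInfiniteOrder hU hzU (hsmooth.mono hUW) hut0 h_int hinf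
    obtain ⟨N, hN, hNopen, hzN⟩ := eventually_nhds_iff.1 hev
    obtain ⟨p, ⟨hpN, hpW⟩, hpΩ⟩ :=
      mem_closure_iff.1 hcl (N ∩ W) (hNopen.inter hWopen) ⟨hzN, hz₀W⟩
    have hp : u =ᶠ[nhds p] 0 := by
      filter_upwards [((hNopen.inter hWopen).inter hΩopen).mem_nhds ⟨⟨hpN, hpW⟩, hpΩ⟩] with w hw
      rw [← hagree ⟨hw.1.2, hw.2⟩]
      exact hN w hw.1.1
    exact hnonconst ⟨0, (hu.analyticOnNhd hΩopen).eqOn_zero_of_preconnected_of_eventuallyEq_zero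
      hΩconn.isPreconnected hpΩ hp⟩
  exact ⟨⟨h12, fun h => h31 (h23 h)⟩, ⟨fun h => h23 (h12 h), h31⟩⟩
end
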